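/- arXiv:2203.14687 — 2 statements merged into one kernel-verified Lean document; each statement's English description precedes it below -/
import Mathlib

section
/- Let q = p^h be a prime power and let f(X,Y) ∈ F_q[X,Y] have total degree d ≥ 1 and satisfy f(0,0) = 0. Suppose that q > 6.3·(d+1)^{13/3} and that the hypersurface S_f contains an absolutely irreducible component defined over F_q (i.e., there is a nonconstant polynomial g ∈ F_q[X_0,X_1,X_2,X_3,X_4] dividing F that remains irreducible over the algebraic closure of F_q). Then f does not satisfy the ovoid condition; that is, there exist (x_1,y_1) ≠ (x_2,y_2) in F_q^2 with (y_1 − y_2)^2 + (x_1 − x_2)(f(x_1,y_1) − f(x_2,y_2)) = 0, so O_4(f) is not an ovoid of Q(4,q). -/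
open MvPolynomial

/-- The coefficient `a_{i,j}` of the monomial `X^i Y^j` in `f ∈ F_q[X,Y]`. -/
noncomputable def coeffXY {K : Type*} [Field K] (f : MvPolynomial (Fin 2) K) (i j : ℕ) : K :=
  f.coeff (Finsupp.single (0 : Fin 2) i + Finsupp.single (1 : Fin 2) j)

/-- The homogeneous polynomial
`F = (X₂ − X₄)² X₀^{d−1} + (X₁ − X₃)·Σ_{i,j} a_{i,j}(X₁^i X₂^j − X₃^i X₄^j) X₀^{d−i−j}`
defining the hypersurface `S_f ⊂ PG(4,q)`. -/
noncomputable def Fpoly {K : Type*} [Field K] (f : MvPolynomial (Fin 2) K) (d : ℕ) :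
    MvPolynomial (Fin 5) K :=
  (X 2 - X 4) ^ 2 * (X 0) ^ (d - 1)
    + (X 1 - X 3) *
      ∑ m ∈ f.support,
        C (f.coeff m) *
          ((X 1) ^ (m 0) * (X 2) ^ (m 1) - (X 3) ^ (m 0) * (X 4) ^ (m 1))
          * (X 0) ^ (d - m 0 - m 1)

/-- `S_f` contains an absolutely irreducible component defined over the base field: there is a
nonconstant polynomial `g` over the base field dividing `F` that remains irreducible over the
algebraic closure. -/
def HasAbsIrrComponent {K : Type*} [Field K] (F : MvPolynomial (Fin 5) K) : Prop :=
  ∃ g : MvPolynomial (Fin 5) K, g ∣ F ∧ 0 < g.totalDegree ∧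
    Irreducible (MvPolynomial.map (algebraMap K (AlgebraicClosure K)) g)

/-- The ovoid condition:
`(y₁ − y₂)² + (x₁ − x₂)(f(x₁,y₁) − f(x₂,y₂)) ≠ 0` for all `(x₁,y₁) ≠ (x₂,y₂)`. -/
def OvoidCondition {K : Type*} [Field K] (f : MvPolynomial (Fin 2) K) : Prop :=
  ∀ x₁ y₁ x₂ y₂ : K, (x₁, y₁) ≠ (x₂, y₂) →
    (y₁ - y₂) ^ 2 + (x₁ - x₂) * (eval ![x₁, y₁] f - eval ![x₂, y₂] f) ≠ 0

/-!
Stepanov's method, with the poles of the auxiliary function counted in a weighted filtration and its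
order at a rational place bounded from below, shows that a plane curve with a rational place has a
rational point off any given line `X = c` as soon as `q` is large compared to its degree.

* If `f` has degree at least two in `Y`, the pairs of points over a line that violate the ovoid
  condition form a curve which has a rational place at infinity, hence a rational point that is not
  a degenerate pair.
* If `f = A(X) + B(X) Y` with `B` nonconstant, two points with the same `Y`-coordinate violate the
  ovoid condition.
* If `f = A(X) + b Y`, write `A(Y) - A(x₀) = (Y - x₀) Q(Y)`. The double cover `W² + b W + Q(Y)` has
  no rational point with `Y ≠ x₀`, so it splits over the algebraic closure. Varying `x₀`, this makes
  `e² X - A` an affine function of some `X ^ p ^ r` if the characteristic `p` is odd and `b = 2 e`,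
  and makes `A` affine in characteristic two. Then `F` is an anisotropic binary quadratic form in a
  linear form times a power of `X₀` and in a power of `X₁ - X₃`, and its two factors are conjugate
  over `F_q`.
-/

/-! ### Weighted spans -/

section Finrank

variable {L V : Type*} [Field L] [AddCommGroup V] [Module L V]

lemma finrank_le_finrank_inf_add_finrank {U Q C : Submodule L V} [Module.Finite L U]
    [Module.Finite L C] (h : U ≤ Q ⊔ C) :
    Module.finrank L U ≤ Module.finrank L ↥(U ⊓ Q) + Module.finrank L C := by
  have hU : U ≤ C ⊔ Q ⊓ (U ⊔ C) := by
    rw [← sup_inf_assoc_of_le Q le_sup_right, sup_comm C Q]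
    exact le_inf h le_sup_left
  have : Module.Finite L ↥(Q ⊓ (U ⊔ C)) := Submodule.finiteDimensional_of_le inf_le_right
  have hUQ : U ⊓ (Q ⊓ (U ⊔ C)) = U ⊓ Q := by
    rw [← inf_assoc, inf_eq_left]
    exact inf_le_left.trans le_sup_left
  have hsum := Submodule.finrank_sup_add_finrank_inf_eq U (Q ⊓ (U ⊔ C))
  have hsum' := Submodule.finrank_sup_add_finrank_inf_eq C (Q ⊓ (U ⊔ C))
  have hle := Submodule.finrank_mono (sup_le hU (le_sup_right (a := C)))
  rw [hUQ] at hsum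
  omega

lemma exists_ne_zero_mem_mem_of_finrank_lt {A B W : Submodule L V} [Module.Finite L W]
    (hA : A ≤ W) (hB : B ≤ W)
    (h : Module.finrank L W < Module.finrank L A + Module.finrank L B) :
    ∃ z ∈ A, z ∈ B ∧ z ≠ 0 := by
  have := Submodule.finiteDimensional_of_le hA
  have := Submodule.finiteDimensional_of_le hB
  have hpos : 0 < Module.finrank L ↥(A ⊓ B) := by
    have hsum := Submodule.finrank_sup_add_finrank_inf_eq A B
    have hsup := Submodule.finrank_mono (sup_le hA hB)
    omega
  obtain ⟨⟨z, hzA, hzB⟩, hz⟩ := Module.finrank_pos_iff_exists_ne_zero.1 hpos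
  exact ⟨z, hzA, hzB, fun h0 => hz (Subtype.ext h0)⟩

end Finrank

section WeightSpan

open scoped Polynomial

variable {L Λ σ : Type*} [Field L] [Field Λ] [Algebra L Λ] [Fintype σ]

/-- The span of the monomials of weight at most `N` in the elements `x i`, where `x i` has weight
`w i`; it plays the role of a Riemann–Roch space of the function field generated by the `x i`. -/
def weightSpan (L : Type*) {Λ σ : Type*} [Field L] [Field Λ] [Algebra L Λ] [Fintype σ]
    (w : σ → ℕ) (x : σ → Λ) (N : ℕ) : Submodule L Λ :=
  Submodule.span L {z | ∃ e : σ → ℕ, ∑ i, e i * w i ≤ N ∧ ∏ i, x i ^ e i = z}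

variable {w : σ → ℕ} {x : σ → Λ} {N M P : ℕ} {s t : Λ}

lemma prod_pow_mem_weightSpan {e : σ → ℕ} (h : ∑ i, e i * w i ≤ N) :
    ∏ i, x i ^ e i ∈ weightSpan L w x N :=
  Submodule.subset_span ⟨e, h, rfl⟩

lemma weightSpan_le {T : Submodule L Λ}
    (h : ∀ e : σ → ℕ, ∑ i, e i * w i ≤ N → ∏ i, x i ^ e i ∈ T) : weightSpan L w x N ≤ T := by
  rw [weightSpan, Submodule.span_le]
  rintro _ ⟨e, he, rfl⟩
  exact h e he

lemma mul_mem_weightSpan (hs : s ∈ weightSpan L w x N) (ht : t ∈ weightSpan L w x M)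
    (h : N + M ≤ P) : s * t ∈ weightSpan L w x P := by
  have hst := Submodule.mul_mem_mul hs ht
  rw [weightSpan, weightSpan, Submodule.span_mul_span] at hst
  refine (Submodule.span_le (p := weightSpan L w x P)).2 ?_ hst
  rintro _ ⟨_, ⟨e, he, rfl⟩, _, ⟨e', he', rfl⟩, rfl⟩
  have hadd : ∑ i, (e + e') i * w i ≤ P := by
    simp only [Pi.add_apply, add_mul, Finset.sum_add_distrib]
    exact (add_le_add he he').trans h
  have hprod := prod_pow_mem_weightSpan (L := L) (x := x) hadd
  simp only [Pi.add_apply, pow_add, Finset.prod_mul_distrib] at hprod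
  exact hprod

lemma pow_mem_weightSpan (i : σ) {m : ℕ} (h : m * w i ≤ N) : x i ^ m ∈ weightSpan L w x N := by
  classical
  have hsum : ∑ j, (Pi.single i m : σ → ℕ) j * w j ≤ N := by
    simpa [Pi.single_apply, ite_mul] using h
  simpa [Pi.single_apply, pow_ite] using prod_pow_mem_weightSpan (L := L) (x := x) hsum

lemma aeval_mem_weightSpan (i : σ) {p : L[X]} (h : p.natDegree * w i ≤ N) :
    Polynomial.aeval (x i) p ∈ weightSpan L w x N := by
  rw [Polynomial.aeval_eq_sum_range]
  refine Submodule.sum_mem _ fun j hj => Submodule.smul_mem _ _ (pow_mem_weightSpan i ?_)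
  exact (Nat.mul_le_mul_right _ (Finset.mem_range_succ_iff.1 hj)).trans h

lemma aeval_sub_aeval_mem_weightSpan {i j : σ} (hi : w i = 1) (hj : w j = 1) {p : L[X]}
    (h : p.natDegree ≤ N + 1) :
    ∃ s ∈ weightSpan L w x N,
      s * (x i - x j) = Polynomial.aeval (x i) p - Polynomial.aeval (x j) p := by
  refine ⟨∑ m ∈ Finset.range (p.natDegree + 1), p.coeff m •
    ∑ a ∈ Finset.range m, x i ^ a * x j ^ (m - 1 - a), ?_, ?_⟩
  · refine Submodule.sum_mem _ fun m hm =>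
      Submodule.smul_mem _ _ (Submodule.sum_mem _ fun a ha => ?_)
    rw [Finset.mem_range] at hm ha
    exact mul_mem_weightSpan (pow_mem_weightSpan i le_rfl) (pow_mem_weightSpan j le_rfl)
      (by rw [hi, hj]; omega)
  · rw [Finset.sum_mul, Polynomial.aeval_eq_sum_range, Polynomial.aeval_eq_sum_range,
      ← Finset.sum_sub_distrib]
    refine Finset.sum_congr rfl fun m _ => ?_
    rw [smul_mul_assoc, geom_sum₂_mul, smul_sub]

end WeightSpan

section PolySpan

open Polynomial (degreeLT)
open scoped Polynomial

variable {L Λ ι : Type*} [Field L] [Field Λ] [Algebra L Λ] [Fintype ι]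

/-- The map sending polynomials `p k` of degree less than `d k` to `∑ k, p k (y) * u k`. -/
noncomputable def polyCombination (L : Type*) {Λ ι : Type*} [Field L] [Field Λ] [Algebra L Λ]
    [Fintype ι] (y : Λ) (u : ι → Λ) (d : ι → ℕ) : (∀ k, degreeLT L (d k)) →ₗ[L] Λ :=
  ∑ k, LinearMap.mulRight L (u k) ∘ₗ (Polynomial.aeval y).toLinearMap ∘ₗ
    (degreeLT L (d k)).subtype ∘ₗ LinearMap.proj k

variable {y : Λ} {u : ι → Λ} {d : ι → ℕ}

lemma polyCombination_apply (p : ∀ k, degreeLT L (d k)) :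
    polyCombination L y u d p = ∑ k, Polynomial.aeval y (p k : L[X]) * u k := by
  simp [polyCombination]

lemma aeval_mul_mem_range_polyCombination {k : ι} {p : L[X]} (hp : p.natDegree < d k) :
    Polynomial.aeval y p * u k ∈ LinearMap.range (polyCombination L y u d) := by
  classical
  have hp' : p ∈ degreeLT L (d k) := Polynomial.mem_degreeLT.2 <|
    Polynomial.degree_le_natDegree.trans_lt (by exact_mod_cast hp)
  refine ⟨Pi.single k ⟨p, hp'⟩, ?_⟩
  rw [polyCombination_apply, Finset.sum_eq_single k]
  · rw [Pi.single_eq_same]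
  · intro j _ hj
    simp [Pi.single_eq_of_ne hj]
  · simp

lemma finrank_pi_degreeLT : Module.finrank L (∀ k, degreeLT L (d k)) = ∑ k, d k := by
  rw [Module.finrank_pi_fintype]
  simp [(Polynomial.degreeLTEquiv L _).finrank_eq]

instance instFiniteDegreeLT (m : ℕ) : Module.Finite L (degreeLT L m) :=
  Module.Finite.equiv (Polynomial.degreeLTEquiv L m).symm

lemma finrank_range_polyCombination_le :
    Module.finrank L (LinearMap.range (polyCombination L y u d)) ≤ ∑ k, d k :=
  (LinearMap.finrank_range_le _).trans_eq finrank_pi_degreeLT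

lemma finrank_range_polyCombination
    (hfree : ∀ p : ι → L[X], ∑ k, Polynomial.aeval y (p k) * u k = 0 → p = 0) :
    Module.finrank L (LinearMap.range (polyCombination L y u d)) = ∑ k, d k := by
  rw [LinearMap.finrank_range_of_inj, finrank_pi_degreeLT]
  rw [injective_iff_map_eq_zero]
  intro p hp
  rw [polyCombination_apply] at hp
  exact funext fun k => Subtype.ext (congrFun (hfree (fun k => p k) hp) k)

end PolySpan

/-! ### Weighted monic equations and their generic points -/

section WeightedMonic

open scoped Polynomial Polynomial.Bivariate

/-- A bivariate polynomial that is monic of degree `n` in `Y` and has weight at most `ω * n`, where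
`X` has weight `1` and `Y` has weight `ω`. -/
structure IsWeightedMonic {R : Type*} [Semiring R] (g : R[X][Y]) (ω : ℕ) : Prop where
  monic : g.Monic
  natDegree_coeff_le (k : ℕ) : (g.coeff k).natDegree ≤ ω * (g.natDegree - k)

lemma IsWeightedMonic.map {R S : Type*} [CommSemiring R] [CommSemiring S] [Nontrivial S]
    {g : R[X][Y]} {ω : ℕ} (hg : IsWeightedMonic g ω) (φ : R →+* S) :
    IsWeightedMonic (g.map (Polynomial.mapRingHom φ)) ω where
  monic := hg.monic.map _
  natDegree_coeff_le k := by
    rw [Polynomial.coeff_map, hg.monic.natDegree_map]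
    exact Polynomial.natDegree_map_le.trans (hg.natDegree_coeff_le k)

lemma aevalAeval_eq_sum_range {R A : Type*} [CommSemiring R] [CommSemiring A] [Algebra R A]
    (y θ : A) (g : R[X][Y]) : g.aevalAeval y θ =
      ∑ k ∈ Finset.range (g.natDegree + 1), Polynomial.aeval y (g.coeff k) * θ ^ k := by
  conv_lhs => rw [g.as_sum_range_C_mul_X_pow]
  simp only [map_sum, map_mul, map_pow, Polynomial.aevalAeval_C, Polynomial.aevalAeval_Y]

variable {L Λ : Type*} [Field L] [Field Λ] [Algebra L Λ]

/-- The point `(y, θ)` is generic on the curve `g = 0`: the polynomials that vanish at it are the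
multiples of `g`. -/
def IsGenericZero (g : L[X][Y]) (y θ : Λ) : Prop :=
  ∀ r : L[X][Y], r.aevalAeval y θ = 0 ↔ g ∣ r

variable {g : L[X][Y]} {ω : ℕ} {y θ : Λ}

lemma IsGenericZero.aevalAeval_eq_zero (h : IsGenericZero g y θ) : g.aevalAeval y θ = 0 :=
  (h g).2 dvd_rfl

lemma IsGenericZero.eq_zero_of_sum_eq_zero (h : IsGenericZero g y θ) (hg : g.Monic)
    {p : Fin g.natDegree → L[X]} (hp : ∑ k, Polynomial.aeval y (p k) * θ ^ (k : ℕ) = 0) :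
    p = 0 := by
  have hdvd : g ∣ ∑ k : Fin g.natDegree, Polynomial.C (p k) * Polynomial.X ^ (k : ℕ) := by
    rw [← h]
    simpa only [map_sum, map_mul, map_pow, Polynomial.aevalAeval_C, Polynomial.aevalAeval_Y]
  have hdeg := Polynomial.degree_sum_fin_lt p
  rw [← Polynomial.degree_eq_natDegree hg.ne_zero] at hdeg
  have hzero := Polynomial.eq_zero_of_dvd_of_degree_lt hdvd hdeg
  funext k
  have hcoeff := congrArg (fun r : L[X][Y] => r.coeff k) hzero
  simpa [Polynomial.finsetSum_coeff, Polynomial.coeff_C_mul, Polynomial.coeff_X_pow,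
    Fin.val_inj] using hcoeff

lemma IsGenericZero.aeval_injective (h : IsGenericZero g y θ) (hn : 1 ≤ g.natDegree) :
    Function.Injective (Polynomial.aeval (R := L) y) := by
  rw [injective_iff_map_eq_zero]
  intro p hp
  rw [← Polynomial.aevalAeval_C y θ, h] at hp
  by_contra hp0
  have hdeg := Polynomial.natDegree_le_of_dvd hp (by simpa using hp0)
  rw [Polynomial.natDegree_C] at hdeg
  omega

lemma IsWeightedMonic.pow_add_eq_neg_sum (hg : IsWeightedMonic g ω) (h0 : g.aevalAeval y θ = 0)
    (m : ℕ) : θ ^ (g.natDegree + m) =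
      -∑ k ∈ Finset.range g.natDegree, Polynomial.aeval y (g.coeff k) * θ ^ (k + m) := by
  rw [aevalAeval_eq_sum_range, Finset.sum_range_succ, hg.monic.coeff_natDegree, map_one,
    one_mul] at h0
  rw [pow_add, eq_neg_of_add_eq_zero_right h0, neg_mul, Finset.sum_mul]
  simp only [pow_add, mul_assoc]

lemma IsWeightedMonic.aeval_mul_pow_mul_mem (hg : IsWeightedMonic g ω)
    (h0 : g.aevalAeval y θ = 0) {T : Submodule L Λ} {u : Λ} {N : ℕ}
    (hT : ∀ k < g.natDegree, ∀ p : L[X], p.natDegree + ω * k ≤ N →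
      Polynomial.aeval y p * θ ^ k * u ∈ T) (k : ℕ) :
    ∀ p : L[X], p.natDegree + ω * k ≤ N → Polynomial.aeval y p * θ ^ k * u ∈ T := by
  induction k using Nat.strong_induction_on with
  | _ k ih =>
  intro p hp
  rcases lt_or_ge k g.natDegree with hk | hk
  · exact hT k hk p hp
  obtain ⟨m, rfl⟩ := Nat.exists_eq_add_of_le hk
  rw [hg.pow_add_eq_neg_sum h0, mul_neg, neg_mul, Finset.mul_sum, Finset.sum_mul]
  refine Submodule.neg_mem _ (Submodule.sum_mem _ fun j hj => ?_)
  rw [← mul_assoc, ← map_mul]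
  rw [Finset.mem_range] at hj
  refine ih _ (by omega) _ ?_
  calc (p * g.coeff j).natDegree + ω * (j + m)
      ≤ p.natDegree + ω * (g.natDegree - j) + ω * (j + m) := by
        grw [Polynomial.natDegree_mul_le, hg.natDegree_coeff_le]
    _ = p.natDegree + ω * (g.natDegree - j + (j + m)) := by ring
    _ = p.natDegree + ω * (g.natDegree + m) := by rw [← add_assoc, Nat.sub_add_cancel hj.le]
    _ ≤ N := hp

/-- The elements of weight at most `N` of the function field of a plane curve, for the weights `1`
of `y` and `ω` of `θ`. -/
abbrev pointSpan (L : Type*) {Λ : Type*} [Field L] [Field Λ] [Algebra L Λ] (ω : ℕ) (y θ : Λ)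
    (N : ℕ) : Submodule L Λ :=
  weightSpan L ![1, ω] ![y, θ] N

lemma pointSpan_eq_range_polyCombination (hg : IsWeightedMonic g ω) (h0 : g.aevalAeval y θ = 0)
    (N : ℕ) : pointSpan L ω y θ N = LinearMap.range (polyCombination L y
      (fun k : Fin g.natDegree => θ ^ (k : ℕ)) fun k => N + 1 - ω * k) := by
  apply le_antisymm
  · refine weightSpan_le fun e he => ?_
    simp only [Fin.sum_univ_two, Matrix.cons_val_zero, Matrix.cons_val_one] at he
    have hmem := hg.aeval_mul_pow_mul_mem h0 (u := 1) (N := N) (T := LinearMap.range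
      (polyCombination L y (fun k : Fin g.natDegree => θ ^ (k : ℕ)) fun k => N + 1 - ω * k))
      (fun k hk p hp => by
        rw [mul_one]
        exact aeval_mul_mem_range_polyCombination (u := fun k : Fin g.natDegree => θ ^ (k : ℕ))
          (k := ⟨k, hk⟩) (by dsimp only; omega)) (e 1) (Polynomial.X ^ e 0)
      (by rw [Polynomial.natDegree_X_pow]; linarith)
    simpa [Fin.prod_univ_two] using hmem
  · rintro _ ⟨p, rfl⟩
    rw [polyCombination_apply]
    refine Submodule.sum_mem _ fun k _ => ?_
    rcases eq_or_ne (p k : L[X]) 0 with hp | hp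
    · simp [hp]
    have hdeg := (Polynomial.natDegree_lt_iff_degree_lt hp).2 (Polynomial.mem_degreeLT.1 (p k).2)
    exact mul_mem_weightSpan (aeval_mem_weightSpan (w := ![1, ω]) (x := ![y, θ]) 0 le_rfl)
      (pow_mem_weightSpan 1 le_rfl) (by simp [mul_comm]; omega)

lemma finite_pointSpan (hg : IsWeightedMonic g ω) (h0 : g.aevalAeval y θ = 0) (N : ℕ) :
    Module.Finite L (pointSpan L ω y θ N) := by
  rw [pointSpan_eq_range_polyCombination hg h0]
  infer_instance

lemma finrank_pointSpan (hg : IsWeightedMonic g ω) (h : IsGenericZero g y θ) (N : ℕ) :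
    Module.finrank L (pointSpan L ω y θ N) = ∑ k : Fin g.natDegree, (N + 1 - ω * k) := by
  rw [pointSpan_eq_range_polyCombination hg h.aevalAeval_eq_zero,
    finrank_range_polyCombination fun p => h.eq_zero_of_sum_eq_zero hg.monic]

lemma finrank_pointSpan_add_le (hg : IsWeightedMonic g ω) (h : IsGenericZero g y θ) (a e : ℕ) :
    Module.finrank L (pointSpan L ω y θ (a + e)) ≤
      Module.finrank L (pointSpan L ω y θ e) + g.natDegree * a := by
  rw [finrank_pointSpan hg h, finrank_pointSpan hg h]
  calc ∑ k : Fin g.natDegree, (a + e + 1 - ω * k)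
      ≤ ∑ k : Fin g.natDegree, ((e + 1 - ω * k) + a) := Finset.sum_le_sum fun k _ => by omega
    _ = _ := by simp [Finset.sum_add_distrib]

/-- A dimension count: the multiples of `s` and the polynomials in `y` are too many to be disjoint.
This replaces the norm of `s` over `L(y)`. -/
lemma exists_mul_eq_aeval (hg : IsWeightedMonic g ω) (hn : 1 ≤ g.natDegree)
    (h : IsGenericZero g y θ) {a : ℕ} {s : Λ} (hs : s ∈ pointSpan L ω y θ a) (hs0 : s ≠ 0) :
    ∃ t ∈ pointSpan L ω y θ ((g.natDegree - 1) * a), ∃ P : L[X], P ≠ 0 ∧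
      P.natDegree ≤ g.natDegree * a ∧ s * t = Polynomial.aeval y P := by
  obtain ⟨e, he⟩ : ∃ e, e = (g.natDegree - 1) * a := ⟨_, rfl⟩
  have hae : a + e = g.natDegree * a := by
    obtain ⟨m, hm⟩ := Nat.exists_eq_add_of_le hn
    rw [he, hm, Nat.add_sub_cancel_left]
    ring
  rw [← he, ← hae]
  set A := (pointSpan L ω y θ e).map (LinearMap.mulLeft L s)
  set B := (Polynomial.degreeLT L (a + e + 1)).map (Polynomial.aeval y).toLinearMap
  have hA : A ≤ pointSpan L ω y θ (a + e) := by
    rintro _ ⟨t, ht, rfl⟩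
    exact mul_mem_weightSpan hs ht le_rfl
  have hdeg : ∀ P ∈ Polynomial.degreeLT L (a + e + 1), P.natDegree ≤ a + e := fun P hP => by
    rw [Polynomial.degreeLT_succ_eq_degreeLE, Polynomial.mem_degreeLE] at hP
    exact Polynomial.natDegree_le_of_degree_le hP
  have hB : B ≤ pointSpan L ω y θ (a + e) := by
    rintro _ ⟨P, hP, rfl⟩
    exact aeval_mem_weightSpan (w := ![1, ω]) (x := ![y, θ]) 0 (by simpa using hdeg P hP)
  have hrankA : Module.finrank L A = Module.finrank L (pointSpan L ω y θ e) :=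
    (Submodule.equivMapOfInjective (LinearMap.mulLeft L s)
      (mul_right_injective₀ hs0) _).finrank_eq.symm
  have hrankB : Module.finrank L B = a + e + 1 := by
    rw [← (Submodule.equivMapOfInjective (Polynomial.aeval y).toLinearMap
      (h.aeval_injective hn) _).finrank_eq, (Polynomial.degreeLTEquiv L _).finrank_eq,
      Module.finrank_fin_fun]
  have := finite_pointSpan hg h.aevalAeval_eq_zero (a + e)
  obtain ⟨_, ⟨t, ht, htP⟩, ⟨P, hP, rfl⟩, hP0⟩ := exists_ne_zero_mem_mem_of_finrank_lt hA hB (by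
    have hadd := finrank_pointSpan_add_le hg h a e
    omega)
  exact ⟨t, ht, P, fun h0 => hP0 (h0 ▸ map_zero _), hdeg P hP, htP⟩

end WeightedMonic

/-! ### Divided differences on a pair of points -/

section PairSpan

open scoped Polynomial Polynomial.Bivariate

variable {L Λ : Type*} [Field L] [Field Λ] [Algebra L Λ]

/-- The elements of weight at most `N` of the algebra generated by the coordinates of two points
`(y, θ)` and `(y₂, θ₂)`. -/
abbrev pairSpan (L : Type*) {Λ : Type*} [Field L] [Field Λ] [Algebra L Λ] (ω : ℕ) (y θ y₂ θ₂ : Λ)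
    (N : ℕ) : Submodule L Λ :=
  weightSpan L ![1, ω, 1, ω] ![y, θ, y₂, θ₂] N

/-- The elements of weight at most `N` whose product with `(θ - θ₂) / (y - y₂)` has weight at most
`N + w`, the weight that a polynomial divided difference would give when `θ` has weight `w + 1`. -/
def quotientSpan (L : Type*) {Λ : Type*} [Field L] [Field Λ] [Algebra L Λ] (w : ℕ)
    (y θ y₂ θ₂ : Λ) (N : ℕ) : Submodule L Λ :=
  (pairSpan L (w + 1) y θ y₂ θ₂ (N + w)).comap (LinearMap.mulLeft L ((θ - θ₂) / (y - y₂)))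

/-- The divided difference `(g(y, θ) - g(y, θ₂)) / (θ - θ₂)`. -/
noncomputable def divDiff (g : L[X][Y]) (y θ θ₂ : Λ) : Λ :=
  ∑ k ∈ Finset.range (g.natDegree + 1), Polynomial.aeval y (g.coeff k) *
    ∑ a ∈ Finset.range k, θ ^ a * θ₂ ^ (k - 1 - a)

variable {g : L[X][Y]} {w N : ℕ} {y θ y₂ θ₂ s : Λ}

lemma mem_quotientSpan : s ∈ quotientSpan L w y θ y₂ θ₂ N ↔
    (θ - θ₂) / (y - y₂) * s ∈ pairSpan L (w + 1) y θ y₂ θ₂ (N + w) :=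
  Iff.rfl

lemma divDiff_mul_sub (g : L[X][Y]) (y θ θ₂ : Λ) :
    divDiff g y θ θ₂ * (θ - θ₂) = g.aevalAeval y θ - g.aevalAeval y θ₂ := by
  rw [divDiff, Finset.sum_mul, aevalAeval_eq_sum_range, aevalAeval_eq_sum_range,
    ← Finset.sum_sub_distrib]
  refine Finset.sum_congr rfl fun k _ => ?_
  rw [mul_assoc, geom_sum₂_mul, mul_sub]

lemma sub_mul_mem_quotientSpan (hy : y ≠ y₂) (hs : s ∈ pairSpan L (w + 1) y θ y₂ θ₂ N) :
    (y - y₂) * s ∈ quotientSpan L w y θ y₂ θ₂ (N + 1) := by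
  rw [mem_quotientSpan, ← mul_assoc, div_mul_cancel₀ _ (sub_ne_zero.2 hy), mul_comm]
  have hθ : θ - θ₂ ∈ pairSpan L (w + 1) y θ y₂ θ₂ (w + 1) := by
    refine Submodule.sub_mem _ ?_ ?_
    · simpa using pow_mem_weightSpan (L := L) (w := ![1, w + 1, 1, w + 1]) (x := ![y, θ, y₂, θ₂])
        (N := w + 1) 1 (m := 1) (by simp)
    · simpa using pow_mem_weightSpan (L := L) (w := ![1, w + 1, 1, w + 1]) (x := ![y, θ, y₂, θ₂])
        (N := w + 1) 3 (m := 1) (by simp)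
  exact mul_mem_weightSpan hs hθ (by omega)

lemma IsWeightedMonic.aevalAeval_sub_mem_pairSpan (hg : IsWeightedMonic g (w + 1))
    (hn : 1 ≤ g.natDegree) (y θ y₂ θ₂ : Λ) :
    ∃ t ∈ pairSpan L (w + 1) y θ y₂ θ₂ ((w + 1) * (g.natDegree - 1) + w),
      t * (y - y₂) = g.aevalAeval y θ₂ - g.aevalAeval y₂ θ₂ := by
  have hcoeff : ∀ k, ∃ t ∈ pairSpan L (w + 1) y θ y₂ θ₂ ((w + 1) * (g.natDegree - 1 - k) + w),
      t * (y - y₂) = Polynomial.aeval y (g.coeff k) - Polynomial.aeval y₂ (g.coeff k) := fun k => by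
    refine aeval_sub_aeval_mem_weightSpan (i := (0 : Fin 4)) (j := 2) rfl rfl
      ((hg.natDegree_coeff_le k).trans ?_)
    calc (w + 1) * (g.natDegree - k) ≤ (w + 1) * (g.natDegree - 1 - k + 1) :=
          Nat.mul_le_mul_left _ (by omega)
      _ = _ := by ring
  choose t ht htmul using hcoeff
  refine ⟨∑ k ∈ Finset.range g.natDegree, t k * θ₂ ^ k, Submodule.sum_mem _ fun k hk => ?_, ?_⟩
  · refine mul_mem_weightSpan (ht k) (pow_mem_weightSpan (3 : Fin 4) le_rfl) ?_
    rw [Finset.mem_range] at hk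
    have hsplit : g.natDegree - 1 = g.natDegree - 1 - k + k := by omega
    conv_rhs => rw [hsplit]
    simp only [Matrix.cons_val]
    linarith
  · rw [aevalAeval_eq_sum_range, aevalAeval_eq_sum_range, Finset.sum_range_succ,
      Finset.sum_range_succ, hg.monic.coeff_natDegree, map_one, map_one, add_sub_add_right_eq_sub,
      Finset.sum_mul, ← Finset.sum_sub_distrib]
    refine Finset.sum_congr rfl fun k _ => ?_
    rw [← sub_mul, ← htmul]
    ring

/-- Dividing `0 = g(y, θ) - g(y₂, θ₂)` by `y - y₂` expresses `(θ - θ₂) / (y - y₂)` times the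
divided difference in `θ` by the divided difference in `y`. -/
lemma IsWeightedMonic.divDiff_mul_mem_quotientSpan (hg : IsWeightedMonic g (w + 1))
    (hn : 1 ≤ g.natDegree) (h0 : g.aevalAeval y θ = 0) (h0₂ : g.aevalAeval y₂ θ₂ = 0)
    (hy : y ≠ y₂) (hs : s ∈ pairSpan L (w + 1) y θ y₂ θ₂ N) :
    divDiff g y θ θ₂ * s ∈ quotientSpan L w y θ y₂ θ₂ (N + (w + 1) * (g.natDegree - 1)) := by
  obtain ⟨t, ht, htmul⟩ := hg.aevalAeval_sub_mem_pairSpan hn y θ y₂ θ₂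
  have hdiv := divDiff_mul_sub g y θ θ₂
  rw [h0₂, sub_zero] at htmul
  rw [h0, ← htmul] at hdiv
  have hy' := sub_ne_zero.2 hy
  have heq : (θ - θ₂) / (y - y₂) * (divDiff g y θ θ₂ * s) = -(s * t) := by
    field_simp
    linear_combination s * hdiv
  rw [mem_quotientSpan, heq]
  exact Submodule.neg_mem _ (mul_mem_weightSpan hs ht (by omega))

/-- The span of the elements `p(y) * θ ^ k * θ₂ ^ l` of weight at most `N` with `k < n` and
`l < n - 1`. -/
noncomputable def crossSpan (L : Type*) {Λ : Type*} [Field L] [Field Λ] [Algebra L Λ] (n ω : ℕ)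
    (y θ θ₂ : Λ) (N : ℕ) : Submodule L Λ :=
  LinearMap.range (polyCombination L y
    (fun s : Fin n × Fin (n - 1) => θ ^ (s.1 : ℕ) * θ₂ ^ (s.2 : ℕ))
    fun s => N + 1 - ω * (s.1 + s.2))

instance finite_crossSpan (n ω : ℕ) (y θ θ₂ : Λ) (N : ℕ) :
    Module.Finite L (crossSpan L n ω y θ θ₂ N) := by
  unfold crossSpan
  infer_instance

lemma aeval_mul_mem_crossSpan {n ω k l : ℕ} {p : L[X]} (hk : k < n) (hl : l < n - 1)
    (hp : p.natDegree + ω * (k + l) ≤ N) :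
    Polynomial.aeval y p * θ ^ k * θ₂ ^ l ∈ crossSpan L n ω y θ θ₂ N := by
  rw [mul_assoc]
  exact aeval_mul_mem_range_polyCombination
    (u := fun s : Fin n × Fin (n - 1) => θ ^ (s.1 : ℕ) * θ₂ ^ (s.2 : ℕ))
    (d := fun s => N + 1 - ω * (s.1 + s.2)) (k := (⟨k, hk⟩, ⟨l, hl⟩)) (by dsimp only; omega)

lemma IsWeightedMonic.divDiff_eq (hg : IsWeightedMonic g (w + 1)) {m : ℕ}
    (hm : g.natDegree = m + 1) (y θ θ₂ : Λ) :
    divDiff g y θ θ₂ = θ₂ ^ m + ((∑ a ∈ Finset.range m, θ ^ (a + 1) * θ₂ ^ (m - (a + 1))) +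
      ∑ k ∈ Finset.range (m + 1), ∑ a ∈ Finset.range k,
        Polynomial.aeval y (g.coeff k) * (θ ^ a * θ₂ ^ (k - 1 - a))) := by
  have hlead : g.coeff (m + 1) = 1 := hm ▸ hg.monic.coeff_natDegree
  have hpow := Finset.sum_range_succ' (fun a => θ ^ a * θ₂ ^ (m - a)) m
  rw [divDiff, hm, Finset.sum_range_succ, hlead, map_one, one_mul, Nat.add_sub_cancel, hpow,
    pow_zero, one_mul, Nat.sub_zero]
  simp only [Finset.mul_sum]
  ring

lemma IsWeightedMonic.divDiff_mul_aeval_mul_mem_quotientSpan (hg : IsWeightedMonic g (w + 1))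
    (hn : 1 ≤ g.natDegree) (h0 : g.aevalAeval y θ = 0) (h0₂ : g.aevalAeval y₂ θ₂ = 0)
    (hy : y ≠ y₂) {k j : ℕ} {p : L[X]}
    (hp : p.natDegree + (w + 1) * (k + (g.natDegree - 1 + j)) ≤ N) :
    divDiff g y θ θ₂ * (Polynomial.aeval y p * θ ^ k * θ₂ ^ j) ∈
      quotientSpan L w y θ y₂ θ₂ N := by
  have hmem : Polynomial.aeval y p * θ ^ k * θ₂ ^ j ∈
      pairSpan L (w + 1) y θ y₂ θ₂ (N - (w + 1) * (g.natDegree - 1)) := by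
    refine mul_mem_weightSpan (mul_mem_weightSpan (aeval_mem_weightSpan (0 : Fin 4) le_rfl)
      (pow_mem_weightSpan (1 : Fin 4) le_rfl) le_rfl) (pow_mem_weightSpan (3 : Fin 4) le_rfl) ?_
    simp only [Matrix.cons_val]
    refine Nat.le_sub_of_add_le ?_
    linarith
  have hle : (w + 1) * (g.natDegree - 1) ≤ N := by nlinarith
  have hmul := hg.divDiff_mul_mem_quotientSpan hn h0 h0₂ hy hmem
  rwa [Nat.sub_add_cancel hle] at hmul

lemma IsWeightedMonic.aeval_mul_mem_quotientSpan_sup_crossSpan (hg : IsWeightedMonic g (w + 1))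
    (hn : 1 ≤ g.natDegree) (h0 : g.aevalAeval y θ = 0) (h0₂ : g.aevalAeval y₂ θ₂ = 0)
    (hy : y ≠ y₂) (l : ℕ) : ∀ (k : ℕ) (p : L[X]), p.natDegree + (w + 1) * (k + l) ≤ N →
      Polynomial.aeval y p * θ ^ k * θ₂ ^ l ∈
        quotientSpan L w y θ y₂ θ₂ N ⊔ crossSpan L g.natDegree (w + 1) y θ θ₂ N := by
  induction l using Nat.strong_induction_on with
  | _ l ih =>
  intro k p hp
  rcases lt_or_ge l (g.natDegree - 1) with hl | hl
  · have hle : (w + 1) * l ≤ N := by nlinarith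
    refine hg.aeval_mul_pow_mul_mem h0 (N := N - (w + 1) * l) (fun k hk p hp => ?_) k p ?_
    · exact Submodule.mem_sup_right (aeval_mul_mem_crossSpan hk hl (by rw [mul_add]; omega))
    · rw [mul_add] at hp; omega
  obtain ⟨m, hm⟩ := Nat.exists_eq_add_of_le' hn
  obtain ⟨j, rfl⟩ := Nat.exists_eq_add_of_le hl
  rw [hm, Nat.add_sub_cancel] at hp ih ⊢
  set u := Polynomial.aeval y p * θ ^ k * θ₂ ^ j with hu
  have hdiv : divDiff g y θ θ₂ * u ∈ quotientSpan L w y θ y₂ θ₂ N :=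
    hg.divDiff_mul_aeval_mul_mem_quotientSpan hn h0 h0₂ hy
      (by rwa [hm, Nat.add_sub_cancel])
  have hexp : Polynomial.aeval y p * θ ^ k * θ₂ ^ (m + j) = divDiff g y θ θ₂ * u -
      ((∑ a ∈ Finset.range m, θ ^ (a + 1) * θ₂ ^ (m - (a + 1)) * u) +
      ∑ i ∈ Finset.range (m + 1), ∑ a ∈ Finset.range i,
        Polynomial.aeval y (g.coeff i) * (θ ^ a * θ₂ ^ (i - 1 - a)) * u) := by
    simp only [hg.divDiff_eq hm, ← Finset.sum_mul, hu]
    ring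
  rw [hexp]
  refine Submodule.sub_mem _ (Submodule.mem_sup_left hdiv) (Submodule.add_mem _
    (Submodule.sum_mem _ fun a ha => ?_)
    (Submodule.sum_mem _ fun i hi => Submodule.sum_mem _ fun a ha => ?_))
  · rw [Finset.mem_range] at ha
    have hmem := ih (m - (a + 1) + j) (by omega) (a + 1 + k) p
      (by rwa [show a + 1 + k + (m - (a + 1) + j) = k + (m + j) by omega])
    convert hmem using 1
    rw [hu]; ring
  · rw [Finset.mem_range] at hi ha
    have hmem := ih (i - 1 - a + j) (by omega) (a + k) (g.coeff i * p) (by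
      calc (g.coeff i * p).natDegree + (w + 1) * (a + k + (i - 1 - a + j))
          ≤ (w + 1) * (g.natDegree - i) + p.natDegree + (w + 1) * (a + k + (i - 1 - a + j)) := by
            grw [Polynomial.natDegree_mul_le, hg.natDegree_coeff_le]
        _ = p.natDegree + (w + 1) * (g.natDegree - i + (a + k + (i - 1 - a + j))) := by ring
        _ = p.natDegree + (w + 1) * (k + (m + j)) := by congr 2; omega
        _ ≤ N := hp)
    convert hmem using 1
    rw [hu, map_mul]; ring

lemma IsWeightedMonic.pairSpan_le_quotientSpan_sup_crossSpan (hg : IsWeightedMonic g (w + 1))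
    (hn : 1 ≤ g.natDegree) (h0 : g.aevalAeval y θ = 0) (h0₂ : g.aevalAeval y₂ θ₂ = 0)
    (hy : y ≠ y₂) (N : ℕ) : pairSpan L (w + 1) y θ y₂ θ₂ N ≤
      quotientSpan L w y θ y₂ θ₂ N ⊔ crossSpan L g.natDegree (w + 1) y θ θ₂ N := by
  suffices hmon : ∀ j i k l, i + (w + 1) * k + j + (w + 1) * l ≤ N →
      y ^ i * θ ^ k * y₂ ^ j * θ₂ ^ l ∈
        quotientSpan L w y θ y₂ θ₂ N ⊔ crossSpan L g.natDegree (w + 1) y θ θ₂ N by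
    refine weightSpan_le fun e he => ?_
    simp only [Fin.sum_univ_four, Fin.prod_univ_four, Matrix.cons_val] at he ⊢
    exact hmon _ _ _ _ (by linarith)
  intro j
  induction j with
  | zero =>
    intro i k l h
    simpa using hg.aeval_mul_mem_quotientSpan_sup_crossSpan hn h0 h0₂ hy l k (Polynomial.X ^ i)
      (by rw [Polynomial.natDegree_X_pow]; linarith)
  | succ j ih =>
    intro i k l h
    have hmem : y ^ i * θ ^ k * y₂ ^ j * θ₂ ^ l ∈ pairSpan L (w + 1) y θ y₂ θ₂ (N - 1) := by
      have hprod := prod_pow_mem_weightSpan (L := L) (w := ![1, w + 1, 1, w + 1])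
        (x := ![y, θ, y₂, θ₂]) (e := ![i, k, j, l]) (N := N - 1)
        (Nat.le_sub_of_add_le (by simp only [Fin.sum_univ_four, Matrix.cons_val]; linarith))
      simpa only [Fin.prod_univ_four, Matrix.cons_val] using hprod
    have hquot := sub_mul_mem_quotientSpan hy hmem
    rw [Nat.sub_add_cancel (by omega)] at hquot
    have hexp : y ^ i * θ ^ k * y₂ ^ (j + 1) * θ₂ ^ l = y ^ (i + 1) * θ ^ k * y₂ ^ j * θ₂ ^ l -
        (y - y₂) * (y ^ i * θ ^ k * y₂ ^ j * θ₂ ^ l) := by ring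
    rw [hexp]
    exact Submodule.sub_mem _ (ih _ _ _ (by linarith)) (Submodule.mem_sup_left hquot)

lemma exists_pow_mul_mem_of_sum_finrank_lt {W C : ℕ → Submodule L Λ}
    [∀ N, Module.Finite L (C N)] {ξ : Λ} (hξ : ξ ≠ 0) {w : ℕ}
    (hW : ∀ N, W N ≤ (W (N + w)).comap (LinearMap.mulLeft L ξ) ⊔ C N) (M : ℕ) :
    ∀ (N : ℕ) (V : Submodule L Λ), V ≤ W N →
      ∑ i ∈ Finset.range M, Module.finrank L (C (N + i * w)) < Module.finrank L V →
      ∃ z ∈ V, z ≠ 0 ∧ ξ ^ M * z ∈ W (N + M * w) := by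
  induction M with
  | zero =>
    intro N V hV hdim
    have : Module.Finite L V := Module.finite_of_finrank_pos (Nat.zero_lt_of_lt hdim)
    obtain ⟨⟨z, hz⟩, hz0⟩ := Module.finrank_pos_iff_exists_ne_zero.1 (Nat.zero_lt_of_lt hdim)
    exact ⟨z, hz, fun h => hz0 (Subtype.ext h), by simpa using hV hz⟩
  | succ M ih =>
    intro N V hV hdim
    have : Module.Finite L V := Module.finite_of_finrank_pos (Nat.zero_lt_of_lt hdim)
    have hfin := finrank_le_finrank_inf_add_finrank (hV.trans (hW N))
    set V' := V ⊓ (W (N + w)).comap (LinearMap.mulLeft L ξ)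
    have hV' : V'.map (LinearMap.mulLeft L ξ) ≤ W (N + w) := by
      rintro _ ⟨z, hz, rfl⟩
      exact hz.2
    have hrank : Module.finrank L (V'.map (LinearMap.mulLeft L ξ)) = Module.finrank L V' :=
      (Submodule.equivMapOfInjective (LinearMap.mulLeft L ξ)
        (mul_right_injective₀ hξ) _).finrank_eq.symm
    have hshift : ∀ i, N + w + i * w = N + (i + 1) * w := fun i => by ring
    have hsum : ∑ i ∈ Finset.range M, Module.finrank L (C (N + w + i * w)) =
        ∑ i ∈ Finset.range M, Module.finrank L (C (N + (i + 1) * w)) :=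
      Finset.sum_congr rfl fun i _ => by rw [hshift]
    rw [Finset.sum_range_succ', zero_mul, add_zero] at hdim
    obtain ⟨_, ⟨z, hz, rfl⟩, hz0, hmem⟩ := ih (N + w) _ hV' (by omega)
    refine ⟨z, hz.1, fun h => hz0 (by rw [h, map_zero]), ?_⟩
    rw [pow_succ, mul_assoc, ← hshift]
    exact hmem

end PairSpan

section DimensionCount

lemma two_mul_sum_tsub {ω n N : ℕ} (h : ω * (n - 1) ≤ N) :
    2 * ∑ k : Fin n, (N - ω * k) + ω * (n * (n - 1)) = 2 * (n * N) := by
  have hsum : ∑ k ∈ Finset.range n, (N - ω * k) + ω * ∑ k ∈ Finset.range n, k = n * N := by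
    rw [Finset.mul_sum, ← Finset.sum_add_distrib, Finset.sum_congr rfl fun k hk => ?_,
      Finset.sum_const, Finset.card_range, smul_eq_mul]
    have hk' : k ≤ n - 1 := Nat.le_sub_one_of_lt (Finset.mem_range.1 hk)
    exact Nat.sub_add_cancel ((Nat.mul_le_mul_left ω hk').trans h)
  rw [Fin.sum_univ_eq_sum_range (fun k => N - ω * k), ← hsum, ← Finset.sum_range_id_mul_two]
  ring

lemma two_mul_sum_tsub_add {ω n m N : ℕ} (h : ω * ((n - 1) + (m - 1)) ≤ N) :
    2 * ∑ s : Fin n × Fin m, (N - ω * (s.1 + s.2)) + ω * (n * m * ((n - 1) + (m - 1))) =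
      2 * (n * m * N) := by
  have hinner : ∀ k : Fin n, 2 * ∑ l : Fin m, (N - ω * (k + l)) + ω * (m * (m - 1)) =
      2 * (m * (N - ω * k)) := fun k => by
    simp only [mul_add, ← Nat.sub_sub]
    refine two_mul_sum_tsub (Nat.le_sub_of_add_le' ?_)
    calc ω * k + ω * (m - 1) = ω * (k + (m - 1)) := by ring
      _ ≤ ω * ((n - 1) + (m - 1)) := by gcongr; omega
      _ ≤ N := h
  have houter : 2 * ∑ k : Fin n, (N - ω * k) + ω * (n * (n - 1)) = 2 * (n * N) :=
    two_mul_sum_tsub ((Nat.mul_le_mul_left ω (Nat.le_add_right _ _)).trans h)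
  have hsum := Finset.sum_congr (rfl : (Finset.univ : Finset (Fin n)) = _) fun k _ => hinner k
  simp only [Finset.sum_add_distrib, ← Finset.mul_sum, Finset.sum_const, Finset.card_univ,
    Fintype.card_fin, smul_eq_mul] at hsum
  rw [Fintype.sum_prod_type]
  linear_combination hsum + m * houter

private lemma surplus_pos (m w : ℕ) : (0 : ℤ) < 2 * (m + 2) * (2 * m + 3) +
    2 * (m + 2) * (m + 1) * w + (w + 1) * ((m + 2) * (m + 1)) * (2 * m - 1) := by
  have hcubic : (0 : ℤ) ≤ (w + 1) * (m * (2 * m ^ 2 + 5 * m + 1)) := by positivity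
  have hrest : (0 : ℤ) < m * (m * (4 + 2 * w) + 14 + 6 * w) + 2 * w + 10 := by positivity
  linarith

/-- The parameters of the auxiliary function: zeros of order `M` at the rational points can be
imposed on the products of functions of weights `a` and `q * (M - 1)`. -/
lemma sum_tsub_lt_mul {w n M a : ℕ} (hn : 2 ≤ n) (hM : M = (w + 1) * (n * (n - 1)))
    (ha : a = (w + 2) * (n - 1) * M) :
    ∑ i ∈ Finset.range M, ∑ s : Fin n × Fin (n - 1), (a + M + i * w - (w + 1) * (s.1 + s.2)) <
      (∑ k : Fin n, (a + 1 - (w + 1) * k)) * ∑ k : Fin n, (M - (w + 1) * k) := by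
  obtain ⟨m, rfl⟩ := Nat.exists_eq_add_of_le' hn
  simp only [show m + 2 - 1 = m + 1 by omega] at *
  have hMm : (w + 1) * (m + 1) ≤ M := hM ▸ by gcongr; nlinarith
  have hMa : 2 * M ≤ a := by rw [ha]; gcongr; nlinarith
  have hA := two_mul_sum_tsub (ω := w + 1) (n := m + 2) (N := a + 1)
    (by simp only [Nat.add_succ_sub_one]; omega)
  have hB := two_mul_sum_tsub (ω := w + 1) (n := m + 2) (N := M) hMm
  have hC : ∀ i, 2 * ∑ s : Fin (m + 2) × Fin (m + 1), (a + M + i * w - (w + 1) * (s.1 + s.2)) +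
      M * (2 * m + 1) = 2 * ((m + 2) * (m + 1) * (a + M + i * w)) := fun i => by
    rw [← two_mul_sum_tsub_add (ω := w + 1) (by simp only [Nat.add_succ_sub_one]; nlinarith), hM]
    simp only [Nat.add_succ_sub_one]
    ring
  have hS := Finset.sum_congr (rfl : Finset.range M = _) fun i _ => hC i
  simp only [Finset.sum_add_distrib, ← Finset.mul_sum, ← Finset.sum_mul, Finset.sum_const,
    Finset.card_range, smul_eq_mul] at hS
  have hid := Finset.sum_range_id_mul_two M
  have hMpos : 0 < M := hM ▸ by positivity
  set S := ∑ i ∈ Finset.range M, ∑ s : Fin (m + 2) × Fin (m + 1),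
    (a + M + i * w - (w + 1) * (s.1 + s.2))
  set A := ∑ k : Fin (m + 2), (a + 1 - (w + 1) * k)
  set B := ∑ k : Fin (m + 2), (M - (w + 1) * k)
  simp only [Nat.add_succ_sub_one] at hA hB
  rw [← hM] at hA hB
  suffices hlt : (S : ℤ) < A * B by exact_mod_cast hlt
  zify [Nat.one_le_iff_ne_zero.2 hMpos.ne'] at *
  have hdiff : 4 * ((A : ℤ) * B - S) =
      M * (2 * (m + 2) * (2 * m + 3) + 2 * (m + 2) * (m + 1) * w + M * (2 * m - 1)) := by
    linear_combination (2 * B : ℤ) * hA + (2 * (m + 2) * (a + 1) - M : ℤ) * hB - 2 * hS -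
      2 * (m + 2) * (m + 1) * w * hid + 2 * (m + 2) * M * ha
  have hpos := mul_pos (Int.natCast_pos.2 (Int.natCast_pos.1 hMpos)) (surplus_pos m w)
  rw [← hM] at hpos
  linarith

end DimensionCount

/-! ### Places and Frobenius powers -/

section RationalPlace

variable {L Λ : Type*} [Field L] [Field Λ] [Algebra L Λ] {v : AddValuation Λ (WithTop ℤ)}

/-- The valuation `v` is trivial on the field of constants `L` and has residue field `L`. -/
structure IsRationalPlace (L : Type*) {Λ : Type*} [Field L] [Field Λ] [Algebra L Λ]
    (v : AddValuation Λ (WithTop ℤ)) : Prop where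
  map_algebraMap_nonneg (c : L) : 0 ≤ v (algebraMap L Λ c)
  exists_lt_sub {x z : Λ} (hz : z ≠ 0) (h : v z ≤ v x) : ∃ c : L, v z < v (x - c • z)

lemma IsRationalPlace.le_map_smul (hv : IsRationalPlace L v) (c : L) (x : Λ) :
    v x ≤ v (c • x) := by
  rw [Algebra.smul_def, v.map_mul]
  exact le_add_of_nonneg_left (hv.map_algebraMap_nonneg c)

lemma add_nsmul_lt_add_nsmul {a b m n : WithTop ℤ} {q : ℕ} (hab : a < b + q) (hmn : m < n) :
    a + q • m < b + q • n := by
  rcases eq_or_ne q 0 with rfl | hq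
  · simpa using hab
  lift a to ℤ using (hab.trans_le le_top).ne
  lift m to ℤ using (hmn.trans_le le_top).ne
  have hlt : (a : WithTop ℤ) + q • (m : WithTop ℤ) < ⊤ := by
    norm_cast
    exact WithTop.coe_lt_top _
  induction n using WithTop.recTopCoe with
  | top =>
    obtain ⟨k, rfl⟩ := Nat.exists_eq_succ_of_ne_zero hq
    rwa [succ_nsmul ⊤, WithTop.add_top, WithTop.add_top]
  | coe n =>
    induction b using WithTop.recTopCoe with
    | top => rwa [WithTop.top_add]
    | coe b =>
      norm_cast at *
      simp only [nsmul_eq_mul]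
      nlinarith

/-- If the `τ i` do not all vanish, replace each of them by its leading coefficient at the place:
the corresponding combination of the `μ i` has a larger valuation than its terms allow. -/
lemma IsRationalPlace.eq_zero_of_sum_mul_pow_eq_zero {ι : Type*} [Fintype ι]
    (hv : IsRationalPlace L v) {p h : ℕ} [ExpChar Λ p] {μ τ : ι → Λ}
    (hμ : LinearIndependent L μ)
    (hspread : ∀ s ∈ Submodule.span L (Set.range μ), s ≠ 0 → ∀ i, v s < v (μ i) + (p ^ h : ℕ))
    (hsum : ∑ i, μ i * τ i ^ p ^ h = 0) : τ = 0 := by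
  by_contra hτ
  obtain ⟨j, hj⟩ := Function.ne_iff.1 hτ
  obtain ⟨i₀, -, hmin⟩ :=
    Finset.exists_min_image Finset.univ (fun i => v (τ i)) ⟨j, Finset.mem_univ j⟩
  have hτ0 : τ i₀ ≠ 0 := fun h0 => hj <| v.top_iff.1 <| top_le_iff.1 <| by
    simpa only [h0, v.map_zero] using hmin j (Finset.mem_univ j)
  choose c hc using fun i => hv.exists_lt_sub hτ0 (hmin i (Finset.mem_univ i))
  have hc0 : c i₀ ≠ 0 := fun h0 => by simpa [h0] using hc i₀
  set s := ∑ i, c i ^ p ^ h • μ i with hs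
  have hs0 : s ≠ 0 := fun h0 => hc0 <|
    eq_zero_of_pow_eq_zero (Fintype.linearIndependent_iff.1 hμ _ h0 i₀)
  have hlead : s * τ i₀ ^ p ^ h = -∑ i, μ i * (τ i - c i • τ i₀) ^ p ^ h := by
    simp only [sub_pow_expChar_pow, smul_pow, mul_sub, Finset.sum_sub_distrib, hsum, zero_sub,
      neg_neg, hs, Finset.sum_mul, smul_mul_assoc, mul_smul_comm]
  have hterm : ∀ i, v (s * τ i₀ ^ p ^ h) < v (μ i * (τ i - c i • τ i₀) ^ p ^ h) := fun i => by
    rw [v.map_mul, v.map_mul, v.map_pow, v.map_pow]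
    exact add_nsmul_lt_add_nsmul (hspread s (Submodule.sum_mem _ fun i _ => Submodule.smul_mem _ _
      (Submodule.subset_span ⟨i, rfl⟩)) hs0 i) (hc i)
  have hlt : v (s * τ i₀ ^ p ^ h) < v (s * τ i₀ ^ p ^ h) := by
    conv_rhs => rw [hlead, v.map_neg]
    refine v.map_lt_sum (mt v.top_iff.1 (mul_ne_zero hs0 (pow_ne_zero _ hτ0))) fun i _ => hterm i
  exact hlt.false

/-- The span of the products `s * t ^ q`. -/
def mulPowSpan (A B : Submodule L Λ) (q : ℕ) : Submodule L Λ :=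
  Submodule.span L {z | ∃ s ∈ A, ∃ t ∈ B, s * t ^ q = z}

lemma IsRationalPlace.linearIndependent_mul_pow {ι κ : Type*} [Finite ι] [Finite κ]
    (hv : IsRationalPlace L v) {p h : ℕ} [ExpChar Λ p] [ExpChar L p] [PerfectRing L p]
    {μ : ι → Λ} {ν : κ → Λ} (hμ : LinearIndependent L μ) (hν : LinearIndependent L ν)
    (hspread : ∀ s ∈ Submodule.span L (Set.range μ), s ≠ 0 → ∀ i, v s < v (μ i) + (p ^ h : ℕ)) :
    LinearIndependent L fun k : ι × κ => μ k.1 * ν k.2 ^ p ^ h := by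
  have := Fintype.ofFinite ι
  have := Fintype.ofFinite κ
  rw [Fintype.linearIndependent_iff]
  rintro c hc ⟨i, j⟩
  choose r hr using fun k => (bijective_iterateFrobenius L p h).surjective (c k)
  simp only [iterateFrobenius_def] at hr
  have hzero := hv.eq_zero_of_sum_mul_pow_eq_zero (τ := fun i => ∑ j, r (i, j) • ν j) hμ hspread (by
    rw [Fintype.sum_prod_type] at hc
    simpa only [sum_pow_char_pow, smul_pow, hr, Finset.mul_sum, mul_smul_comm] using hc)
  rw [← hr, Fintype.linearIndependent_iff.1 hν _ (congrFun hzero i) j,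
    zero_pow (expChar_pow_pos L p h).ne']

lemma IsRationalPlace.finrank_mul_finrank_le (hv : IsRationalPlace L v) {p h : ℕ} [ExpChar Λ p]
    [ExpChar L p] [PerfectRing L p] {A B : Submodule L Λ} [Module.Finite L A] [Module.Finite L B]
    [Module.Finite L (mulPowSpan A B (p ^ h))]
    (hspread : ∀ s ∈ A, s ≠ 0 → ∀ t ∈ A, v s < v t + (p ^ h : ℕ)) :
    Module.finrank L A * Module.finrank L B ≤ Module.finrank L (mulPowSpan A B (p ^ h)) := by
  set μ := Module.finBasis L A
  set ν := Module.finBasis L B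
  have hμ : LinearIndependent L fun i => (μ i : Λ) :=
    μ.linearIndependent.map' A.subtype A.ker_subtype
  have hν : LinearIndependent L fun j => (ν j : Λ) :=
    ν.linearIndependent.map' B.subtype B.ker_subtype
  have hspan : Submodule.span L (Set.range fun i => (μ i : Λ)) ≤ A := by
    rw [Submodule.span_le]
    rintro _ ⟨i, rfl⟩
    exact (μ i).2
  have hindep := hv.linearIndependent_mul_pow hμ hν fun s hs hs0 i =>
    hspread s (hspan hs) hs0 _ (μ i).2
  have hcard := (LinearIndependent.of_comp (M' := Λ) (mulPowSpan A B (p ^ h)).subtype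
    (v := fun k : Fin _ × Fin _ => (⟨μ k.1 * ν k.2 ^ p ^ h, Submodule.subset_span
      ⟨_, (μ k.1).2, _, (ν k.2).2, rfl⟩⟩ : mulPowSpan A B (p ^ h))) hindep).fintype_card_le_finrank
  simpa using hcard

end RationalPlace

section PlaceBounds

open scoped Polynomial Polynomial.Bivariate

variable {L Λ : Type*} [Field L] [Field Λ] [Algebra L Λ] {v : AddValuation Λ (WithTop ℤ)}
  {g : L[X][Y]} {ω κ : ℕ} {y θ : Λ}

lemma IsRationalPlace.le_map_of_mem_pointSpan (hv : IsRationalPlace L v)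
    (hy : ((-κ : ℤ) : WithTop ℤ) ≤ v y) (hθ : ((-(κ * ω) : ℤ) : WithTop ℤ) ≤ v θ) {N : ℕ} {s : Λ}
    (hs : s ∈ pointSpan L ω y θ N) : ((-(κ * N) : ℤ) : WithTop ℤ) ≤ v s := by
  induction hs using Submodule.span_induction with
  | mem s hs =>
    obtain ⟨e, he, rfl⟩ := hs
    simp only [Fin.sum_univ_two, Fin.prod_univ_two, Matrix.cons_val_zero, Matrix.cons_val_one,
      mul_one, v.map_mul, v.map_pow] at he ⊢
    refine le_trans ?_ (add_le_add (nsmul_le_nsmul_right hy _) (nsmul_le_nsmul_right hθ _))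
    norm_cast
    simp only [nsmul_eq_mul]
    have he' : (e 0 + e 1 * ω : ℤ) ≤ N := by exact_mod_cast he
    have := mul_le_mul_of_nonneg_left he' (Int.natCast_nonneg κ)
    push_cast
    linarith
  | zero => simp
  | add s t _ _ hs ht => exact v.map_le_add hs ht
  | smul c s _ hs => exact hs.trans (hv.le_map_smul c s)

/-- With `κ = 0` this applies to a place where `y` and `θ` are regular, with `κ = 1` to a place
where they have poles. -/
lemma IsRationalPlace.map_le_map_add_of_mem_pointSpan (hv : IsRationalPlace L v)
    (hg : IsWeightedMonic g ω) (hn : 1 ≤ g.natDegree) (h : IsGenericZero g y θ) (hκ : κ ≤ 1)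
    (hy : ((-κ : ℤ) : WithTop ℤ) ≤ v y) (hθ : ((-(κ * ω) : ℤ) : WithTop ℤ) ≤ v θ)
    (hdeg : ∀ P : L[X], P ≠ 0 →
      v (Polynomial.aeval y P) ≤ (((1 - κ) * P.natDegree : ℤ) : WithTop ℤ))
    {a : ℕ} {s t : Λ} (hs : s ∈ pointSpan L ω y θ a) (hs0 : s ≠ 0)
    (ht : t ∈ pointSpan L ω y θ a) : v s ≤ v t + (g.natDegree * a : ℕ) := by
  obtain ⟨s', hs', P, hP0, hPdeg, hP⟩ := exists_mul_eq_aeval hg hn h hs hs0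
  have hPy : v (Polynomial.aeval y P) ≠ ⊤ := ((hdeg P hP0).trans_lt (WithTop.coe_lt_top _)).ne
  have hle := hdeg P hP0
  have hbelow := hv.le_map_of_mem_pointSpan hy hθ hs'
  refine le_trans ?_ (add_le_add_left (hv.le_map_of_mem_pointSpan hy hθ ht) _)
  rw [← hP, v.map_mul] at hPy hle
  obtain ⟨hs_top, hs'_top⟩ := WithTop.add_ne_top.1 hPy
  lift v s to ℤ using hs_top with i
  lift v s' to ℤ using hs'_top with j
  obtain ⟨m, hm⟩ := Nat.exists_eq_add_of_le' hn
  rw [hm] at hPdeg hbelow ⊢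
  suffices hint : i ≤ -(κ * a) + ((m + 1) * a : ℕ) by exact WithTop.coe_le_coe.2 hint
  have hle' : i + j ≤ (1 - κ) * P.natDegree := WithTop.coe_le_coe.1 hle
  have hbelow' := WithTop.coe_le_coe.1 hbelow
  rw [Nat.add_sub_cancel] at hbelow'
  push_cast at hbelow' ⊢
  have : (P.natDegree : ℤ) ≤ (m + 1) * a := by exact_mod_cast hPdeg
  rcases Nat.le_one_iff_eq_zero_or_eq_one.1 hκ with rfl | rfl <;>
    push_cast at hle' hbelow' ⊢ <;> linarith

end PlaceBounds

/-! ### Stepanov's method -/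

section Frobenius

variable {L Λ σ : Type*} [Field L] [Field Λ] [Algebra L Λ] [Fintype σ]

lemma pow_mem_weightSpan_pow {p : ℕ} [ExpChar Λ p] (h : ℕ) {w : σ → ℕ} {x : σ → Λ} {N : ℕ} {s : Λ}
    (hs : s ∈ weightSpan L w x N) :
    s ^ p ^ h ∈ weightSpan L w (fun i => x i ^ p ^ h) N := by
  induction hs using Submodule.span_induction with
  | mem s hs =>
    obtain ⟨e, he, rfl⟩ := hs
    simpa only [← Finset.prod_pow, ← pow_mul, mul_comm] using
      prod_pow_mem_weightSpan (L := L) (x := fun i => x i ^ p ^ h) he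
  | zero => rw [zero_pow (expChar_pow_pos Λ p h).ne']; exact zero_mem _
  | add s t _ _ hs ht => rw [add_pow_expChar_pow]; exact add_mem hs ht
  | smul c s _ hs => rw [smul_pow]; exact Submodule.smul_mem _ _ hs

variable {ω a b : ℕ} {y θ y₂ θ₂ : Λ}

lemma pointSpan_le_pairSpan_left : pointSpan L ω y θ a ≤ pairSpan L ω y θ y₂ θ₂ a :=
  weightSpan_le fun e he => by
    simpa [Fin.prod_univ_two, Fin.prod_univ_four] using prod_pow_mem_weightSpan (L := L)
      (w := ![1, ω, 1, ω]) (x := ![y, θ, y₂, θ₂]) (e := ![e 0, e 1, 0, 0]) (N := a)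
      (by simpa [Fin.sum_univ_four] using he)

lemma pointSpan_le_pairSpan_right : pointSpan L ω y₂ θ₂ a ≤ pairSpan L ω y θ y₂ θ₂ a :=
  weightSpan_le fun e he => by
    simpa [Fin.prod_univ_two, Fin.prod_univ_four] using prod_pow_mem_weightSpan (L := L)
      (w := ![1, ω, 1, ω]) (x := ![y, θ, y₂, θ₂]) (e := ![0, 0, e 0, e 1]) (N := a)
      (by simpa [Fin.sum_univ_four] using he)

lemma mulPowSpan_pointSpan_le_pairSpan {p : ℕ} [ExpChar Λ p] (h : ℕ) :
    mulPowSpan (pointSpan L ω y θ a) (pointSpan L ω y θ b) (p ^ h) ≤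
      pairSpan L ω y θ (y ^ p ^ h) (θ ^ p ^ h) (a + b) := by
  rw [mulPowSpan, Submodule.span_le]
  rintro _ ⟨s, hs, t, ht, rfl⟩
  have hpow : (fun i => (![y, θ] : Fin 2 → Λ) i ^ p ^ h) = ![y ^ p ^ h, θ ^ p ^ h] :=
    List.ofFn_inj.1 rfl
  have htp := pow_mem_weightSpan_pow (p := p) h ht
  rw [hpow] at htp
  exact mul_mem_weightSpan (pointSpan_le_pairSpan_left hs) (pointSpan_le_pairSpan_right htp) le_rfl

lemma pow_mem_weightSpan_mul {w : σ → ℕ} {x : σ → Λ} {N : ℕ} {s : Λ}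
    (hs : s ∈ weightSpan L w x N) (m : ℕ) : s ^ m ∈ weightSpan L w x (m * N) := by
  induction m with
  | zero => simpa using prod_pow_mem_weightSpan (L := L) (w := w) (x := x) (e := 0) (N := 0 * N)
  | succ m ih => exact pow_succ s m ▸ mul_mem_weightSpan ih hs (by rw [Nat.succ_mul])

lemma mulPowSpan_pointSpan_le_pointSpan (q : ℕ) :
    mulPowSpan (pointSpan L ω y θ a) (pointSpan L ω y θ b) q ≤
      pointSpan L ω y θ (a + q * b) := by
  rw [mulPowSpan, Submodule.span_le]
  rintro _ ⟨s, hs, t, ht, rfl⟩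
  exact mul_mem_weightSpan hs (pow_mem_weightSpan_mul ht q) le_rfl

lemma weightSpan_le_toSubmodule {w : σ → ℕ} {x : σ → Λ} {N : ℕ} {A : Subalgebra L Λ}
    (hx : ∀ i, x i ∈ A) : weightSpan L w x N ≤ A.toSubmodule :=
  weightSpan_le fun _ _ => Subalgebra.prod_mem A fun i _ => Subalgebra.pow_mem A (hx i) _

end Frobenius

section Divisibility

open scoped Polynomial Polynomial.Bivariate

lemma prod_sub_algebraMap_eq_pow_card_sub {K R : Type*} [Field K] [Fintype K] [CommRing R]
    [Algebra K R] (x : R) : ∏ c : K, (x - algebraMap K R c) = x ^ Fintype.card K - x := by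
  have hroots := Polynomial.prod_multiset_X_sub_C_of_monic_of_roots_card_eq
    (p := (Polynomial.X ^ Fintype.card K - Polynomial.X : K[X]))
    (Polynomial.monic_X_pow_sub (by rw [Polynomial.degree_X]; exact_mod_cast Fintype.one_lt_card))
    (by rw [FiniteField.roots_X_pow_card_sub_X,
          FiniteField.X_pow_card_sub_X_natDegree_eq K Fintype.one_lt_card]; rfl)
  rw [FiniteField.roots_X_pow_card_sub_X] at hroots
  simpa [Multiset.map_map, Function.comp_def, map_prod] using congrArg (Polynomial.aeval x) hroots

lemma exists_algebraMap_eq_of_pow_card_eq {K L : Type*} [Field K] [Fintype K] [Field L]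
    [Algebra K L] {x : L} (hx : x ^ Fintype.card K = x) : ∃ a : K, algebraMap K L a = x := by
  have hprod := prod_sub_algebraMap_eq_pow_card_sub (K := K) x
  rw [hx, sub_self, Finset.prod_eq_zero_iff] at hprod
  obtain ⟨a, -, ha⟩ := hprod
  exact ⟨a, (sub_eq_zero.1 ha).symm⟩

lemma map_aevalAeval {K R S : Type*} [CommSemiring K] [CommSemiring R] [CommSemiring S]
    [Algebra K R] [Algebra K S] (φ : R →ₐ[K] S) (y θ : R) (g : K[X][Y]) :
    φ (g.aevalAeval y θ) = g.aevalAeval (φ y) (φ θ) := by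
  simp only [aevalAeval_eq_sum_range, map_sum, map_mul, map_pow, Polynomial.aeval_algHom_apply]

variable {K R : Type*} [Field K] [CommRing R] [Algebra K R] {g : K[X][Y]} {y θ : R}

lemma isCoprime_sub_of_aevalAeval_ne_zero (hg : g.aevalAeval y θ = 0) {a b : K}
    (hab : g.aevalAeval a b ≠ 0) :
    IsCoprime (y - algebraMap K R a) (θ - algebraMap K R b) := by
  set I := Ideal.span {y - algebraMap K R a, θ - algebraMap K R b}
  set π := Ideal.Quotient.mkₐ K I
  have hy : π y = Algebra.ofId K (R ⧸ I) a := Ideal.Quotient.eq.2 (Ideal.subset_span (by simp))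
  have hθ : π θ = Algebra.ofId K (R ⧸ I) b := Ideal.Quotient.eq.2 (Ideal.subset_span (by simp))
  have hzero : Algebra.ofId K (R ⧸ I) (g.aevalAeval a b) = 0 := by
    rw [map_aevalAeval, ← hy, ← hθ, ← map_aevalAeval, hg, map_zero]
  have htop : (1 : R) ∈ I := by
    rw [← Ideal.Quotient.eq_zero_iff_mem, map_one, ← map_one (Algebra.ofId K (R ⧸ I)),
      ← inv_mul_cancel₀ hab, map_mul, hzero, mul_zero]
  exact Ideal.mem_span_pair.1 htop

/-- If `g` has no rational zero off the line `X = c`, then the functions `y - y₀` with `y₀ ≠ c`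
are coprime to `θ ^ q - θ` on the curve `g = 0`. -/
lemma prod_pow_dvd_of_pow_mul_eq [Fintype K] [DecidableEq K] (hg : g.aevalAeval y θ = 0) {c : K}
    (hc : ∀ a ≠ c, ∀ b : K, g.aevalAeval a b ≠ 0) {M : ℕ} {s r : R}
    (hs : (θ ^ Fintype.card K - θ) ^ M * s = (y ^ Fintype.card K - y) ^ M * r) :
    (∏ a ∈ Finset.univ.erase c, (y - algebraMap K R a)) ^ M ∣ s := by
  have hcop : IsCoprime ((∏ a ∈ Finset.univ.erase c, (y - algebraMap K R a)) ^ M)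
      ((θ ^ Fintype.card K - θ) ^ M) := by
    rw [← prod_sub_algebraMap_eq_pow_card_sub θ]
    exact (IsCoprime.prod_left fun a ha => IsCoprime.prod_right fun b _ =>
      isCoprime_sub_of_aevalAeval_ne_zero hg (hc a (Finset.ne_of_mem_erase ha) b)).pow
  refine hcop.dvd_of_dvd_mul_left ?_
  rw [hs, ← prod_sub_algebraMap_eq_pow_card_sub (K := K) y,
    ← Finset.prod_erase_mul _ _ (Finset.mem_univ c), mul_pow, mul_assoc]
  exact dvd_mul_right _ _

end Divisibility

section Stepanov

open scoped Polynomial Polynomial.Bivariate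

variable {L Λ : Type*} [Field L] [Field Λ] [Algebra L Λ]

lemma aevalAeval_mem_range_polyCombination {g : L[X][Y]} {y θ : Λ} (h0 : g.aevalAeval y θ = 0)
    (hg : g.Monic) (r : L[X][Y]) : ∃ p : Fin g.natDegree → L[X],
      r.aevalAeval y θ = ∑ k, Polynomial.aeval y (p k) * θ ^ (k : ℕ) := by
  refine ⟨fun k => (r %ₘ g).coeff k, ?_⟩
  have hr := congrArg (Polynomial.aevalAeval y θ) (r.modByMonic_add_div g)
  rw [map_add, map_mul, h0, zero_mul, add_zero] at hr
  rw [← hr]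
  conv_lhs => rw [← Polynomial.sum_modByMonic_coeff hg Polynomial.degree_le_natDegree]
  simp only [map_sum, ← Polynomial.C_mul_X_pow_eq_monomial, map_mul, map_pow,
    Polynomial.aevalAeval_C, Polynomial.aevalAeval_Y]

lemma IsGenericZero.eq_zero_of_eq_aeval_mul {g : L[X][Y]} {ω N : ℕ} {y θ s t : Λ}
    (h : IsGenericZero g y θ) (hg : IsWeightedMonic g ω)
    (hs : s ∈ pointSpan L ω y θ N) {E : L[X]} (hE : E.Monic) (hN : N < E.natDegree)
    (ht : t ∈ (Polynomial.aevalAeval (R := L) y θ).range) (heq : s = Polynomial.aeval y E * t) :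
    s = 0 := by
  obtain ⟨r, rfl⟩ := ht
  obtain ⟨t, ht⟩ := aevalAeval_mem_range_polyCombination h.aevalAeval_eq_zero hg.monic r
  rw [pointSpan_eq_range_polyCombination hg h.aevalAeval_eq_zero] at hs
  obtain ⟨p, rfl⟩ := hs
  have hsub := h.eq_zero_of_sum_eq_zero hg.monic (p := fun k => (p k : L[X]) - E * t k) (by
    rw [polyCombination_apply] at heq
    simp only [map_sub, map_mul, sub_mul, Finset.sum_sub_distrib, heq, sub_eq_zero, mul_assoc]
    rw [← Finset.mul_sum, ← ht]
    rfl)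
  have ht0 : ∀ k, t k = 0 := fun k => by
    by_contra h0
    have hpk : (p k : L[X]) = E * t k := sub_eq_zero.1 (congrFun hsub k)
    have hdeg := Polynomial.mem_degreeLT.1 (p k).2
    rw [← Polynomial.natDegree_lt_iff_degree_lt (hpk ▸ mul_ne_zero hE.ne_zero h0), hpk,
      hE.natDegree_mul' h0] at hdeg
    omega
  rw [heq]
  exact mul_eq_zero_of_right _ (ht.trans (Finset.sum_eq_zero fun k _ => by simp [ht0]))

/-- The auxiliary function of Stepanov's method: a nonzero `s` of small weight for which
`((θ ^ q - θ) / (y ^ q - y)) ^ M * s` has no poles on the affine curve. -/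
lemma exists_auxiliary_function {g : L[X][Y]} {w M a p h : ℕ} {y θ : Λ}
    (hg : IsWeightedMonic g (w + 1)) (hn : 2 ≤ g.natDegree) (hgen : IsGenericZero g y θ)
    {v : AddValuation Λ (WithTop ℤ)} (hv : IsRationalPlace L v)
    [ExpChar Λ p] [ExpChar L p] [PerfectRing L p]
    (hspread : ∀ s ∈ pointSpan L (w + 1) y θ a, s ≠ 0 → ∀ t ∈ pointSpan L (w + 1) y θ a,
      v s < v t + (p ^ h : ℕ))
    (h0 : g.aevalAeval (y ^ p ^ h) (θ ^ p ^ h) = 0) (hy : y ≠ y ^ p ^ h) (hθ : θ ≠ θ ^ p ^ h)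
    (hM : M = (w + 1) * (g.natDegree * (g.natDegree - 1)))
    (ha : a = (w + 2) * (g.natDegree - 1) * M) :
    ∃ s ∈ pointSpan L (w + 1) y θ (a + p ^ h * (M - 1)), s ≠ 0 ∧
      ∃ r ∈ (Polynomial.aevalAeval (R := L) y θ).range,
        (θ ^ p ^ h - θ) ^ M * s = (y ^ p ^ h - y) ^ M * r := by
  have hM1 : M - 1 + 1 = M := Nat.sub_add_cancel (hM ▸ Nat.mul_pos w.succ_pos
    (Nat.mul_pos (by omega) (Nat.sub_pos_of_lt hn)))
  have hfin := finite_pointSpan hg hgen.aevalAeval_eq_zero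
  set V := mulPowSpan (pointSpan L (w + 1) y θ a) (pointSpan L (w + 1) y θ (M - 1)) (p ^ h)
  have hVle : V ≤ pointSpan L (w + 1) y θ (a + p ^ h * (M - 1)) :=
    mulPowSpan_pointSpan_le_pointSpan (p ^ h)
  have : Module.Finite L V := Submodule.finiteDimensional_of_le hVle
  have hrank := hv.finrank_mul_finrank_le (B := pointSpan L (w + 1) y θ (M - 1)) hspread
  rw [finrank_pointSpan hg hgen, finrank_pointSpan hg hgen, hM1] at hrank
  obtain ⟨s, hsV, hs0, hr⟩ := exists_pow_mul_mem_of_sum_finrank_lt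
    (C := crossSpan L g.natDegree (w + 1) y θ (θ ^ p ^ h))
    (div_ne_zero (sub_ne_zero.2 hθ) (sub_ne_zero.2 hy))
    (hg.pairSpan_le_quotientSpan_sup_crossSpan (by omega) hgen.aevalAeval_eq_zero h0 hy) M
    (a + (M - 1)) V (mulPowSpan_pointSpan_le_pairSpan h) <| by
      refine lt_of_le_of_lt (Finset.sum_le_sum fun i _ => ?_)
        ((sum_tsub_lt_mul hn hM ha).trans_le hrank)
      rw [show a + M + i * w = a + (M - 1) + i * w + 1 by omega]
      exact finrank_range_polyCombination_le
  refine ⟨s, hVle hsV, hs0, _, weightSpan_le_toSubmodule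
    (A := (Polynomial.aevalAeval (R := L) y θ).range) (fun i => ?_) hr, ?_⟩
  · have hyA : y ∈ (Polynomial.aevalAeval (R := L) y θ).range :=
      ⟨Polynomial.C Polynomial.X, by simp⟩
    have hθA : θ ∈ (Polynomial.aevalAeval (R := L) y θ).range := ⟨Polynomial.X, by simp⟩
    fin_cases i
    exacts [hyA, hθA, pow_mem hyA _, pow_mem hθA _]
  · rw [← mul_assoc, ← mul_pow, ← neg_sub y, neg_mul, mul_div_cancel₀ _ (sub_ne_zero.2 hy), neg_sub]

end Stepanov

section RationalZero

open scoped Polynomial Polynomial.Bivariate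

variable {K L Λ : Type*} [Field K] [Field L] [Field Λ] [Algebra K L] [Algebra L Λ]
  [Algebra K Λ] [IsScalarTower K L Λ] {g : K[X][Y]} {y θ : Λ}

lemma aevalAeval_map_algebraMap (g : K[X][Y]) (y θ : Λ) :
    (g.map (Polynomial.mapRingHom (algebraMap K L))).aevalAeval y θ = g.aevalAeval y θ := by
  rw [aevalAeval_eq_sum_range, aevalAeval_eq_sum_range, Polynomial.natDegree_map_eq_of_injective
    (Polynomial.map_injective _ (algebraMap K L).injective)]
  simp

variable [Fintype K]

lemma IsGenericZero.eq_zero_of_pow_mul_eq {ω N M : ℕ} {s r : Λ} (hg : IsWeightedMonic g ω)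
    (hgen : IsGenericZero (g.map (Polynomial.mapRingHom (algebraMap K L))) y θ) {c : K}
    (hc : ∀ a ≠ c, ∀ b : K, g.aevalAeval a b ≠ 0) (hs : s ∈ pointSpan L ω y θ N)
    (hN : N < M * (Fintype.card K - 1)) (hr : r ∈ (Polynomial.aevalAeval (R := L) y θ).range)
    (hsr : (θ ^ Fintype.card K - θ) ^ M * s = (y ^ Fintype.card K - y) ^ M * r) : s = 0 := by
  classical
  set A := (Polynomial.aevalAeval (R := L) y θ).range
  have hy : y ∈ A := ⟨Polynomial.C Polynomial.X, by simp⟩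
  have hθ : θ ∈ A := ⟨Polynomial.X, by simp⟩
  have hsA : s ∈ A := weightSpan_le_toSubmodule (A := A) (by simpa [Fin.forall_fin_two] using
    ⟨hy, hθ⟩) hs
  have h0 : g.aevalAeval (⟨y, hy⟩ : A) ⟨θ, hθ⟩ = 0 := by
    apply Subtype.val_injective
    exact (map_aevalAeval (A.val.restrictScalars K) _ _ g).trans
      (aevalAeval_map_algebraMap (L := L) g y θ ▸ hgen.aevalAeval_eq_zero)
  obtain ⟨t, ht⟩ := prod_pow_dvd_of_pow_mul_eq (s := ⟨s, hsA⟩) (r := ⟨r, hr⟩) h0 hc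
    (Subtype.ext hsr)
  have hmonic (a : K) (_ : a ∈ Finset.univ.erase c) :=
    Polynomial.monic_X_sub_C (algebraMap K L a)
  refine hgen.eq_zero_of_eq_aeval_mul (hg.map _) hs
    (E := (∏ a ∈ Finset.univ.erase c, (Polynomial.X - Polynomial.C (algebraMap K L a))) ^ M)
    ((Polynomial.monic_prod_of_monic _ _ hmonic).pow M) ?_ t.2 ?_
  · rw [(Polynomial.monic_prod_of_monic _ _ hmonic).natDegree_pow,
      Polynomial.natDegree_prod_of_monic _ _ hmonic]
    simpa [Finset.card_erase_of_mem] using hN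
  · have hval := congrArg A.val ht
    simpa [map_prod, ← IsScalarTower.algebraMap_apply K L Λ] using hval

lemma add_mul_sub_one_lt {n a M q : ℕ} (hn : 2 ≤ n) (hM : 1 ≤ M) (hMa : M ≤ a) (hna : n * a < q) :
    a + q * (M - 1) < M * (q - 1) := by
  obtain ⟨m, rfl⟩ := Nat.exists_eq_add_of_le' hM
  obtain ⟨r, rfl⟩ := Nat.exists_eq_add_of_le' (Nat.one_le_of_lt hna)
  have h2a : 2 * a ≤ n * a := Nat.mul_le_mul_right a hn
  simp only [Nat.add_sub_cancel]
  linarith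

lemma IsGenericZero.ne_pow_card (hg : g.Monic) (hn : 2 ≤ g.natDegree)
    (hgen : IsGenericZero (g.map (Polynomial.mapRingHom (algebraMap K L))) y θ) :
    y ≠ y ^ Fintype.card K ∧ θ ≠ θ ^ Fintype.card K := by
  have hnL : (g.map (Polynomial.mapRingHom (algebraMap K L))).natDegree = g.natDegree :=
    hg.natDegree_map _
  have hfixed (z : Λ) (hz : z = z ^ Fintype.card K) : ∃ c : L, z - algebraMap L Λ c = 0 := by
    obtain ⟨c, rfl⟩ := exists_algebraMap_eq_of_pow_card_eq (K := K) hz.symm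
    exact ⟨algebraMap K L c, by rw [← IsScalarTower.algebraMap_apply, sub_self]⟩
  have hlt (r : L[X][Y]) (hr : r ≠ 0) (hdeg : r.natDegree ≤ 1) : r.aevalAeval y θ ≠ 0 := by
    intro h0
    have hle := Polynomial.natDegree_le_of_dvd ((hgen r).1 h0) hr
    omega
  constructor <;> intro h <;> obtain ⟨c, hc⟩ := hfixed _ h
  · exact hlt (Polynomial.C (Polynomial.X - Polynomial.C c))
      (Polynomial.C_ne_zero.2 (Polynomial.X_sub_C_ne_zero c)) (by simp) (by simpa using hc)
  · exact hlt (Polynomial.X - Polynomial.C (Polynomial.C c)) (Polynomial.X_sub_C_ne_zero _)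
      (by simp) (by simpa using hc)

theorem exists_aevalAeval_eq_zero_of_isRationalPlace [PerfectField L] {w : ℕ}
    (hg : IsWeightedMonic g (w + 1)) (hn : 2 ≤ g.natDegree)
    (hgen : IsGenericZero (g.map (Polynomial.mapRingHom (algebraMap K L))) y θ)
    {v : AddValuation Λ (WithTop ℤ)} (hv : IsRationalPlace L v)
    (hspread : ∀ a, ∀ s ∈ pointSpan L (w + 1) y θ a, s ≠ 0 → ∀ t ∈ pointSpan L (w + 1) y θ a,
      v s ≤ v t + (g.natDegree * a : ℕ))
    (hq : (w + 1) * (w + 2) * (g.natDegree ^ 2 * (g.natDegree - 1) ^ 2) < Fintype.card K) (c : K) :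
    ∃ y₀ : K, y₀ ≠ c ∧ ∃ u₀ : K, g.aevalAeval y₀ u₀ = 0 := by
  by_contra! hcon
  obtain ⟨p, _⟩ := CharP.exists K
  obtain ⟨h, hp, hcard⟩ := FiniteField.card K p
  have := Fact.mk hp
  have : CharP L p := charP_of_injective_algebraMap (algebraMap K L).injective p
  have : CharP Λ p := charP_of_injective_algebraMap (algebraMap K Λ).injective p
  set n := g.natDegree
  have hnL : (g.map (Polynomial.mapRingHom (algebraMap K L))).natDegree = n :=
    hg.monic.natDegree_map _
  obtain ⟨M, hM⟩ : ∃ M, M = (w + 1) * (n * (n - 1)) := ⟨_, rfl⟩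
  obtain ⟨a, ha⟩ : ∃ a, a = (w + 2) * (n - 1) * M := ⟨_, rfl⟩
  have hna : n * a < Fintype.card K := by
    rw [ha, hM]
    linarith
  have hstrict : ∀ s ∈ pointSpan L (w + 1) y θ a, s ≠ 0 → ∀ t ∈ pointSpan L (w + 1) y θ a,
      v s < v t + (p ^ (h : ℕ) : ℕ) := fun s hs hs0 t ht => by
    rcases eq_or_ne (v t) ⊤ with htop | htop
    · rw [htop, top_add]
      exact lt_top_iff_ne_top.2 fun hs => hs0 (v.top_iff.1 hs)
    · exact (hspread a s hs hs0 t ht).trans_lt (WithTop.add_lt_add_left htop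
        (by exact_mod_cast hcard ▸ hna))
  have h0 : g.aevalAeval (y ^ Fintype.card K) (θ ^ Fintype.card K) = 0 := by
    have h0 := aevalAeval_map_algebraMap (L := L) g y θ ▸ hgen.aevalAeval_eq_zero
    simpa [h0] using (map_aevalAeval (FiniteField.frobeniusAlgHom K Λ) y θ g).symm
  obtain ⟨hy, hθ⟩ := hgen.ne_pow_card hg.monic hn
  rw [hcard] at hy hθ h0 hna
  obtain ⟨s, hs, hs0, r, hr, hsr⟩ := exists_auxiliary_function (hg.map (algebraMap K L))
    (hnL ▸ hn) hgen hv hstrict (by rwa [aevalAeval_map_algebraMap]) hy hθ (hnL ▸ hM) (hnL ▸ ha)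
  refine hs0 (hgen.eq_zero_of_pow_mul_eq hg hcon hs ?_ hr (hcard ▸ hsr))
  have hn1 : 0 < n - 1 := Nat.sub_pos_of_lt hn
  rw [hcard]
  exact add_mul_sub_one_lt hn
    (by rw [hM]; exact Nat.mul_pos w.succ_pos (Nat.mul_pos (by omega) hn1))
    (by rw [ha]; exact Nat.le_mul_of_pos_left M (by positivity)) hna

end RationalZero

/-! ### Places of the field of Laurent series -/

section FixedPoint

lemma exists_eq_add_mul_eval {R : Type*} [CommRing R] (I : Ideal R) [IsAdicComplete I R] {ϖ : R}
    (hϖ : ϖ ∈ I) (A : R) (P : Polynomial R) : ∃ s, s = A + ϖ * P.eval s := by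
  set T : R → R := fun s => A + ϖ * P.eval s
  have hT : ∀ {n s t}, s - t ∈ I ^ n → T s - T t ∈ I ^ (n + 1) := fun {n s t} hst => by
    rw [show T s - T t = ϖ * (P.eval s - P.eval t) by simp only [T]; ring, pow_succ']
    exact Ideal.mul_mem_mul hϖ (Ideal.mem_of_dvd _ (Polynomial.sub_dvd_eval_sub _ _ _) hst)
  have hstep : ∀ n, T^[n + 1] 0 - T^[n] 0 ∈ I ^ n := fun n => by
    induction n with
    | zero => simp
    | succ n ih =>
      rw [Function.iterate_succ_apply' T (n + 1), Function.iterate_succ_apply' T n] at *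
      exact hT ih
  have hfar : ∀ {m n}, m ≤ n → T^[m] 0 - T^[n] 0 ∈ I ^ m := fun {m n} hmn => by
    induction n, hmn using Nat.le_induction with
    | base => simp
    | succ n hmn ih =>
      rw [← sub_sub_sub_cancel_right _ _ (T^[n] 0)]
      exact sub_mem ih (Ideal.pow_le_pow_right hmn (hstep n))
  obtain ⟨s, hs⟩ := IsPrecomplete.prec (I := I) (M := R) inferInstance (f := fun n => T^[n] 0)
    fun hmn => SModEq.sub_mem.2 (by simpa using hfar hmn)
  refine ⟨s, sub_eq_zero.1 (IsHausdorff.haus (I := I) inferInstance _ fun n => ?_)⟩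
  have hlim : ∀ n, T^[n] 0 - s ∈ I ^ n := fun n => by simpa using SModEq.sub_mem.1 (hs n)
  rw [SModEq.zero, smul_eq_mul, Ideal.mul_top, ← sub_sub_sub_cancel_left _ _ (T^[n + 1] 0)]
  refine Ideal.pow_le_pow_right n.le_succ (sub_mem ?_ (hlim (n + 1)))
  rw [Function.iterate_succ_apply']
  exact hT (hlim n)

lemma exists_mul_add_add_mul_eval_eq_zero {R : Type*} [CommRing R] (I : Ideal R)
    [IsAdicComplete I R] {ϖ ρ : R} (hϖ : ϖ ∈ I) (hρ : IsUnit ρ) (A : R) (P : Polynomial R) :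
    ∃ s, ρ * s + A + ϖ * P.eval s = 0 := by
  obtain ⟨σ, hσ⟩ := hρ.exists_left_inv
  obtain ⟨s, hs⟩ := exists_eq_add_mul_eval I hϖ (-σ * A) (Polynomial.C (-σ) * P)
  rw [Polynomial.eval_C_mul] at hs
  exact ⟨s, by linear_combination ρ * hs - (A + ϖ * P.eval s) * hσ⟩

end FixedPoint

section LaurentPlace

open HahnSeries

variable {L : Type*} [Field L]

lemma algebraMap_laurentSeries (c : L) : algebraMap L (LaurentSeries L) c = HahnSeries.C c :=
  ofPowerSeries_C c

instance isScalarTower_laurentSeries {K : Type*} [Field K] [Algebra K L] :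
    @IsScalarTower K L (LaurentSeries L) _ Algebra.toSMul Algebra.toSMul :=
  .of_algebraMap_eq fun c => by
    rw [HahnSeries.algebraMap_apply', HahnSeries.algebraMap_apply', PowerSeries.algebraMap_apply,
      PowerSeries.algebraMap_apply, Algebra.algebraMap_self_apply]

lemma coeff_algebraMap_mul_laurentSeries (c : L) (x : LaurentSeries L) (k : ℤ) :
    (algebraMap L (LaurentSeries L) c * x).coeff k = c * x.coeff k := by
  rw [algebraMap_laurentSeries, C_mul_eq_smul, HahnSeries.coeff_smul, smul_eq_mul]

lemma isRationalPlace_addVal : IsRationalPlace L (addVal ℤ L) where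
  map_algebraMap_nonneg c := by
    rw [addVal_apply, algebraMap_laurentSeries]
    exact orderTop_single_le
  exists_lt_sub {x z} hz h := by
    obtain ⟨m, hm⟩ := WithTop.ne_top_iff_exists.1 (orderTop_ne_top.2 hz)
    rw [addVal_apply, addVal_apply, ← hm] at h
    refine ⟨x.coeff m / z.coeff m, ?_⟩
    rw [addVal_apply, addVal_apply, ← hm]
    refine lt_of_lt_of_le (WithTop.coe_lt_coe.2 (Int.lt_succ m))
      (le_orderTop_iff_forall.2 fun k hk => ?_)
    rw [HahnSeries.coeff_sub, Algebra.smul_def, coeff_algebraMap_mul_laurentSeries]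
    rcases (Int.lt_add_one_iff.1 (WithTop.coe_lt_coe.1 hk)).lt_or_eq with hkm | rfl
    · have hkm' : (k : WithTop ℤ) < m := WithTop.coe_lt_coe.2 hkm
      rw [coeff_eq_zero_of_lt_orderTop (hkm'.trans_le h),
        coeff_eq_zero_of_lt_orderTop (hkm'.trans_eq hm), mul_zero, sub_zero]
    · rw [div_mul_cancel₀ _ (coeff_orderTop_ne hm.symm), sub_self]

lemma aeval_ofPowerSeries (s : PowerSeries L) (P : Polynomial L) :
    Polynomial.aeval (ofPowerSeries ℤ L s) P = ofPowerSeries ℤ L (Polynomial.aeval s P) := by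
  rw [Polynomial.aeval_def, Polynomial.aeval_def, Polynomial.hom_eval₂]
  congr 1

lemma single_neg_one_mul_ofPowerSeries_X :
    (single (-1) 1 : LaurentSeries L) * ofPowerSeries ℤ L PowerSeries.X = 1 := by
  rw [ofPowerSeries_X, single_mul_single, neg_add_cancel, mul_one, single_zero_one]

lemma aeval_single_neg_one (P : Polynomial L) :
    Polynomial.aeval (single (-1) 1 : LaurentSeries L) P =
      ofPowerSeries ℤ L P.reverse * single (-1) 1 ^ P.natDegree := by
  let _ : Invertible (single (-1) 1 : LaurentSeries L) :=
    ⟨_, mul_comm (single (-1) (1 : L)) _ ▸ single_neg_one_mul_ofPowerSeries_X,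
      single_neg_one_mul_ofPowerSeries_X⟩
  have h := Polynomial.eval₂_reverse_mul_pow (algebraMap L (LaurentSeries L)) (single (-1) 1) P
  rw [invOf_eq_right_inv single_neg_one_mul_ofPowerSeries_X, ← Polynomial.aeval_def,
    aeval_ofPowerSeries, ← Polynomial.aeval_def] at h
  rw [← h, Polynomial.aeval_def, PowerSeries.algebraMap_eq, Polynomial.eval₂_C_X_eq_coe]

lemma zero_le_addVal_ofPowerSeries (s : PowerSeries L) :
    0 ≤ addVal ℤ L (ofPowerSeries ℤ L s) := by
  refine le_orderTop_iff_forall.2 fun k hk => ?_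
  rw [PowerSeries.coeff_coe, if_pos (WithTop.coe_lt_coe.1 hk)]

lemma addVal_aeval_single_neg_one_le {P : Polynomial L} (hP : P ≠ 0) :
    addVal ℤ L (Polynomial.aeval (single (-1) 1 : LaurentSeries L) P) ≤ (-P.natDegree : ℤ) := by
  have hpow (k : ℕ) : (single (-1) 1 : LaurentSeries L) ^ k = single (-k : ℤ) 1 := by
    rw [single_pow, one_pow, nsmul_eq_mul, mul_neg_one]
  apply addVal_le_of_coeff_ne_zero
  rw [Polynomial.aeval_eq_sum_range, HahnSeries.coeff_sum,
    Finset.sum_eq_single P.natDegree]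
  · rw [Algebra.smul_def, coeff_algebraMap_mul_laurentSeries, hpow,
      coeff_single_same, mul_one]
    exact Polynomial.leadingCoeff_ne_zero.2 hP
  · intro k _ hk
    rw [Algebra.smul_def, coeff_algebraMap_mul_laurentSeries, hpow,
      coeff_single_of_ne (by omega), mul_zero]
  · exact fun h => absurd (Finset.self_mem_range_succ _) h

lemma aeval_ofPowerSeries_C_add_X (c : L) (P : Polynomial L) :
    Polynomial.aeval (ofPowerSeries ℤ L (PowerSeries.C c + PowerSeries.X)) P =
      ofPowerSeries ℤ L (Polynomial.taylor c P) := by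
  induction P using Polynomial.induction_on' with
  | add P Q hP hQ => rw [map_add (Polynomial.aeval _), map_add (Polynomial.taylor c), hP, hQ,
    Polynomial.coe_add, map_add]
  | monomial k a =>
    simp only [Polynomial.aeval_monomial, Polynomial.taylor_monomial, Polynomial.coe_mul,
      Polynomial.coe_pow, Polynomial.coe_add, Polynomial.coe_X, Polynomial.coe_C, map_mul,
      map_pow, map_add, ofPowerSeries_C, algebraMap_laurentSeries, add_comm]

lemma addVal_aeval_C_add_X_le (c : L) {P : Polynomial L} (hP : P ≠ 0) :
    addVal ℤ L (Polynomial.aeval (ofPowerSeries ℤ L (PowerSeries.C c + PowerSeries.X)) P) ≤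
      (P.natDegree : ℤ) := by
  apply addVal_le_of_coeff_ne_zero
  rw [aeval_ofPowerSeries_C_add_X, ofPowerSeries_apply_coeff, Polynomial.coeff_coe,
    Polynomial.coeff_taylor_natDegree]
  exact Polynomial.leadingCoeff_ne_zero.2 hP

end LaurentPlace

/-! ### Monic factors and places at infinity -/

section WeightedDegree

open scoped Polynomial Polynomial.Bivariate

variable {R : Type*} [CommRing R]

/-- The substitution `X ↦ Z`, `Y ↦ V Z ^ ω` from `R[X][Y]` to `R[V][Z]`. The degree in `Z` of the
image is the weighted degree for which `X` has weight `1` and `Y` has weight `ω`. -/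
noncomputable def weightHom (R : Type*) [CommRing R] (ω : ℕ) : R[X][Y] →+* R[X][Y] :=
  Polynomial.eval₂RingHom (Polynomial.mapRingHom Polynomial.C)
    (Polynomial.C Polynomial.X * Polynomial.X ^ ω)

lemma coeff_coeff_weightHom (ω : ℕ) (P : R[X][Y]) (m k : ℕ) :
    ((weightHom R ω P).coeff m).coeff k =
      if ω * k ≤ m then (P.coeff k).coeff (m - ω * k) else 0 := by
  induction P using Polynomial.induction_on' with
  | add p r hp hr =>
    rw [map_add, Polynomial.coeff_add, Polynomial.coeff_add, hp, hr, Polynomial.coeff_add,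
      Polynomial.coeff_add, ite_add_ite, add_zero]
  | monomial j a =>
    have himage : weightHom R ω (Polynomial.monomial j a) =
        Polynomial.map Polynomial.C a * Polynomial.C (Polynomial.X ^ j) *
          Polynomial.X ^ (ω * j) := by
      simp only [weightHom, Polynomial.coe_eval₂RingHom, Polynomial.eval₂_monomial, mul_pow,
        ← pow_mul, Polynomial.coe_mapRingHom, map_pow, mul_assoc]
    rw [himage, Polynomial.coeff_mul_X_pow', apply_ite (Polynomial.coeff · k),
      Polynomial.coeff_mul_C, Polynomial.coeff_map, Polynomial.coeff_C_mul, Polynomial.coeff_X_pow,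
      Polynomial.coeff_monomial]
    rcases eq_or_ne j k with rfl | hjk
    · simp
    · simp [hjk, hjk.symm]

lemma natDegree_weightHom_le_iff {ω : ℕ} {P : R[X][Y]} {N : ℕ} :
    (weightHom R ω P).natDegree ≤ N ↔ ∀ k i, N < i + ω * k → (P.coeff k).coeff i = 0 := by
  rw [Polynomial.natDegree_le_iff_coeff_eq_zero]
  constructor
  · intro h k i hik
    simpa [coeff_coeff_weightHom] using congrArg (Polynomial.coeff · k) (h (i + ω * k) hik)
  · intro h m hm
    ext k
    rw [coeff_coeff_weightHom, Polynomial.coeff_zero]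
    exact ite_eq_right_iff.2 fun hk => h _ _ (by omega)

lemma isWeightedMonic_iff {ω : ℕ} {P : R[X][Y]} : IsWeightedMonic P ω ↔
    P.Monic ∧ (weightHom R ω P).natDegree ≤ ω * P.natDegree := by
  rw [natDegree_weightHom_le_iff]
  refine ⟨fun h => ⟨h.monic, fun k i hik => ?_⟩, fun h => ⟨h.1, fun k => ?_⟩⟩
  · rcases le_or_gt k P.natDegree with hk | hk
    · obtain ⟨e, he⟩ := Nat.exists_eq_add_of_le hk
      have hdeg := h.natDegree_coeff_le k
      rw [he, Nat.add_sub_cancel_left] at hdeg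
      rw [he, mul_add] at hik
      exact Polynomial.coeff_eq_zero_of_natDegree_lt (by omega)
    · rw [Polynomial.coeff_eq_zero_of_natDegree_lt hk, Polynomial.coeff_zero]
  · rcases le_or_gt k P.natDegree with hk | hk
    · obtain ⟨e, he⟩ := Nat.exists_eq_add_of_le hk
      refine Polynomial.natDegree_le_iff_coeff_eq_zero.2 fun i hi => h.2 k i ?_
      rw [he, Nat.add_sub_cancel_left] at hi
      rw [he, mul_add]
      omega
    · rw [Polynomial.coeff_eq_zero_of_natDegree_lt hk, Polynomial.natDegree_zero]
      exact Nat.zero_le _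

variable [IsDomain R]

lemma mul_natDegree_le_natDegree_weightHom (ω : ℕ) {P : R[X][Y]} (hP : P.Monic) :
    ω * P.natDegree ≤ (weightHom R ω P).natDegree := by
  by_contra! h
  have hcoeff := natDegree_weightHom_le_iff.1 (le_refl (weightHom R ω P).natDegree)
    P.natDegree 0 (by omega)
  rw [hP.coeff_natDegree, Polynomial.coeff_one_zero] at hcoeff
  exact one_ne_zero hcoeff

lemma weightHom_ne_zero (ω : ℕ) {P : R[X][Y]} (hP : P.Monic) : weightHom R ω P ≠ 0 := by
  intro h
  have hcoeff := coeff_coeff_weightHom ω P (ω * P.natDegree) P.natDegree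
  rw [h, if_pos le_rfl, hP.coeff_natDegree, Nat.sub_self, Polynomial.coeff_one_zero] at hcoeff
  exact zero_ne_one hcoeff

lemma IsWeightedMonic.of_dvd {ω : ℕ} {g P : R[X][Y]} (hP : IsWeightedMonic P ω) (hg : g.Monic)
    (hgP : g ∣ P) : IsWeightedMonic g ω := by
  obtain ⟨r, rfl⟩ := hgP
  have hr : r.Monic := hg.of_mul_monic_left hP.monic
  have hdeg := (isWeightedMonic_iff.1 hP).2
  rw [map_mul, Polynomial.natDegree_mul (weightHom_ne_zero ω hg) (weightHom_ne_zero ω hr),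
    hg.natDegree_mul hr, mul_add] at hdeg
  have hr_deg := mul_natDegree_le_natDegree_weightHom ω hr
  exact isWeightedMonic_iff.2 ⟨hg, by omega⟩

end WeightedDegree

section PlaceAtInfinity

open scoped Polynomial Polynomial.Bivariate

lemma exists_monic_dvd_isGenericZero {L Λ : Type*} [Field L] [Field Λ] [Algebra L Λ] {y θ : Λ}
    (hy : Function.Injective (Polynomial.aeval (R := L) y)) {P : L[X][Y]} (hP : P.Monic)
    (hPθ : P.aevalAeval y θ = 0) :
    ∃ g : L[X][Y], g.Monic ∧ g ∣ P ∧ 1 ≤ g.natDegree ∧ IsGenericZero g y θ := by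
  let _ : Algebra L[X] Λ := (Polynomial.aeval (R := L) y).toRingHom.toAlgebra
  have : FaithfulSMul L[X] Λ := (faithfulSMul_iff_algebraMap_injective _ _).2 hy
  have heval : ∀ r : L[X][Y], r.aevalAeval y θ = Polynomial.aeval θ r := fun r => by
    rw [aevalAeval_eq_sum_range, Polynomial.aeval_eq_sum_range]
    exact Finset.sum_congr rfl fun k _ => (Algebra.smul_def (r.coeff k) (θ ^ k)).symm
  have hint : IsIntegral L[X] θ := ⟨P, hP, (heval P).symm.trans hPθ⟩
  have hgen : IsGenericZero (minpoly L[X] θ) y θ := fun r => by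
    rw [heval, minpoly.isIntegrallyClosed_dvd_iff hint]
  exact ⟨_, minpoly.monic hint, (hgen P).1 hPθ, minpoly.natDegree_pos hint, hgen⟩

variable {K : Type*} [Field K]

lemma exists_aevalAeval_eq_zero_of_natDegree_eq_one {g : K[X][Y]} (hg : g.Monic)
    (hn : g.natDegree = 1) (y₀ : K) : ∃ u₀ : K, g.aevalAeval y₀ u₀ = 0 := by
  refine ⟨-Polynomial.aeval y₀ (g.coeff 0), ?_⟩
  have hlead : g.coeff 1 = 1 := hn ▸ hg.coeff_natDegree
  rw [aevalAeval_eq_sum_range, hn, Finset.sum_range_succ, Finset.sum_range_one, hlead, map_one,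
    pow_zero, pow_one, mul_one, one_mul, add_neg_cancel]

lemma aeval_single_neg_one_injective :
    Function.Injective
      (Polynomial.aeval (R := K) (HahnSeries.single (-1) 1 : LaurentSeries K)) := by
  rw [injective_iff_map_eq_zero]
  intro r hr
  by_contra hr0
  have h := addVal_aeval_single_neg_one_le hr0
  rw [hr, AddValuation.map_zero, top_le_iff] at h
  exact WithTop.coe_ne_top h

variable [Fintype K]

lemma exists_aevalAeval_eq_zero_of_place_at_infinity {P : K[X][Y]} (hP : IsWeightedMonic P 1)
    {θ : PowerSeries K}
    (hθ : P.aevalAeval (HahnSeries.single (-1) 1 : LaurentSeries K)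
      (HahnSeries.ofPowerSeries ℤ K θ) = 0)
    (hq : 2 * (P.natDegree ^ 2 * (P.natDegree - 1) ^ 2) < Fintype.card K) (c : K) :
    ∃ y₀ : K, y₀ ≠ c ∧ ∃ u₀ : K, P.aevalAeval y₀ u₀ = 0 := by
  obtain ⟨g, hg, hgP, hg1, hgen⟩ :=
    exists_monic_dvd_isGenericZero aeval_single_neg_one_injective hP.monic hθ
  suffices ∃ y₀ : K, y₀ ≠ c ∧ ∃ u₀ : K, g.aevalAeval y₀ u₀ = 0 by
    obtain ⟨y₀, hy₀, u₀, hu₀⟩ := this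
    exact ⟨y₀, hy₀, u₀, zero_dvd_iff.1 (hu₀ ▸ map_dvd (Polynomial.aevalAeval y₀ u₀) hgP)⟩
  rcases hg1.eq_or_lt with hg1 | hg2
  · obtain ⟨y₀, hy₀⟩ := exists_ne c
    exact ⟨y₀, hy₀, exists_aevalAeval_eq_zero_of_natDegree_eq_one hg hg1.symm y₀⟩
  have hgw : IsWeightedMonic g 1 := hP.of_dvd hg hgP
  have hle : g.natDegree ≤ P.natDegree := Polynomial.natDegree_le_of_dvd hgP hP.monic.ne_zero
  have hy : ((-1 : ℤ) : WithTop ℤ) ≤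
      HahnSeries.addVal ℤ K (HahnSeries.single (-1) 1 : LaurentSeries K) := by
    rw [HahnSeries.addVal_apply, HahnSeries.orderTop_single one_ne_zero]
  refine exists_aevalAeval_eq_zero_of_isRationalPlace (w := 0) hgw hg2
    (y := HahnSeries.single (-1) 1) (θ := HahnSeries.ofPowerSeries ℤ K θ)
    (v := HahnSeries.addVal ℤ K) ?_ isRationalPlace_addVal
    (fun a s hs hs0 t ht => isRationalPlace_addVal.map_le_map_add_of_mem_pointSpan hgw hg1 hgen
      le_rfl hy ?_ ?_ hs hs0 ht) ?_ c
  · simpa using hgen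
  · exact (WithTop.coe_le_coe.2 (by norm_num)).trans (zero_le_addVal_ofPowerSeries θ)
  · intro r hr
    exact (addVal_aeval_single_neg_one_le hr).trans (WithTop.coe_le_coe.2 (by simp))
  · have hsub : g.natDegree - 1 ≤ P.natDegree - 1 := Nat.sub_le_sub_right hle 1
    refine lt_of_le_of_lt ?_ hq
    simp only [zero_add, one_mul]
    gcongr

end PlaceAtInfinity

/-! ### The fibre of an ovoid over a point -/

section ConstantLeadingTerm

open scoped Polynomial Polynomial.Bivariate

lemma isWeightedMonic_map_C {R : Type*} [CommRing R] [Nontrivial R] {m : R[X]} (hm : m.Monic)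
    (ω : ℕ) : IsWeightedMonic (m.map Polynomial.C) ω where
  monic := hm.map _
  natDegree_coeff_le k := by
    rw [Polynomial.coeff_map, Polynomial.natDegree_C]
    exact Nat.zero_le _

lemma IsWeightedMonic.add {R : Type*} [CommRing R] {P r : R[X][Y]} {ω : ℕ}
    (hP : IsWeightedMonic P ω) (hr : r.natDegree < P.natDegree)
    (hcoeff : ∀ k, (r.coeff k).natDegree ≤ ω * (P.natDegree - k)) : IsWeightedMonic (P + r) ω where
  monic := hP.monic.add_of_left (Polynomial.degree_lt_degree hr)
  natDegree_coeff_le k := by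
    rw [Polynomial.natDegree_add_eq_left_of_natDegree_lt hr, Polynomial.coeff_add]
    exact Polynomial.natDegree_add_le_of_degree_le (hP.natDegree_coeff_le k) (hcoeff k)

lemma natDegree_coeff_quadratic_le {R : Type*} [CommRing R] (p₀ p₁ p₂ : R[X]) {n : ℕ}
    (h₀ : p₀.natDegree ≤ n) (h₁ : p₁.natDegree ≤ n - 1) (h₂ : p₂.natDegree ≤ n - 2) (k : ℕ) :
    ((Polynomial.C p₀ + Polynomial.C p₁ * Polynomial.X +
      Polynomial.C p₂ * Polynomial.X ^ 2).coeff k).natDegree ≤ n - k := by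
  simp only [Polynomial.coeff_add, Polynomial.coeff_C, Polynomial.coeff_C_mul,
    Polynomial.coeff_X, Polynomial.coeff_X_pow]
  rcases k with _ | _ | _ | k <;> simp [*]

end ConstantLeadingTerm

section Fiber

open scoped Polynomial Polynomial.Bivariate

variable {K : Type*} [Field K]

/-- The equation `-α⁻¹ ((Y - l U)² + U (φ(Y) - a(U))) = 0`, as a polynomial in `U` over `K[Y]`,
where `α` is the leading coefficient of `a`. -/
noncomputable def fiberPoly (φ a : K[X]) (l : K) : K[X][Y] :=
  Polynomial.C (Polynomial.C (-a.leadingCoeff⁻¹)) *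
    ((Polynomial.C Polynomial.X - Polynomial.C (Polynomial.C l) * Polynomial.X) ^ 2 +
      Polynomial.X * (Polynomial.C φ - a.map Polynomial.C))

lemma aevalAeval_map_C {R : Type*} [CommRing R] [Algebra K R] (a : K[X]) (y u : R) :
    (a.map Polynomial.C : K[X][Y]).aevalAeval y u = Polynomial.aeval u a := by
  rw [aevalAeval_eq_sum_range, Polynomial.natDegree_map_eq_of_injective Polynomial.C_injective,
    Polynomial.aeval_eq_sum_range]
  refine Finset.sum_congr rfl fun k _ => ?_
  rw [Polynomial.coeff_map, Polynomial.aeval_C, Algebra.smul_def]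

lemma aevalAeval_fiberPoly {R : Type*} [CommRing R] [Algebra K R] (φ a : K[X]) (l : K)
    (y u : R) : (fiberPoly φ a l).aevalAeval y u =
      algebraMap K R (-a.leadingCoeff⁻¹) * ((y - algebraMap K R l * u) ^ 2 +
        u * (Polynomial.aeval y φ - Polynomial.aeval u a)) := by
  simp only [fiberPoly, map_mul, map_add, map_sub, map_pow, Polynomial.aevalAeval_C,
    Polynomial.aevalAeval_Y, aevalAeval_map_C, Polynomial.aeval_C, Polynomial.aeval_X]

lemma fiberPoly_eq_map_C_add (φ a : K[X]) (l : K) :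
    fiberPoly φ a l = (Polynomial.X * (a * Polynomial.C a.leadingCoeff⁻¹)).map Polynomial.C +
      Polynomial.C (Polynomial.C (-a.leadingCoeff⁻¹)) *
      (Polynomial.C (Polynomial.X ^ 2) +
        Polynomial.C (φ - Polynomial.C (2 * l) * Polynomial.X) * Polynomial.X +
        Polynomial.C (Polynomial.C (l ^ 2)) * Polynomial.X ^ 2) := by
  simp only [fiberPoly, Polynomial.map_mul, Polynomial.map_X, Polynomial.map_C, map_mul, map_sub,
    map_pow, map_neg, map_ofNat]
  ring

variable {φ a : K[X]}

lemma natDegree_and_isWeightedMonic_fiberPoly (hφ : φ.natDegree ≤ a.natDegree)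
    (ha : 2 ≤ a.natDegree) (l : K) :
    (fiberPoly φ a l).natDegree = a.natDegree + 1 ∧ IsWeightedMonic (fiberPoly φ a l) 1 := by
  have ha0 : a ≠ 0 := Polynomial.ne_zero_of_natDegree_gt (lt_of_lt_of_le two_pos ha)
  have hmonic : (Polynomial.X * (a * Polynomial.C a.leadingCoeff⁻¹)).Monic :=
    Polynomial.monic_X.mul (Polynomial.monic_mul_leadingCoeff_inv ha0)
  have hdeg : ((Polynomial.X * (a * Polynomial.C a.leadingCoeff⁻¹)).map Polynomial.C :
      K[X][Y]).natDegree = a.natDegree + 1 := by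
    rw [hmonic.natDegree_map, Polynomial.natDegree_X_mul
      (Polynomial.monic_mul_leadingCoeff_inv ha0).ne_zero,
      Polynomial.natDegree_mul_leadingCoeff_inv a ha0]
  have hlin : (φ - Polynomial.C (2 * l) * Polynomial.X).natDegree ≤ a.natDegree :=
    (Polynomial.natDegree_sub_le _ _).trans (max_le hφ
      ((Polynomial.natDegree_C_mul_le _ _).trans
        (Polynomial.natDegree_X_le.trans (one_le_two.trans ha))))
  rw [fiberPoly_eq_map_C_add]
  have hlt : (Polynomial.C (Polynomial.C (-a.leadingCoeff⁻¹)) *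
      (Polynomial.C (Polynomial.X ^ 2) +
        Polynomial.C (φ - Polynomial.C (2 * l) * Polynomial.X) * Polynomial.X +
        Polynomial.C (Polynomial.C (l ^ 2)) * Polynomial.X ^ 2)).natDegree <
      ((Polynomial.X * (a * Polynomial.C a.leadingCoeff⁻¹)).map Polynomial.C :
        K[X][Y]).natDegree := by
    rw [hdeg]
    refine lt_of_le_of_lt ?_ (Nat.lt_succ_of_le ha)
    compute_degree
  refine ⟨(Polynomial.natDegree_add_eq_left_of_natDegree_lt hlt).trans hdeg,
    (isWeightedMonic_map_C hmonic 1).add hlt fun k => ?_⟩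
  rw [hdeg, one_mul, Polynomial.coeff_C_mul]
  refine (Polynomial.natDegree_C_mul_le _ _).trans (natDegree_coeff_quadratic_le _ _ _ ?_ hlin ?_ k)
  · rw [Polynomial.natDegree_X_pow]
    exact ha.trans (Nat.le_succ _)
  · rw [Polynomial.natDegree_C]
    exact Nat.zero_le _

lemma exists_powerSeries_sq_add_mul_sub_eq_zero {ρ : PowerSeries K} (hρ : IsUnit ρ) (a : K[X])
    (l : K) (j : ℕ) :
    ∃ s : PowerSeries K, (1 - PowerSeries.C l * PowerSeries.X * (PowerSeries.X ^ j * s)) ^ 2 +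
      s * ρ - PowerSeries.X ^ 2 * (PowerSeries.X ^ j * s) *
        Polynomial.aeval (PowerSeries.X ^ j * s) a = 0 := by
  set τ : PowerSeries K := PowerSeries.X
  set c : PowerSeries K := PowerSeries.C l
  obtain ⟨s, hs⟩ := exists_mul_add_add_mul_eval_eq_zero (Ideal.span {τ})
    (Ideal.mem_span_singleton_self τ) hρ 1
    (Polynomial.C (-2 * c * τ ^ j) * Polynomial.X +
      Polynomial.C (c ^ 2 * τ ^ (2 * j + 1)) * Polynomial.X ^ 2 -
      Polynomial.C (τ ^ (j + 1)) * Polynomial.X *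
        (a.map (algebraMap K _)).comp (Polynomial.C (τ ^ j) * Polynomial.X))
  simp only [Polynomial.eval_mul, Polynomial.eval_add, Polynomial.eval_sub, Polynomial.eval_C,
    Polynomial.eval_X, Polynomial.eval_pow, Polynomial.eval_comp,
    Polynomial.eval_map_algebraMap] at hs
  exact ⟨s, by linear_combination hs⟩

/-- Multiplying the fibre equation by `X ^ 2`, where `Y = X⁻¹`, and substituting
`U = X ^ (deg φ - 2) * s` makes it linear in `s` modulo `X`. -/
lemma exists_powerSeries_fiberPoly_eq_zero (hφ : 2 ≤ φ.natDegree) (a : K[X]) (l : K) :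
    ∃ θ : PowerSeries K, (fiberPoly φ a l).aevalAeval (HahnSeries.single (-1) 1 : LaurentSeries K)
      (HahnSeries.ofPowerSeries ℤ K θ) = 0 := by
  obtain ⟨j, hj⟩ := Nat.exists_eq_add_of_le' hφ
  have hρ : IsUnit (Polynomial.toPowerSeries φ.reverse) := by
    rw [PowerSeries.isUnit_iff_constantCoeff, Polynomial.constantCoeff_coe,
      Polynomial.coeff_zero_reverse, isUnit_iff_ne_zero, Polynomial.leadingCoeff_ne_zero]
    exact Polynomial.ne_zero_of_natDegree_gt (lt_of_lt_of_le two_pos hφ)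
  obtain ⟨s, hs⟩ := exists_powerSeries_sq_add_mul_sub_eq_zero hρ a l j
  have heq := congrArg (HahnSeries.ofPowerSeries ℤ K) hs
  have hyt := single_neg_one_mul_ofPowerSeries_X (L := K)
  refine ⟨PowerSeries.X ^ j * s, ?_⟩
  rw [aevalAeval_fiberPoly, aeval_single_neg_one, aeval_ofPowerSeries, hj,
    algebraMap_laurentSeries l]
  simp only [map_sub, map_add, map_mul, map_pow, map_one, map_zero,
    HahnSeries.ofPowerSeries_C] at heq ⊢
  set y : LaurentSeries K := HahnSeries.single (-1) 1
  set t := HahnSeries.ofPowerSeries ℤ K PowerSeries.X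
  set c := HahnSeries.C (Γ := ℤ) l
  set σ := HahnSeries.ofPowerSeries ℤ K s
  set ρ := HahnSeries.ofPowerSeries ℤ K φ.reverse
  have hty : t ^ j * y ^ (j + 2) = y ^ 2 := by
    rw [pow_add, ← mul_assoc, ← mul_pow, mul_comm t, hyt, one_pow, one_mul]
  refine mul_eq_zero_of_right _
    ((mul_eq_zero.1 ?_).resolve_left (pow_ne_zero 2 (right_ne_zero_of_mul_eq_one hyt)))
  linear_combination heq + t ^ 2 * σ * ρ * hty +
    (y * t + 1 - 2 * c * t ^ (j + 1) * σ + σ * ρ * (y * t + 1)) * hyt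

lemma exists_fiber_root [Fintype K] (hφ : 2 ≤ φ.natDegree) (hφa : φ.natDegree ≤ a.natDegree)
    (l : K) (hq : 2 * ((a.natDegree + 1) ^ 2 * a.natDegree ^ 2) < Fintype.card K) :
    ∃ y u : K, y ≠ 0 ∧ (y - l * u) ^ 2 + u * (φ.eval y - a.eval u) = 0 := by
  have ha := hφ.trans hφa
  obtain ⟨θ, hθ⟩ := exists_powerSeries_fiberPoly_eq_zero hφ a l
  obtain ⟨hdeg, hweighted⟩ := natDegree_and_isWeightedMonic_fiberPoly hφa ha l
  obtain ⟨y, hy, u, hu⟩ := exists_aevalAeval_eq_zero_of_place_at_infinity hweighted hθ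
    (by rwa [hdeg, Nat.add_sub_cancel]) 0
  refine ⟨y, u, hy, (mul_eq_zero.1 (aevalAeval_fiberPoly φ a l y u ▸ hu)).resolve_left ?_⟩
  rw [Algebra.algebraMap_self_apply]
  exact neg_ne_zero.2 (inv_ne_zero (Polynomial.leadingCoeff_ne_zero.2
    (Polynomial.ne_zero_of_natDegree_gt (lt_of_lt_of_le two_pos ha))))

end Fiber

/-! ### Double covers of the affine line -/

section DoubleCover

open scoped Polynomial Polynomial.Bivariate

/-- The equation `W² + b W + Q(Y)` of a double cover of the `Y`-line, as a polynomial in `W`. -/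
noncomputable def doubleCover {R : Type*} [CommRing R] (b : R) (Q : R[X]) : R[X][Y] :=
  Polynomial.X ^ 2 + Polynomial.C (Polynomial.C b) * Polynomial.X + Polynomial.C Q

lemma aevalAeval_doubleCover {R A : Type*} [CommRing R] [CommRing A] [Algebra R A] (b : R)
    (Q : R[X]) (y w : A) : (doubleCover b Q).aevalAeval y w =
      w ^ 2 + algebraMap R A b * w + Polynomial.aeval y Q := by
  simp only [doubleCover, map_add, map_mul, map_pow, Polynomial.aevalAeval_C,
    Polynomial.aevalAeval_Y, Polynomial.aeval_C]

lemma map_doubleCover {R S : Type*} [CommRing R] [CommRing S] (φ : R →+* S) (b : R) (Q : R[X]) :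
    (doubleCover b Q).map (Polynomial.mapRingHom φ) = doubleCover (φ b) (Q.map φ) := by
  simp only [doubleCover, Polynomial.map_add, Polynomial.map_mul, Polynomial.map_pow,
    Polynomial.map_X, Polynomial.map_C, Polynomial.coe_mapRingHom]

lemma natDegree_doubleCover {R : Type*} [CommRing R] [Nontrivial R] (b : R) (Q : R[X]) :
    (doubleCover b Q).natDegree = 2 := by
  rw [doubleCover]
  compute_degree!

lemma isWeightedMonic_doubleCover {R : Type*} [CommRing R] [Nontrivial R] (b : R) {Q : R[X]}
    {ω : ℕ} (hQ : Q.natDegree ≤ 2 * ω) : IsWeightedMonic (doubleCover b Q) ω where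
  monic := by
    rw [doubleCover]
    monicity!
  natDegree_coeff_le k := by
    rw [natDegree_doubleCover, doubleCover]
    simp only [Polynomial.coeff_add, Polynomial.coeff_C, Polynomial.coeff_C_mul,
      Polynomial.coeff_X, Polynomial.coeff_X_pow]
    rcases k with _ | _ | _ | k <;> simp [mul_comm ω, hQ]

variable {K : Type*} [Field K]

/-- Hensel's lemma in `K⟦X⟧` at an unramified point of the cover. -/
lemma exists_powerSeries_doubleCover_eq_zero {b : K} {Q : K[X]} {c w : K}
    (hw : w ^ 2 + b * w + Q.eval c = 0) (hunram : 2 * w + b ≠ 0) :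
    ∃ θ : PowerSeries K, (doubleCover b Q).aevalAeval
      (HahnSeries.ofPowerSeries ℤ K (PowerSeries.C c + PowerSeries.X))
      (HahnSeries.ofPowerSeries ℤ K θ) = 0 := by
  set q : PowerSeries K := Polynomial.toPowerSeries (Polynomial.taylor c Q)
  have hq : PowerSeries.constantCoeff q = Q.eval c := by
    rw [Polynomial.constantCoeff_coe, Polynomial.taylor_coeff_zero]
  set P : Polynomial (PowerSeries K) :=
    Polynomial.X ^ 2 + Polynomial.C (PowerSeries.C b) * Polynomial.X + Polynomial.C q with hP
  obtain ⟨θ, hθ, -⟩ := HenselianRing.is_henselian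
    (I := Ideal.span {(PowerSeries.X : PowerSeries K)}) P (by rw [hP]; monicity!) (PowerSeries.C w)
    (by
      rw [Ideal.mem_span_singleton, PowerSeries.X_dvd_iff]
      simpa [hP, hq] using hw)
    (by
      refine IsUnit.map _ (PowerSeries.isUnit_iff_constantCoeff.2 (isUnit_iff_ne_zero.2 ?_))
      have hder : P.derivative.eval (PowerSeries.C w) = PowerSeries.C (2 * w + b) := by
        simp [hP, two_mul, add_mul]
      rwa [hder, PowerSeries.constantCoeff_C])
  refine ⟨θ, ?_⟩
  have h := congrArg (HahnSeries.ofPowerSeries ℤ K) hθ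
  simp only [hP, Polynomial.eval_add, Polynomial.eval_mul, Polynomial.eval_pow, Polynomial.eval_C,
    Polynomial.eval_X, map_add, map_mul, map_pow, map_zero, HahnSeries.ofPowerSeries_C] at h
  rw [aevalAeval_doubleCover, aeval_ofPowerSeries_C_add_X, algebraMap_laurentSeries, h]

lemma aeval_C_add_X_injective (c : K) :
    Function.Injective (Polynomial.aeval (R := K)
      (HahnSeries.ofPowerSeries ℤ K (PowerSeries.C c + PowerSeries.X))) := by
  rw [injective_iff_map_eq_zero]
  intro r hr
  by_contra hr0
  have h := addVal_aeval_C_add_X_le c hr0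
  rw [hr, AddValuation.map_zero, top_le_iff] at h
  exact WithTop.coe_ne_top h

lemma isGenericZero_doubleCover {Λ : Type*} [Field Λ] [Algebra K Λ] {b : K} {Q : K[X]} {y θ : Λ}
    (hy : Function.Injective (Polynomial.aeval (R := K) y))
    (h : (doubleCover b Q).aevalAeval y θ = 0)
    (hsplit : ∀ T : K[X], T ^ 2 + Polynomial.C b * T + Q ≠ 0) :
    IsGenericZero (doubleCover b Q) y θ := by
  have hmonic := (isWeightedMonic_doubleCover b (Nat.le_mul_of_pos_left Q.natDegree two_pos)).monic
  obtain ⟨g, hg, hgP, hg1, hgen⟩ := exists_monic_dvd_isGenericZero hy hmonic h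
  have hg2 : g.natDegree ≠ 1 := fun hg1 => by
    have h0 := hgen.aevalAeval_eq_zero
    have hlead : g.coeff 1 = 1 := hg1 ▸ hg.coeff_natDegree
    rw [aevalAeval_eq_sum_range, hg1, Finset.sum_range_succ, Finset.sum_range_one, hlead, map_one,
      pow_zero, pow_one, mul_one, one_mul] at h0
    have hT : Polynomial.aeval y (-g.coeff 0) = θ := by
      rw [map_neg]
      exact (eq_neg_of_add_eq_zero_right h0).symm
    refine hsplit (-g.coeff 0) (hy ?_)
    rw [map_zero, ← h, aevalAeval_doubleCover, ← hT]
    simp only [map_add, map_mul, map_pow, Polynomial.aeval_C]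
  rwa [Polynomial.eq_of_monic_of_dvd_of_natDegree_le hg hmonic hgP
    (by rw [natDegree_doubleCover]; omega)]

lemma exists_root_of_two_mul_add_eq_zero [Finite K] {b c : K} {L : Type*} [Field L]
    [Algebra K L] {w : L}
    (hw : w ^ 2 + algebraMap K L b * w + algebraMap K L c = 0)
    (h2 : 2 * w + algebraMap K L b = 0) : ∃ w₀ : K, w₀ ^ 2 + b * w₀ + c = 0 := by
  by_cases hchar : (2 : K) = 0
  · have hb : b = 0 := by
      rw [← map_ofNat (algebraMap K L), hchar, map_zero, zero_mul, zero_add] at h2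
      exact (map_eq_zero _).1 h2
    have := CharTwo.of_one_ne_zero_of_two_eq_zero one_ne_zero hchar
    obtain ⟨w₀, hw₀⟩ := FiniteField.isSquare_of_char_two (ringChar.eq K 2) (-c)
    exact ⟨w₀, by rw [hb]; linear_combination -hw₀⟩
  · refine ⟨-b / 2, (algebraMap K L).injective ?_⟩
    have hchar' : (2 : L) ≠ 0 := by
      rwa [← map_ofNat (algebraMap K L), Ne, map_eq_zero]
    have hw' : algebraMap K L (-b / 2) = w := by
      rw [map_div₀, map_neg, map_ofNat, div_eq_iff hchar']
      linear_combination -h2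
    rw [map_add, map_add, map_pow, map_mul, hw', hw, map_zero]

theorem exists_sq_add_mul_add_eq_zero [Fintype K] {b : K} {Q : K[X]} {d : ℕ} (hd : 1 ≤ d)
    (hQ : Q.natDegree ≤ 2 * d) (hq : 4 * (d * (d + 1)) < Fintype.card K) (c : K)
    (hno : ∀ y w : K, y ≠ c → w ^ 2 + b * w + Q.eval y ≠ 0) :
    ∃ T : (AlgebraicClosure K)[X],
      T ^ 2 + Polynomial.C (algebraMap K (AlgebraicClosure K) b) * T +
        Q.map (algebraMap K (AlgebraicClosure K)) = 0 := by
  by_contra! hsplit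
  obtain ⟨w, rfl⟩ := Nat.exists_eq_add_of_le' hd
  set L := AlgebraicClosure K
  set b' : L := algebraMap K L b
  obtain ⟨c', hc'⟩ := exists_ne c
  obtain ⟨w₁, hw₁⟩ := IsAlgClosed.exists_root (Polynomial.X ^ 2 + Polynomial.C b' * Polynomial.X +
    Polynomial.C (algebraMap K L (Q.eval c'))) (by
      rw [show Polynomial.degree _ = (2 : ℕ) by compute_degree!]
      exact two_ne_zero)
  simp only [Polynomial.IsRoot.def, Polynomial.eval_add, Polynomial.eval_mul, Polynomial.eval_pow,
    Polynomial.eval_C, Polynomial.eval_X] at hw₁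
  have hunram : 2 * w₁ + b' ≠ 0 := fun h =>
    have ⟨w₀, hw₀⟩ := exists_root_of_two_mul_add_eq_zero hw₁ h
    hno c' w₀ hc' hw₀
  rw [← Polynomial.eval_map_apply] at hw₁
  obtain ⟨θ, hθ⟩ := exists_powerSeries_doubleCover_eq_zero hw₁ hunram
  have hgen := isGenericZero_doubleCover (aeval_C_add_X_injective _) hθ hsplit
  have hweighted := isWeightedMonic_doubleCover b hQ
  have hweighted' := hweighted.map (algebraMap K L)
  rw [map_doubleCover] at hweighted'
  obtain ⟨y₀, hy₀, u₀, hu₀⟩ := exists_aevalAeval_eq_zero_of_isRationalPlace hweighted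
    (natDegree_doubleCover b Q).ge (map_doubleCover (algebraMap K L) b Q ▸ hgen)
    isRationalPlace_addVal (fun a s hs hs0 t ht => by
      have := isRationalPlace_addVal.map_le_map_add_of_mem_pointSpan hweighted'
        (one_le_two.trans (natDegree_doubleCover b' _).ge) hgen zero_le_one
        ((WithTop.coe_le_coe.2 (by simp)).trans (zero_le_addVal_ofPowerSeries _))
        ((WithTop.coe_le_coe.2 (by simp)).trans (zero_le_addVal_ofPowerSeries _))
        (fun P hP =>
          (addVal_aeval_C_add_X_le _ hP).trans (WithTop.coe_le_coe.2 (by simp))) hs hs0 ht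
      simpa only [natDegree_doubleCover] using this)
    (by rw [natDegree_doubleCover]; linarith) c
  rw [aevalAeval_doubleCover] at hu₀
  exact hno y₀ u₀ hy₀ hu₀

end DoubleCover

/-! ### Polynomials whose increments are a linear factor times a square -/

section SquareCofactors

open scoped Polynomial

variable {L : Type*} [Field L] {M S : L[X]}

lemma sub_C_ne_zero_of_natDegree_pos (hM : 1 ≤ M.natDegree) (v : L) : M - Polynomial.C v ≠ 0 :=
  Polynomial.ne_zero_of_natDegree_gt (n := 0) (by rwa [Polynomial.natDegree_sub_C])

lemma exists_three_eval_ne (hM : 1 ≤ M.natDegree) {Z : Finset L} (hZ : 2 * M.natDegree < Z.card) :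
    ∃ z₁ ∈ Z, ∃ z₂ ∈ Z, ∃ z₃ ∈ Z, M.eval z₁ ≠ M.eval z₂ ∧ M.eval z₁ ≠ M.eval z₃ ∧
      M.eval z₂ ≠ M.eval z₃ := by
  classical
  have hfibre : Z.card ≤ M.natDegree * (Z.image M.eval).card := by
    refine Finset.card_le_mul_card_image Z _ fun v _ => ?_
    rw [← Polynomial.natDegree_sub_C (p := M) (a := v)]
    refine Polynomial.card_le_degree_of_subset_roots fun z hz => ?_
    rw [Polynomial.mem_roots (sub_C_ne_zero_of_natDegree_pos hM v), Polynomial.IsRoot.def,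
      Polynomial.eval_sub, Polynomial.eval_C, sub_eq_zero]
    exact (Finset.mem_filter.1 hz).2
  have himage : 2 < (Z.image M.eval).card := by
    by_contra! hle
    have := Nat.mul_le_mul_left M.natDegree hle
    omega
  obtain ⟨_, ha, _, hb, _, hc, hab, hac, hbc⟩ := Finset.two_lt_card.1 himage
  obtain ⟨z₁, h₁, rfl⟩ := Finset.mem_image.1 ha
  obtain ⟨z₂, h₂, rfl⟩ := Finset.mem_image.1 hb
  obtain ⟨z₃, h₃, rfl⟩ := Finset.mem_image.1 hc
  exact ⟨z₁, h₁, z₂, h₂, z₃, h₃, hab, hac, hbc⟩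

lemma isCoprime_of_dvd_sub_C {S₁ S₂ : L[X]} {v₁ v₂ : L} (hv : v₁ ≠ v₂)
    (h₁ : S₁ ∣ M - Polynomial.C v₁) (h₂ : S₂ ∣ M - Polynomial.C v₂) : IsCoprime S₁ S₂ := by
  refine IsCoprime.of_isCoprime_of_dvd_left (IsCoprime.of_isCoprime_of_dvd_right ?_ h₂) h₁
  have h := (Polynomial.isCoprime_X_sub_C_of_isUnit_sub
    (isUnit_iff_ne_zero.2 (sub_ne_zero.2 hv))).map (Polynomial.compRingHom M)
  simpa using h

lemma exists_eq_sq_of_sq_mul_eq_sq {A B : L[X]} (hA : A ≠ 0) (h : A ^ 2 * B = S ^ 2) :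
    ∃ T : L[X], B = T ^ 2 := by
  obtain ⟨T, rfl⟩ := (IsIntegrallyClosed.pow_dvd_pow_iff two_ne_zero).1 (Dvd.intro _ h)
  rw [mul_pow] at h
  exact ⟨T, mul_left_cancel₀ (pow_ne_zero 2 hA) h⟩

lemma one_add_two_mul_natDegree_eq {z v : L} (hM : 1 ≤ M.natDegree)
    (h : M - Polynomial.C v = (Polynomial.X - Polynomial.C z) * S ^ 2) :
    1 + 2 * S.natDegree = M.natDegree := by
  have hS : S ^ 2 ≠ 0 := right_ne_zero_of_mul (h ▸ sub_C_ne_zero_of_natDegree_pos hM v)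
  rw [← Polynomial.natDegree_sub_C (p := M) (a := v), h,
    Polynomial.natDegree_mul (Polynomial.X_sub_C_ne_zero z) hS, Polynomial.natDegree_X_sub_C,
    Polynomial.natDegree_pow]

lemma dvd_derivative_of_sub_C_eq_mul_sq {B : L[X]} {v : L} (h : M - Polynomial.C v = B * S ^ 2) :
    S ∣ Polynomial.derivative M := by
  have hder := congrArg Polynomial.derivative h
  rw [Polynomial.derivative_sub, Polynomial.derivative_C, sub_zero, Polynomial.derivative_mul,
    sq, Polynomial.derivative_mul] at hder
  exact ⟨Polynomial.derivative B * S + 2 * B * Polynomial.derivative S, by rw [hder]; ring⟩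

/-- Three cofactors `S` with distinct values of `M` are pairwise coprime divisors of `M'`, which
forces `3 (deg M - 1) / 2 ≤ deg M - 1`. -/
lemma natDegree_eq_one_of_square_cofactors (hder : Polynomial.derivative M ≠ 0)
    {Z : Finset L} (hZ : 2 * M.natDegree < Z.card)
    (hS : ∀ z ∈ Z, ∃ S : L[X],
      M - Polynomial.C (M.eval z) = (Polynomial.X - Polynomial.C z) * S ^ 2) :
    M.natDegree = 1 := by
  have hM : 1 ≤ M.natDegree := Nat.one_le_iff_ne_zero.2 fun h =>
    hder (Polynomial.derivative_of_natDegree_zero h)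
  obtain ⟨z₁, h₁, z₂, h₂, z₃, h₃, h12, h13, h23⟩ := exists_three_eval_ne hM hZ
  obtain ⟨S₁, hS₁⟩ := hS z₁ h₁
  obtain ⟨S₂, hS₂⟩ := hS z₂ h₂
  obtain ⟨S₃, hS₃⟩ := hS z₃ h₃
  have hdvd {z : L} {S : L[X]}
      (h : M - Polynomial.C (M.eval z) = (Polynomial.X - Polynomial.C z) * S ^ 2) :
      S ∣ M - Polynomial.C (M.eval z) :=
    h ▸ (dvd_pow_self S two_ne_zero).mul_left _
  have hc12 := isCoprime_of_dvd_sub_C h12 (hdvd hS₁) (hdvd hS₂)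
  have hc13 := isCoprime_of_dvd_sub_C h13 (hdvd hS₁) (hdvd hS₃)
  have hc23 := isCoprime_of_dvd_sub_C h23 (hdvd hS₂) (hdvd hS₃)
  have hprod : S₁ * S₂ * S₃ ∣ Polynomial.derivative M :=
    (hc13.mul_left hc23).mul_dvd (hc12.mul_dvd (dvd_derivative_of_sub_C_eq_mul_sq hS₁)
      (dvd_derivative_of_sub_C_eq_mul_sq hS₂)) (dvd_derivative_of_sub_C_eq_mul_sq hS₃)
  have hne := ne_zero_of_dvd_ne_zero hder hprod
  have hle := Polynomial.natDegree_le_of_dvd hprod hder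
  rw [Polynomial.natDegree_mul (left_ne_zero_of_mul hne) (right_ne_zero_of_mul hne),
    Polynomial.natDegree_mul (left_ne_zero_of_mul (left_ne_zero_of_mul hne))
      (right_ne_zero_of_mul (left_ne_zero_of_mul hne))] at hle
  have hd₁ := one_add_two_mul_natDegree_eq hM hS₁
  have hd₂ := one_add_two_mul_natDegree_eq hM hS₂
  have hd₃ := one_add_two_mul_natDegree_eq hM hS₃
  have := Polynomial.natDegree_derivative_le M
  omega

variable {p : ℕ} [Fact p.Prime] [CharP L p]

lemma exists_square_cofactor_of_pow_char {z : L} (hp2 : p ≠ 2) (hM : 1 ≤ M.natDegree)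
    (h : M ^ p - Polynomial.C ((M ^ p).eval z) = (Polynomial.X - Polynomial.C z) * S ^ 2) :
    ∃ T : L[X], M - Polynomial.C (M.eval z) = (Polynomial.X - Polynomial.C z) * T ^ 2 := by
  obtain ⟨m, hm⟩ := (Fact.out : p.Prime).odd_of_ne_two hp2
  obtain ⟨E, hE⟩ := Polynomial.X_sub_C_dvd_sub_C_eval (a := z) (p := M)
  have hsq : (((Polynomial.X - Polynomial.C z) * E) ^ m) ^ 2 * E = S ^ 2 := by
    refine mul_left_cancel₀ (Polynomial.X_sub_C_ne_zero z) ?_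
    rw [← h, Polynomial.eval_pow, Polynomial.C_pow, ← sub_pow_char, hE, hm]
    ring
  obtain ⟨T, hT⟩ := exists_eq_sq_of_sq_mul_eq_sq
    (pow_ne_zero m (hE ▸ sub_C_ne_zero_of_natDegree_pos hM _)) hsq
  exact ⟨T, by rw [hE, hT]⟩

theorem exists_eq_C_mul_X_pow_add_C_of_square_cofactors [PerfectRing L p] (hp2 : p ≠ 2)
    (hM : 1 ≤ M.natDegree) {Z : Finset L} (hZ : 2 * M.natDegree < Z.card)
    (hS : ∀ z ∈ Z, ∃ S : L[X],
      M - Polynomial.C (M.eval z) = (Polynomial.X - Polynomial.C z) * S ^ 2) :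
    ∃ (α β : L) (r : ℕ), α ≠ 0 ∧
      M = Polynomial.C α * Polynomial.X ^ p ^ r + Polynomial.C β := by
  have hp : p.Prime := Fact.out
  induction hn : M.natDegree using Nat.strong_induction_on generalizing M with
  | _ n ih =>
  by_cases hder : Polynomial.derivative M = 0
  · obtain ⟨E, rfl⟩ : ∃ E : L[X], M = E ^ p :=
      ⟨_, by rw [← polynomial_expand_eq, Polynomial.expand_contract p hder hp.ne_zero]⟩
    rw [Polynomial.natDegree_pow] at hM hZ hn
    have hE : 1 ≤ E.natDegree := Nat.pos_of_mul_pos_left hM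
    have hlt : E.natDegree < p * E.natDegree := lt_mul_of_one_lt_left hE hp.one_lt
    obtain ⟨α, β, r, hα, hEr⟩ := ih _ (hn ▸ hlt) hE (by omega) (fun z hz =>
      have ⟨_, hS⟩ := hS z hz
      exists_square_cofactor_of_pow_char hp2 hE hS) rfl
    refine ⟨α ^ p, β ^ p, r + 1, pow_ne_zero _ hα, ?_⟩
    rw [hEr, add_pow_char, mul_pow, ← Polynomial.C_pow, ← Polynomial.C_pow, ← pow_mul, pow_succ]
  · have hM1 := natDegree_eq_one_of_square_cofactors hder hZ hS
    refine ⟨M.coeff 1, M.coeff 0, 0, ?_, ?_⟩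
    · rw [← hM1, Polynomial.coeff_natDegree, Polynomial.leadingCoeff_ne_zero]
      exact Polynomial.ne_zero_of_natDegree_gt hM
    · rw [pow_zero, pow_one]
      exact Polynomial.eq_X_add_C_of_natDegree_le_one hM1.le

lemma even_natDegree_sq_add_C_mul (T : L[X]) (b : L) :
    Even (T ^ 2 + Polynomial.C b * T).natDegree := by
  rcases Nat.eq_zero_or_pos T.natDegree with h | h
  · rw [Polynomial.eq_C_of_natDegree_eq_zero h, ← Polynomial.C_pow, ← Polynomial.C_mul,
      ← Polynomial.C_add, Polynomial.natDegree_C]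
    exact Even.zero
  · rw [Polynomial.natDegree_add_eq_left_of_natDegree_lt, Polynomial.natDegree_pow]
    · exact even_two_mul _
    · rw [Polynomial.natDegree_pow]
      exact (Polynomial.natDegree_C_mul_le _ _).trans_lt (by omega)

/-- Both `Q₁` and, in characteristic two, `Q₀ - Q₁` have even degree, while
`X (Q₀ - Q₁) = -Q₁ + const`. -/
lemma natDegree_le_one_of_sq_add_C_mul_add_eq_zero [CharP L 2] {b : L} {A Q₀ Q₁ T₀ T₁ : L[X]}
    {c₀ c₁ : L} (h₀ : A - Polynomial.C c₀ = Polynomial.X * Q₀)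
    (h₁ : A - Polynomial.C c₁ = (Polynomial.X - Polynomial.C 1) * Q₁)
    (hT₀ : T₀ ^ 2 + Polynomial.C b * T₀ + Q₀ = 0)
    (hT₁ : T₁ ^ 2 + Polynomial.C b * T₁ + Q₁ = 0) : A.natDegree ≤ 1 := by
  by_contra! hA
  have hQ₁0 : Q₁ ≠ 0 :=
    right_ne_zero_of_mul (h₁ ▸ sub_C_ne_zero_of_natDegree_pos hA.le c₁)
  have hdQ : 1 + Q₁.natDegree = A.natDegree := by
    rw [← Polynomial.natDegree_sub_C (p := A) (a := c₁), h₁,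
      Polynomial.natDegree_mul (Polynomial.X_sub_C_ne_zero _) hQ₁0, Polynomial.natDegree_X_sub_C]
  have heven₁ : Even Q₁.natDegree := by
    rw [← Polynomial.natDegree_neg, ← eq_neg_of_add_eq_zero_left hT₁]
    exact even_natDegree_sq_add_C_mul _ _
  have heven : Even (Q₀ - Q₁).natDegree := by
    have hT : (T₀ - T₁) ^ 2 + Polynomial.C b * (T₀ - T₁) = -(Q₀ - Q₁) := by
      rw [CharTwo.sub_eq_add T₀, CharTwo.add_sq]
      linear_combination hT₀ + hT₁ - Q₁ * CharTwo.two_eq_zero (R := L[X])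
    rw [← Polynomial.natDegree_neg, ← hT]
    exact even_natDegree_sq_add_C_mul _ _
  have hrel : Polynomial.X * (Q₀ - Q₁) = -(Q₁ + Polynomial.C (c₀ - c₁)) := by
    rw [Polynomial.C_sub]
    linear_combination h₁ - h₀ - Q₁ * Polynomial.C_1 (R := L)
  have hdeg : (Polynomial.X * (Q₀ - Q₁)).natDegree = Q₁.natDegree := by
    rw [hrel, Polynomial.natDegree_neg, Polynomial.natDegree_add_C]
  have hne : Q₀ - Q₁ ≠ 0 := fun h => by
    rw [h, mul_zero, Polynomial.natDegree_zero] at hdeg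
    omega
  rw [← hdeg, Polynomial.natDegree_X_mul hne, Nat.even_add_one] at heven₁
  exact heven₁ heven

end SquareCofactors

/-! ### Absolutely irreducible components -/

section AbsolutelyIrreducibleComponent

lemma irreducible_X_sub_X {σ R : Type*} [CommRing R] [IsDomain R] {i j : σ} (hij : i ≠ j) :
    Irreducible (X i - X j : MvPolynomial σ R) := by
  classical
  have hne : Finsupp.single j 1 ≠ Finsupp.single i 1 := fun h =>
    hij (Finsupp.single_left_injective one_ne_zero h).symm
  have hcoeff : coeff (Finsupp.single i 1) (X i - X j : MvPolynomial σ R) = 1 := by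
    rw [coeff_sub, coeff_X, coeff_X, if_pos rfl, if_neg hne, sub_zero]
  refine irreducible_of_totalDegree_eq_one ?_ fun x hx => isUnit_of_dvd_one (hcoeff ▸ hx _)
  refine ((isHomogeneous_X R i).sub (isHomogeneous_X R j)).totalDegree fun h => ?_
  rw [h, coeff_zero] at hcoeff
  exact zero_ne_one hcoeff

variable {K L σ : Type*} [Field K] [Fintype K] [Field L] [Algebra K L]

/-- The Frobenius of `K` fixes `g`, `P` and `u`, so `g` also divides `P + s ^ q * u ^ m`; hence `g`
divides `u`, and thus is `u` up to a unit. -/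
lemma not_dvd_map_add_C_mul_pow {g P u : MvPolynomial σ K} {m : ℕ} (hm : m ≠ 0) {s : L}
    (hs : s ^ Fintype.card K ≠ s) (hu : Irreducible (map (algebraMap K L) u))
    (hP : ¬ map (algebraMap K L) u ∣ map (algebraMap K L) P)
    (hg : Irreducible (map (algebraMap K L) g)) :
    ¬ map (algebraMap K L) g ∣ map (algebraMap K L) P + C s * map (algebraMap K L) u ^ m := by
  intro hdvd
  have hdvd' : map (algebraMap K L) g ∣
      map (algebraMap K L) P + C (s ^ Fintype.card K) * map (algebraMap K L) u ^ m := by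
    have hfrob : ∀ r : MvPolynomial σ K,
        map (FiniteField.frobeniusAlgHom K L : L →+* L) (map (algebraMap K L) r) =
          map (algebraMap K L) r := fun r => by
      rw [map_map, AlgHom.comp_algebraMap]
    have h := map_dvd (map (FiniteField.frobeniusAlgHom K L : L →+* L)) hdvd
    rwa [hfrob, map_add, hfrob, map_mul, map_C, map_pow, hfrob] at h
  have hgu : map (algebraMap K L) g ∣ map (algebraMap K L) u := by
    have hdiff := dvd_sub hdvd' hdvd
    rw [add_sub_add_left_eq_sub, ← sub_mul, ← C_sub] at hdiff
    have hunit : IsUnit (C (s ^ Fintype.card K - s) : MvPolynomial σ L) :=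
      (sub_ne_zero.2 hs).isUnit.map C
    exact hg.prime.dvd_of_dvd_pow (hunit.dvd_mul_left.1 hdiff)
  have hug := (hg.associated_of_dvd hu hgu).dvd'
  exact hP ((dvd_add_left ((dvd_pow_self _ hm).mul_left _)).1 (hug.trans hdvd))

lemma exists_pow_card_ne_and_factorization [IsAlgClosed L] {b c : K}
    (hno : ∀ w : K, w ^ 2 + b * w + c ≠ 0) :
    ∃ s t : L, s ^ Fintype.card K ≠ s ∧ t ^ Fintype.card K ≠ t ∧ s + t = algebraMap K L b ∧
      s * t = algebraMap K L c := by
  set b' := algebraMap K L b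
  set c' := algebraMap K L c
  obtain ⟨s, hs⟩ : ∃ s : L, s ^ 2 - b' * s + c' = 0 := by
    obtain ⟨s, hs⟩ := IsAlgClosed.exists_root
      (Polynomial.X ^ 2 - Polynomial.C b' * Polynomial.X + Polynomial.C c') (by
        rw [show Polynomial.degree _ = 2 by compute_degree!]
        norm_num)
    exact ⟨s, by simpa using hs⟩
  have hroot : ∀ t : L, t ^ 2 - b' * t + c' = 0 → t ^ Fintype.card K ≠ t := fun t ht hfix => by
    obtain ⟨w, rfl⟩ := exists_algebraMap_eq_of_pow_card_eq hfix
    refine hno (-w) ((algebraMap K L).injective ?_)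
    rw [map_zero, ← ht, map_add, map_add, map_mul, map_pow, map_neg]
    ring
  exact ⟨s, b' - s, hroot s hs, hroot _ (by linear_combination hs), by ring,
    by linear_combination -hs⟩

end AbsolutelyIrreducibleComponent

theorem not_hasAbsIrrComponent_of_quadratic {K : Type*} [Field K] [Finite K]
    {F P u : MvPolynomial (Fin 5) K} {b c : K} {m : ℕ}
    (hm : m ≠ 0) (hu : Irreducible (map (algebraMap K (AlgebraicClosure K)) u))
    (hP : ¬ map (algebraMap K (AlgebraicClosure K)) u ∣ map (algebraMap K (AlgebraicClosure K)) P)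
    (hF : F = P ^ 2 + C b * P * u ^ m + C c * (u ^ m) ^ 2)
    (hno : ∀ w : K, w ^ 2 + b * w + c ≠ 0) : ¬ HasAbsIrrComponent F := by
  have := Fintype.ofFinite K
  rintro ⟨g, hgF, -, hg⟩
  set ι := algebraMap K (AlgebraicClosure K)
  obtain ⟨s, t, hs, ht, hsum, hprod⟩ :=
    exists_pow_card_ne_and_factorization (L := AlgebraicClosure K) hno
  have hfactor : map ι F =
      (map ι P + C s * map ι u ^ m) * (map ι P + C t * map ι u ^ m) := by
    simp only [hF, map_add, map_mul, map_pow, map_C]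
    rw [← hsum, ← hprod, C_add, C_mul]
    ring
  have hdvd := map_dvd (map ι) hgF
  rw [hfactor] at hdvd
  rcases hg.prime.dvd_or_dvd hdvd with h | h
  · exact not_dvd_map_add_C_mul_pow hm hs hu hP hg h
  · exact not_dvd_map_add_C_mul_pow hm ht hu hP hg h

/-! ### Bivariate polynomials as polynomials in the second variable -/

section Bivariate

open scoped Polynomial
open Polynomial.Bivariate (equivMvPolynomial)

section CommSemiring

variable {R : Type*} [CommSemiring R]

lemma coeff_equivMvPolynomial (p : R[X][X]) (i j : ℕ) :
    (equivMvPolynomial R p).coeff (Finsupp.single 0 i + Finsupp.single 1 j) =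
      (p.coeff j).coeff i := by
  induction p using Polynomial.induction_on' with
  | add p q hp hq => rw [map_add, coeff_add, hp, hq, Polynomial.coeff_add, Polynomial.coeff_add]
  | monomial n q =>
  induction q using Polynomial.induction_on' with
  | add p q hp hq =>
    rw [map_add, map_add, coeff_add, hp, hq, Polynomial.coeff_add, Polynomial.coeff_add]
  | monomial m a =>
    have hmonomial : equivMvPolynomial R (Polynomial.monomial n (Polynomial.monomial m a)) =
        monomial (Finsupp.single 0 m + Finsupp.single 1 n) a := by
      simp only [← Polynomial.C_mul_X_pow_eq_monomial, map_mul, map_pow,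
        Polynomial.Bivariate.equivMvPolynomial_C_C,
        Polynomial.Bivariate.equivMvPolynomial_C_X, Polynomial.Bivariate.equivMvPolynomial_X]
      rw [monomial_add_single, C_mul_X_pow_eq_monomial]
    have hindex : (Finsupp.single 0 m + Finsupp.single 1 n : Fin 2 →₀ ℕ) =
        Finsupp.single 0 i + Finsupp.single 1 j ↔ n = j ∧ m = i := by
      simp [Finsupp.ext_iff, Fin.forall_fin_two, and_comm]
    classical
    rw [hmonomial, coeff_monomial, Polynomial.coeff_monomial]
    split_ifs <;> simp_all [Polynomial.coeff_monomial]

lemma add_le_totalDegree_equivMvPolynomial {p : R[X][X]} {i j : ℕ} (h : (p.coeff j).coeff i ≠ 0) :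
    i + j ≤ (equivMvPolynomial R p).totalDegree := by
  rw [← coeff_equivMvPolynomial, ← mem_support_iff] at h
  simpa [Finsupp.sum_fintype] using le_totalDegree h

lemma natDegree_le_totalDegree_equivMvPolynomial (p : R[X][X]) :
    p.natDegree ≤ (equivMvPolynomial R p).totalDegree := by
  refine Polynomial.natDegree_le_iff_coeff_eq_zero.2 fun j hj => ?_
  ext i
  by_contra h
  have := add_le_totalDegree_equivMvPolynomial h
  omega

lemma natDegree_coeff_le_totalDegree_equivMvPolynomial (p : R[X][X]) (j : ℕ) :
    (p.coeff j).natDegree ≤ (equivMvPolynomial R p).totalDegree := by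
  refine Polynomial.natDegree_le_iff_coeff_eq_zero.2 fun i hi => ?_
  by_contra h
  have := add_le_totalDegree_equivMvPolynomial h
  omega

lemma equivMvPolynomial_C (A : R[X]) :
    equivMvPolynomial R (Polynomial.C A) = Polynomial.aeval (X 0) A := by
  simp [equivMvPolynomial, Polynomial.aeval_def, Polynomial.eval_map, algebraMap_eq]

end CommSemiring

lemma eval_equivMvPolynomial {R : Type*} [CommRing R] (p : R[X][X]) (x y : R) :
    eval ![x, y] (equivMvPolynomial R p) = p.evalEval x y := by
  have h : (eval ![x, y]).comp (equivMvPolynomial R).toRingEquiv.toRingHom =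
      Polynomial.evalEvalRingHom x y := by
    ext <;> simp
  exact RingHom.congr_fun h p

section Direction

variable {σ R : Type*} [CommRing R] (a b : σ → R)

lemma natDegree_aeval_C_add_C_mul_X_le (f : MvPolynomial σ R) :
    (aeval (fun i => Polynomial.C (a i) + Polynomial.C (b i) * Polynomial.X) f).natDegree ≤
      f.totalDegree := by
  have h := aeval_natDegree_le f le_rfl
    (fun i => Polynomial.C (a i) + Polynomial.C (b i) * Polynomial.X) (n := 1)
    fun i => by compute_degree
  rwa [mul_one] at h

lemma coeff_aeval_monomial_degree (s : σ →₀ ℕ) :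
    (aeval (fun i => Polynomial.C (a i) + Polynomial.C (b i) * Polynomial.X)
      (monomial s (1 : R))).coeff s.degree = eval b (monomial s 1) := by
  have hdeg : ∀ s : σ →₀ ℕ, (aeval (fun i => Polynomial.C (a i) + Polynomial.C (b i) *
      Polynomial.X) (monomial s (1 : R))).natDegree ≤ s.degree := fun s =>
    (natDegree_aeval_C_add_C_mul_X_le a b _).trans (totalDegree_monomial_le _ _)
  induction s using Finsupp.induction_linear with
  | zero => simp
  | add s t hs ht =>
    rw [← one_mul (1 : R), ← monomial_mul, map_mul, map_mul, map_add,
      Polynomial.coeff_mul_add_eq_of_natDegree_le (hdeg s) (hdeg t), hs, ht]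
  | single i n =>
    have h1 : (Polynomial.C (a i) + Polynomial.C (b i) * Polynomial.X).natDegree ≤ 1 := by
      compute_degree
    have h := Polynomial.coeff_pow_of_natDegree_le (m := n) h1
    rw [← X_pow_eq_monomial, map_pow, aeval_X, map_pow, eval_X, Finsupp.degree_single]
    simpa using h

lemma coeff_aeval_totalDegree (f : MvPolynomial σ R) :
    (aeval (fun i => Polynomial.C (a i) + Polynomial.C (b i) * Polynomial.X) f).coeff
      f.totalDegree = eval b (homogeneousComponent f.totalDegree f) := by
  conv_lhs => rw [← support_sum_monomial_coeff f]
  rw [homogeneousComponent_apply, map_sum, map_sum, Polynomial.finsetSum_coeff,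
    Finset.sum_filter, support_sum_monomial_coeff]
  refine Finset.sum_congr rfl fun s hs => ?_
  rw [← mul_one (coeff s f), ← C_mul_monomial, map_mul, map_mul, eval_C, aeval_C,
    Polynomial.algebraMap_eq, Polynomial.coeff_C_mul]
  split_ifs with h
  · rw [← h, coeff_aeval_monomial_degree]
  · rw [Polynomial.coeff_eq_zero_of_natDegree_lt, mul_zero]
    exact ((natDegree_aeval_C_add_C_mul_X_le a b _).trans (totalDegree_monomial_le _ _)).trans_lt
      ((le_totalDegree hs).lt_of_ne h)

end Direction

lemma homogeneousComponent_totalDegree_ne_zero {σ R : Type*} [CommSemiring R]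
    {f : MvPolynomial σ R} (hf : f ≠ 0) : homogeneousComponent f.totalDegree f ≠ 0 := by
  obtain ⟨s, hs, hdeg⟩ := Finset.exists_mem_eq_sup f.support (support_nonempty.2 hf)
    fun s => s.sum fun _ e => e
  intro h
  have hcoeff := congrArg (coeff s) h
  rw [coeff_homogeneousComponent, if_pos (show s.degree = f.totalDegree from hdeg.symm), coeff_zero]
    at hcoeff
  exact mem_support_iff.1 hs hcoeff

lemma exists_direction {K : Type*} [Field K] [Fintype K] {f : MvPolynomial (Fin 2) K}
    (hf : f ≠ 0) (hq : f.totalDegree < Fintype.card K) (x₀ : K) :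
    ∃ (l : K) (a : K[X]), a.natDegree = f.totalDegree ∧
      ∀ u, a.eval u = eval ![x₀ - u, l * u] f := by
  obtain ⟨r, hr⟩ : ∃ r : Fin 2 → K, eval r (X 0 * homogeneousComponent f.totalDegree f) ≠ 0 := by
    by_contra! h
    refine mul_ne_zero (X_ne_zero 0) (homogeneousComponent_totalDegree_ne_zero hf)
      (((isHomogeneous_X K 0).mul
        (homogeneousComponent_isHomogeneous _ f)).eq_zero_of_forall_eval_eq_zero_of_le_card h ?_)
    rw [Cardinal.mk_fintype]
    exact_mod_cast (by omega : 1 + f.totalDegree ≤ Fintype.card K)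
  rw [map_mul, eval_X] at hr
  have hr₀ : r 0 ≠ 0 := left_ne_zero_of_mul hr
  set ℓ : Fin 2 → K[X] := fun i => Polynomial.C (![x₀, 0] i) + Polynomial.C (r i) * Polynomial.X
  refine ⟨-(r 1 / r 0), (aeval ℓ f).comp (Polynomial.C (-(r 0)⁻¹) * Polynomial.X), ?_, fun u => ?_⟩
  · have hdeg : (aeval ℓ f).natDegree = f.totalDegree := by
      refine (natDegree_aeval_C_add_C_mul_X_le _ r f).antisymm
        (Polynomial.le_natDegree_of_ne_zero ?_)
      rw [coeff_aeval_totalDegree]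
      exact right_ne_zero_of_mul hr
    rw [Polynomial.natDegree_comp, hdeg,
      Polynomial.natDegree_C_mul_X _ (neg_ne_zero.2 (inv_ne_zero hr₀)), mul_one]
  · have heval : ∀ v, (aeval ℓ f).eval v = eval (fun i => (ℓ i).eval v) f := fun v => by
      simp only [← Polynomial.coe_aeval_eq_eval, comp_aeval_apply]
      rfl
    rw [Polynomial.eval_comp, heval]
    congr 2
    ext i
    fin_cases i <;> simp [ℓ] <;> field_simp
    ring

end Bivariate

/-! ### Ovoids that are not affine in the second variable -/

section HigherDegree

open scoped Polynomial
open Polynomial.Bivariate (equivMvPolynomial)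

variable {K : Type*} [Field K] [Fintype K] {p : K[X][X]}

lemma exists_eval_ne_zero_of_natDegree_lt_fintypeCard {r : K[X]} (hr : r ≠ 0)
    (h : r.natDegree < Fintype.card K) : ∃ x, r.eval x ≠ 0 :=
  Polynomial.exists_eval_ne_zero_of_natDegree_lt_card r hr
    (by rw [Cardinal.mk_fintype]; exact_mod_cast h)

theorem not_ovoidCondition_of_two_le_natDegree (hp : 2 ≤ p.natDegree)
    (hq : 2 * (((equivMvPolynomial K p).totalDegree + 1) ^ 2 *
      (equivMvPolynomial K p).totalDegree ^ 2) < Fintype.card K) :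
    ¬ OvoidCondition (equivMvPolynomial K p) := by
  intro hov
  set f := equivMvPolynomial K p
  have hpf : p.natDegree ≤ f.totalDegree := natDegree_le_totalDegree_equivMvPolynomial p
  have hdq : f.totalDegree < Fintype.card K := by nlinarith [sq_nonneg f.totalDegree]
  have hp0 : p ≠ 0 := Polynomial.ne_zero_of_natDegree_gt hp
  obtain ⟨x₀, hx₀⟩ := exists_eval_ne_zero_of_natDegree_lt_fintypeCard
    (Polynomial.leadingCoeff_ne_zero.2 hp0)
    ((natDegree_coeff_le_totalDegree_equivMvPolynomial p _).trans_lt hdq)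
  obtain ⟨l, a, hadeg, haeval⟩ := exists_direction
    ((map_ne_zero_iff _ (equivMvPolynomial K).injective).2 hp0) hdq x₀
  have hφ : (p.map (Polynomial.evalRingHom x₀)).natDegree = p.natDegree :=
    Polynomial.natDegree_map_of_leadingCoeff_ne_zero _ hx₀
  obtain ⟨y, u, hy, hyu⟩ := exists_fiber_root (a := a) (hφ ▸ hp) (by rw [hφ, hadeg]; exact hpf) l
    (by rwa [hadeg])
  rw [haeval, Polynomial.map_evalRingHom_eval, ← eval_equivMvPolynomial] at hyu
  refine hov x₀ y (x₀ - u) (l * u) (fun h => hy ?_) (by rwa [sub_sub_cancel])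
  obtain ⟨hx, hyl⟩ := Prod.mk.inj h
  have hu : u = 0 := by linear_combination hx
  rw [hyl, hu, mul_zero]

/-- When `B(x) ≠ B(0)`, the points `(x, y)` and `(0, y)` violate the ovoid condition for the `y` at
which `f(x, y) = f(0, y)`. -/
theorem not_ovoidCondition_of_natDegree_coeff_one_pos (hp : p.natDegree ≤ 1)
    (hB : 1 ≤ (p.coeff 1).natDegree)
    (hq : (equivMvPolynomial K p).totalDegree < Fintype.card K) :
    ¬ OvoidCondition (equivMvPolynomial K p) := by
  intro hov
  set A := p.coeff 0
  set B := p.coeff 1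
  have heval : ∀ x y, eval ![x, y] (equivMvPolynomial K p) = B.eval x * y + A.eval x :=
    fun x y => by
      conv_lhs => rw [Polynomial.eq_X_add_C_of_natDegree_le_one hp]
      simp [eval_equivMvPolynomial, Polynomial.evalEval_C, A, B]
  obtain ⟨x, hx⟩ := exists_eval_ne_zero_of_natDegree_lt_fintypeCard
    (sub_C_ne_zero_of_natDegree_pos hB (B.eval 0)) (by
      rw [Polynomial.natDegree_sub_C]
      exact (natDegree_coeff_le_totalDegree_equivMvPolynomial p 1).trans_lt hq)
  rw [Polynomial.eval_sub, Polynomial.eval_C] at hx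
  set y := -(A.eval x - A.eval 0) / (B.eval x - B.eval 0) with hy
  refine hov x y 0 y (fun h => ?_) ?_
  · rw [(Prod.mk.inj h).1, sub_self] at hx
    exact hx rfl
  · rw [heval, heval]
    linear_combination x * div_mul_cancel₀ (-(A.eval x - A.eval 0)) hx

end HigherDegree

/-! ### Ovoids that are affine in the second variable -/

section DifferenceForm

variable {K : Type*} [Field K]

/-- The sum `Σ a_{i,j} (X₁^i X₂^j - X₃^i X₄^j) X₀^{d-i-j}` in the definition of `Fpoly`, as a linear
map in `Σ a_{i,j} X^i Y^j`. -/
noncomputable def differenceForm (K : Type*) [Field K] (d : ℕ) :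
    MvPolynomial (Fin 2) K →ₗ[K] MvPolynomial (Fin 5) K :=
  (basisMonomials (Fin 2) K).constr K fun m =>
    (X 1 ^ m 0 * X 2 ^ m 1 - X 3 ^ m 0 * X 4 ^ m 1) * X 0 ^ (d - m 0 - m 1)

lemma differenceForm_monomial (d : ℕ) (m : Fin 2 →₀ ℕ) (a : K) :
    differenceForm K d (monomial m a) =
      C a * (X 1 ^ m 0 * X 2 ^ m 1 - X 3 ^ m 0 * X 4 ^ m 1) * X 0 ^ (d - m 0 - m 1) := by
  have h : monomial m a = a • basisMonomials (Fin 2) K m := by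
    rw [coe_basisMonomials, smul_monomial, smul_eq_mul, mul_one]
  rw [h, map_smul, differenceForm, Module.Basis.constr_basis, smul_eq_C_mul, mul_assoc]

lemma differenceForm_C (d : ℕ) (a : K) : differenceForm K d (C a) = 0 := by
  simp [← monomial_zero', differenceForm_monomial]

lemma differenceForm_C_mul_X_zero_pow (d i : ℕ) (a : K) :
    differenceForm K d (C a * X 0 ^ i) = C a * (X 1 ^ i - X 3 ^ i) * X 0 ^ (d - i) := by
  rw [C_mul_X_pow_eq_monomial, differenceForm_monomial]
  simp

lemma differenceForm_C_mul_X_one (d : ℕ) (a : K) :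
    differenceForm K d (C a * X 1) = C a * (X 2 - X 4) * X 0 ^ (d - 1) := by
  rw [C_mul_X_eq_monomial, differenceForm_monomial]
  simp

lemma Fpoly_eq_differenceForm (f : MvPolynomial (Fin 2) K) (d : ℕ) :
    Fpoly f d = (X 2 - X 4) ^ 2 * X 0 ^ (d - 1) + (X 1 - X 3) * differenceForm K d f := by
  conv_rhs => rw [← support_sum_monomial_coeff f]
  rw [map_sum, Fpoly]
  simp only [differenceForm_monomial]

end DifferenceForm

section AffineInSecondVariable

open scoped Polynomial
open Polynomial.Bivariate (equivMvPolynomial)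

lemma not_map_X_sub_X_dvd_map {R S σ : Type*} [CommRing R] [CommRing S] {φ : R →+* S}
    (hφ : Function.Injective φ) {i j : σ} {P : MvPolynomial σ R} {x : σ → R} (hx : x i = x j)
    (hP : eval x P ≠ 0) : ¬ map φ (X i - X j) ∣ map φ P := by
  intro h
  have heval := map_dvd (eval (φ ∘ x)) h
  simp only [← map_eval, map_sub, eval_X, hx, sub_self, zero_dvd_iff] at heval
  exact hP ((map_eq_zero_iff φ hφ).1 heval)

lemma exists_eq_C_mul_X_pow_add_C_of_map {K L : Type*} [Field K] [CommRing L] [Nontrivial L]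
    {φ : K →+* L} {N : K[X]} {α β : L} {n : ℕ} (hn : n ≠ 0) (hα : α ≠ 0)
    (hN : N.map φ = Polynomial.C α * Polynomial.X ^ n + Polynomial.C β) :
    ∃ α' β', α' ≠ 0 ∧ N = Polynomial.C α' * Polynomial.X ^ n + Polynomial.C β' := by
  have hcoeff : φ (N.coeff n) = α := by
    rw [← Polynomial.coeff_map, hN]
    simp [Polynomial.coeff_C, hn]
  have hcoeff₀ : φ (N.coeff 0) = β := by
    rw [← Polynomial.coeff_map, hN]
    simp [Polynomial.coeff_X_pow, hn.symm]
  refine ⟨N.coeff n, N.coeff 0, fun h => hα ?_, Polynomial.map_injective φ φ.injective ?_⟩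
  · rw [← hcoeff, h, map_zero]
  · simp [hN, hcoeff, hcoeff₀]

variable {K : Type*} [Field K]

lemma equivMvPolynomial_C_add_C_C_mul_X (A : K[X]) (b : K) :
    equivMvPolynomial K (Polynomial.C A + Polynomial.C (Polynomial.C b) * Polynomial.X) =
      Polynomial.aeval (X 0) A + C b * X 1 := by
  simp [equivMvPolynomial_C]

lemma eval_aeval_X_zero_add (A : K[X]) (b x y : K) :
    eval ![x, y] (Polynomial.aeval (X 0) A + C b * X 1) = A.eval x + b * y := by
  simp [← equivMvPolynomial_C_add_C_C_mul_X, eval_equivMvPolynomial, Polynomial.evalEval_C]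

lemma natDegree_le_totalDegree_aeval_X_zero_add (A : K[X]) (b : K) :
    A.natDegree ≤ (Polynomial.aeval (X 0) A + C b * X 1 : MvPolynomial (Fin 2) K).totalDegree := by
  have h := natDegree_coeff_le_totalDegree_equivMvPolynomial
    (Polynomial.C A + Polynomial.C (Polynomial.C b) * Polynomial.X) 0
  rw [equivMvPolynomial_C_add_C_C_mul_X] at h
  simpa using h

lemma totalDegree_aeval_X_zero_add_le (A : K[X]) (b : K) :
    (Polynomial.aeval (X 0) A + C b * X 1 : MvPolynomial (Fin 2) K).totalDegree ≤
      max A.natDegree 1 := by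
  have hterm : ∀ (c : K) (i : Fin 2) (n : ℕ),
      (c • X i ^ n : MvPolynomial (Fin 2) K).totalDegree ≤ n := fun c i n =>
    (totalDegree_smul_le _ _).trans_eq (totalDegree_X_pow _ _)
  refine (totalDegree_add _ _).trans (max_le_max ?_ ?_)
  · rw [Polynomial.aeval_eq_sum_range]
    exact totalDegree_finsetSum_le fun n hn =>
      (hterm _ _ n).trans (Nat.lt_succ_iff.1 (Finset.mem_range.1 hn))
  · simpa [smul_eq_C_mul] using hterm b 1 1

lemma natDegree_C_mul_X_le_one (a : K) : (Polynomial.C a * Polynomial.X).natDegree ≤ 1 :=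
  (Polynomial.natDegree_C_mul_le _ _).trans Polynomial.natDegree_X_le

lemma totalDegree_eq_of_C_mul_X_sub_eq {A : K[X]} (b : K) {a α β : K} {m : ℕ} (hm : 1 ≤ m)
    (hd : 1 ≤ (Polynomial.aeval (X 0) A + C b * X 1 : MvPolynomial (Fin 2) K).totalDegree)
    (hα : α ≠ 0) (hN : Polynomial.C a * Polynomial.X - A =
      Polynomial.C α * Polynomial.X ^ m + Polynomial.C β) :
    (Polynomial.aeval (X 0) A + C b * X 1 : MvPolynomial (Fin 2) K).totalDegree = m := by
  have hNdeg : (Polynomial.C a * Polynomial.X - A).natDegree = m := by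
    rw [hN, Polynomial.natDegree_add_C, Polynomial.natDegree_C_mul_X_pow m α hα]
  refine le_antisymm ((totalDegree_aeval_X_zero_add_le A b).trans (max_le ?_ hm)) ?_
  · rw [← sub_sub_cancel (Polynomial.C a * Polynomial.X) A]
    exact (Polynomial.natDegree_sub_le _ _).trans
      (max_le ((natDegree_C_mul_X_le_one a).trans hm) hNdeg.le)
  · rw [← hNdeg]
    exact (Polynomial.natDegree_sub_le _ _).trans (max_le ((natDegree_C_mul_X_le_one a).trans hd)
      (natDegree_le_totalDegree_aeval_X_zero_add A b))

lemma Fpoly_eq_of_C_sq_mul_X_sub_eq {A : K[X]} {e α β : K} {p r : ℕ} [Fact p.Prime] [CharP K p]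
    (hN : Polynomial.C (e ^ 2) * Polynomial.X - A =
      Polynomial.C α * Polynomial.X ^ p ^ r + Polynomial.C β) :
    Fpoly (Polynomial.aeval (X 0) A + C (2 * e) * X 1) (p ^ r) =
      (X 2 - X 4 + C e * (X 1 - X 3)) ^ 2 * X 0 ^ (p ^ r - 1) -
        C α * (X 1 - X 3) ^ (p ^ r + 1) := by
  have hf : (Polynomial.aeval (X 0) A + C (2 * e) * X 1 : MvPolynomial (Fin 2) K) =
      C (e ^ 2) * X 0 ^ 1 - (C α * X 0 ^ p ^ r + C β) + C (2 * e) * X 1 := by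
    rw [← sub_sub_cancel (Polynomial.C (e ^ 2) * Polynomial.X) A, hN]
    simp [algebraMap_eq]
  rw [Fpoly_eq_differenceForm, hf, map_add, map_sub, map_add, differenceForm_C,
    differenceForm_C_mul_X_zero_pow, differenceForm_C_mul_X_zero_pow, differenceForm_C_mul_X_one,
    ← sub_pow_char_pow, C_mul, C_pow, map_ofNat C 2, Nat.sub_self]
  ring

/-- If `e² X - A` were constant, `(1, -e)` and `(0, 0)` would violate the ovoid condition. -/
lemma OvoidCondition.one_le_natDegree_C_sq_mul_X_sub {A : K[X]} {e : K}
    (hov : OvoidCondition (Polynomial.aeval (X 0) A + C (2 * e) * X 1)) :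
    1 ≤ (Polynomial.C (e ^ 2) * Polynomial.X - A).natDegree := by
  by_contra! hlt
  have hconst : ∀ x, e ^ 2 * x - A.eval x = -A.eval 0 := fun x => by
    have h := Polynomial.eq_C_of_natDegree_eq_zero (Nat.lt_one_iff.1 hlt)
    have hx := congrArg (Polynomial.eval x) h
    have h0 := congrArg (Polynomial.eval 0) h
    simp only [Polynomial.eval_sub, Polynomial.eval_mul, Polynomial.eval_C, Polynomial.eval_X]
      at hx h0
    linear_combination hx - h0
  refine hov 1 (-e) 0 0 (by simp) ?_
  rw [eval_aeval_X_zero_add, eval_aeval_X_zero_add]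
  linear_combination -hconst 1

variable [Fintype K]

/-- If `A(y) - A(x₀) = (y - x₀) Q(y)`, a zero of `w² + b w + Q(y)` with `y ≠ x₀` yields the points
`(y, (y - x₀) w)` and `(x₀, 0)` violating the ovoid condition. -/
lemma OvoidCondition.exists_sq_add_mul_add_eq_zero {A : K[X]} {b : K} {d : ℕ} (hd : 1 ≤ d)
    (hov : OvoidCondition (Polynomial.aeval (X 0) A + C b * X 1)) (hA : A.natDegree ≤ d)
    (hq : 4 * (d * (d + 1)) < Fintype.card K) (x₀ : K) :
    ∃ Q : K[X], A - Polynomial.C (A.eval x₀) = (Polynomial.X - Polynomial.C x₀) * Q ∧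
      ∃ T : (AlgebraicClosure K)[X],
        T ^ 2 + Polynomial.C (algebraMap K (AlgebraicClosure K) b) * T +
          Q.map (algebraMap K (AlgebraicClosure K)) = 0 := by
  obtain ⟨Q, hQ⟩ := Polynomial.X_sub_C_dvd_sub_C_eval (a := x₀) (p := A)
  refine ⟨Q, hQ, _root_.exists_sq_add_mul_add_eq_zero hd ?_ hq x₀ fun y w hy hw => ?_⟩
  · rcases eq_or_ne Q 0 with rfl | hQ0
    · simp
    · have hdeg := congrArg Polynomial.natDegree hQ
      rw [Polynomial.natDegree_sub_C, Polynomial.natDegree_mul (Polynomial.X_sub_C_ne_zero _) hQ0,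
        Polynomial.natDegree_X_sub_C] at hdeg
      omega
  · refine hov y ((y - x₀) * w) x₀ 0 (fun h => hy (Prod.mk.inj h).1) ?_
    have heval := congrArg (Polynomial.eval y) hQ
    simp only [Polynomial.eval_sub, Polynomial.eval_C, Polynomial.eval_mul,
      Polynomial.eval_X] at heval
    rw [eval_aeval_X_zero_add, eval_aeval_X_zero_add]
    linear_combination (y - x₀) * heval + (y - x₀) ^ 2 * hw

section OddCharacteristic

variable {A : K[X]} {e : K} {d p : ℕ} [Fact p.Prime] [CharP K p]

lemma OvoidCondition.exists_C_sq_mul_X_sub_eq (hp2 : p ≠ 2) (hd : 1 ≤ d)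
    (hov : OvoidCondition (Polynomial.aeval (X 0) A + C (2 * e) * X 1)) (hA : A.natDegree ≤ d)
    (hq : 4 * (d * (d + 1)) < Fintype.card K) :
    ∃ (α β : K) (r : ℕ), α ≠ 0 ∧
      Polynomial.C (e ^ 2) * Polynomial.X - A =
        Polynomial.C α * Polynomial.X ^ p ^ r + Polynomial.C β := by
  classical
  set ι := algebraMap K (AlgebraicClosure K)
  have : CharP (AlgebraicClosure K) p := charP_of_injective_algebraMap ι.injective p
  set N := Polynomial.C (e ^ 2) * Polynomial.X - A with hN
  have hNd : N.natDegree ≤ d := (Polynomial.natDegree_sub_le _ _).trans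
    (max_le ((natDegree_C_mul_X_le_one _).trans hd) hA)
  have hsquare : ∀ z ∈ Finset.univ.image ι, ∃ S, N.map ι - Polynomial.C ((N.map ι).eval z) =
      (Polynomial.X - Polynomial.C z) * S ^ 2 := fun z hz => by
    obtain ⟨x₀, -, rfl⟩ := Finset.mem_image.1 hz
    obtain ⟨Q, hQ, T, hT⟩ := hov.exists_sq_add_mul_add_eq_zero hd hA hq x₀
    refine ⟨T + Polynomial.C (ι e), ?_⟩
    have hmap := congrArg (Polynomial.map ι) hQ
    simp only [Polynomial.map_sub, Polynomial.map_mul, Polynomial.map_C, Polynomial.map_X,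
      map_mul, map_ofNat] at hmap hT
    rw [Polynomial.eval_map_apply, hN]
    simp only [Polynomial.map_sub, Polynomial.map_mul, Polynomial.map_C, Polynomial.map_X,
      Polynomial.map_pow, Polynomial.eval_sub, Polynomial.eval_mul, Polynomial.eval_C,
      Polynomial.eval_X, Polynomial.eval_pow, map_sub, map_mul, map_pow]
    linear_combination -hmap - (Polynomial.X - Polynomial.C (ι x₀)) * hT
  obtain ⟨α, β, r, hα, hαβ⟩ := exists_eq_C_mul_X_pow_add_C_of_square_cofactors hp2
    (by rw [Polynomial.natDegree_map]; exact hov.one_le_natDegree_C_sq_mul_X_sub) (by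
      rw [Polynomial.natDegree_map, Finset.card_image_of_injective _ ι.injective,
        Finset.card_univ]
      nlinarith) hsquare
  obtain ⟨α', β', hα', hαβ'⟩ := exists_eq_C_mul_X_pow_add_C_of_map
    (pow_ne_zero _ (NeZero.ne p)) hα hαβ
  exact ⟨α', β', r, hα', hαβ'⟩

lemma OvoidCondition.not_hasAbsIrrComponent_of_odd (hp2 : p ≠ 2)
    (hov : OvoidCondition (Polynomial.aeval (X 0) A + C (2 * e) * X 1))
    (hdeg : (Polynomial.aeval (X 0) A + C (2 * e) * X 1 :
      MvPolynomial (Fin 2) K).totalDegree = d)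
    (hd : 1 ≤ d) (hq : 4 * (d * (d + 1)) < Fintype.card K) :
    ¬ HasAbsIrrComponent (Fpoly (Polynomial.aeval (X 0) A + C (2 * e) * X 1) d) := by
  have hAd : A.natDegree ≤ d := hdeg ▸ natDegree_le_totalDegree_aeval_X_zero_add A (2 * e)
  obtain ⟨α, β, r, hα, hN⟩ := hov.exists_C_sq_mul_X_sub_eq hp2 hd hAd hq
  obtain rfl : d = p ^ r := hdeg ▸ totalDegree_eq_of_C_mul_X_sub_eq _
    (Nat.one_le_pow _ _ (NeZero.pos p)) (hdeg.symm ▸ hd) hα hN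
  obtain ⟨k, hk⟩ : Odd (p ^ r) := ((Fact.out : p.Prime).odd_of_ne_two hp2).pow
  refine not_hasAbsIrrComponent_of_quadratic (m := k + 1) (b := 0) (c := -α)
    (P := (X 2 - X 4 + C e * (X 1 - X 3)) * X 0 ^ k) (u := X 1 - X 3) k.succ_ne_zero ?_
    (not_map_X_sub_X_dvd_map (algebraMap K _).injective (x := ![1, 0, 1, 0, 0]) rfl
      (by simp)) ?_ fun w hw => ?_
  · simpa using irreducible_X_sub_X (by decide)
  · rw [Fpoly_eq_of_C_sq_mul_X_sub_eq hN, hk, C_0, C_neg]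
    simp only [Nat.add_sub_cancel]
    ring
  · have hdiff : A.eval 1 - A.eval 0 = e ^ 2 - α := by
      have h := congrArg (fun N => N.eval 1 - N.eval 0) hN
      simp only [Polynomial.eval_sub, Polynomial.eval_add, Polynomial.eval_mul,
        Polynomial.eval_pow, Polynomial.eval_C, Polynomial.eval_X, one_pow,
        zero_pow (pow_ne_zero r (NeZero.ne p))] at h
      linear_combination -h
    refine hov 1 (w - e) 0 0 (by simp) ?_
    rw [eval_aeval_X_zero_add, eval_aeval_X_zero_add]
    linear_combination hdiff + hw

end OddCharacteristic

section CharTwo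

variable {A : K[X]} {b : K} {d : ℕ} [CharP K 2]

lemma OvoidCondition.natDegree_le_one (hd : 1 ≤ d)
    (hov : OvoidCondition (Polynomial.aeval (X 0) A + C b * X 1)) (hA : A.natDegree ≤ d)
    (hq : 4 * (d * (d + 1)) < Fintype.card K) : A.natDegree ≤ 1 := by
  have : CharP (AlgebraicClosure K) 2 :=
    charP_of_injective_algebraMap (algebraMap K (AlgebraicClosure K)).injective 2
  obtain ⟨Q₀, hQ₀, T₀, hT₀⟩ := hov.exists_sq_add_mul_add_eq_zero hd hA hq 0
  obtain ⟨Q₁, hQ₁, T₁, hT₁⟩ := hov.exists_sq_add_mul_add_eq_zero hd hA hq 1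
  have h₀ := congrArg (Polynomial.map (algebraMap K (AlgebraicClosure K))) hQ₀
  have h₁ := congrArg (Polynomial.map (algebraMap K (AlgebraicClosure K))) hQ₁
  simp only [Polynomial.map_sub, Polynomial.map_mul, Polynomial.map_C, Polynomial.map_X,
    Polynomial.map_one, map_zero, map_one, sub_zero] at h₀ h₁
  simpa using natDegree_le_one_of_sq_add_C_mul_add_eq_zero h₀ h₁ hT₀ hT₁

lemma OvoidCondition.not_hasAbsIrrComponent_of_charTwo
    (hov : OvoidCondition (Polynomial.aeval (X 0) A + C b * X 1))
    (hdeg : (Polynomial.aeval (X 0) A + C b * X 1 : MvPolynomial (Fin 2) K).totalDegree = d)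
    (hd : 1 ≤ d) (hq : 4 * (d * (d + 1)) < Fintype.card K) :
    ¬ HasAbsIrrComponent (Fpoly (Polynomial.aeval (X 0) A + C b * X 1) d) := by
  have hA : A.natDegree ≤ 1 :=
    hov.natDegree_le_one hd (hdeg ▸ natDegree_le_totalDegree_aeval_X_zero_add A b) hq
  obtain ⟨α, β, rfl⟩ := Polynomial.exists_eq_X_add_C_of_natDegree_le_one hA
  obtain rfl : d = 1 := by
    refine le_antisymm ?_ hd
    rw [← hdeg]
    exact (totalDegree_aeval_X_zero_add_le _ b).trans (max_le hA le_rfl)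
  refine not_hasAbsIrrComponent_of_quadratic (m := 1) (b := b) (c := α)
    (P := X 2 - X 4) (u := X 1 - X 3) one_ne_zero ?_
    (not_map_X_sub_X_dvd_map (algebraMap K _).injective (x := ![0, 0, 1, 0, 0]) rfl
      (by simp)) ?_ fun w hw => ?_
  · simpa using irreducible_X_sub_X (by decide)
  · have hf : (Polynomial.aeval (X 0) (Polynomial.C α * Polynomial.X + Polynomial.C β) + C b * X 1 :
        MvPolynomial (Fin 2) K) = C α * X 0 ^ 1 + C β + C b * X 1 := by
      simp [algebraMap_eq]
    rw [Fpoly_eq_differenceForm, hf, map_add, map_add, differenceForm_C,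
      differenceForm_C_mul_X_zero_pow, differenceForm_C_mul_X_one]
    ring
  · refine hov 1 w 0 0 (by simp) ?_
    rw [eval_aeval_X_zero_add, eval_aeval_X_zero_add]
    simp only [Polynomial.eval_add, Polynomial.eval_mul, Polynomial.eval_C, Polynomial.eval_X]
    linear_combination hw

end CharTwo

end AffineInSecondVariable

section

open scoped Polynomial
open Polynomial.Bivariate (equivMvPolynomial)

theorem OvoidCondition.not_hasAbsIrrComponent_of_affine {K : Type*} [Field K] [Fintype K] {A : K[X]}
    {b : K} {d : ℕ} (hov : OvoidCondition (Polynomial.aeval (X 0) A + C b * X 1))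
    (hdeg : (Polynomial.aeval (X 0) A + C b * X 1 : MvPolynomial (Fin 2) K).totalDegree = d)
    (hd : 1 ≤ d) (hq : 4 * (d * (d + 1)) < Fintype.card K) :
    ¬ HasAbsIrrComponent (Fpoly (Polynomial.aeval (X 0) A + C b * X 1) d) := by
  obtain ⟨p, hp⟩ := CharP.exists K
  have : Fact p.Prime := ⟨CharP.char_is_prime K p⟩
  rcases eq_or_ne p 2 with rfl | hp2
  · exact hov.not_hasAbsIrrComponent_of_charTwo hdeg hd hq
  · have h2 : (2 : K) ≠ 0 := Ring.two_ne_zero (ringChar.eq K p ▸ hp2)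
    obtain ⟨e, rfl⟩ : ∃ e, b = 2 * e := ⟨b / 2, (mul_div_cancel₀ b h2).symm⟩
    exact hov.not_hasAbsIrrComponent_of_odd hp2 hdeg hd hq

theorem statement0_general {K : Type*} [Field K] [Fintype K] {f : MvPolynomial (Fin 2) K}
    (hd : 1 ≤ f.totalDegree)
    (hq : 2 * ((f.totalDegree + 1) ^ 2 * f.totalDegree ^ 2) < Fintype.card K)
    (hcomp : HasAbsIrrComponent (Fpoly f f.totalDegree)) : ¬ OvoidCondition f := by
  intro hov
  obtain ⟨p, rfl⟩ := (equivMvPolynomial K).surjective f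
  have hp : p.natDegree ≤ 1 := by
    by_contra! hp
    exact not_ovoidCondition_of_two_le_natDegree hp hq hov
  have hB : (p.coeff 1).natDegree = 0 := by
    by_contra hB
    exact not_ovoidCondition_of_natDegree_coeff_one_pos hp (Nat.one_le_iff_ne_zero.2 hB)
      (by nlinarith) hov
  have hf : equivMvPolynomial K p = Polynomial.aeval (X 0) (p.coeff 0) +
      C ((p.coeff 1).coeff 0) * X 1 := by
    rw [← equivMvPolynomial_C_add_C_C_mul_X, ← Polynomial.eq_C_of_natDegree_eq_zero hB, add_comm,
      ← Polynomial.eq_X_add_C_of_natDegree_le_one hp]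
  have hq' : 4 * ((equivMvPolynomial K p).totalDegree *
      ((equivMvPolynomial K p).totalDegree + 1)) < Fintype.card K := by
    have htwo := Nat.mul_le_mul hd (Nat.succ_le_succ hd)
    nlinarith
  rw [hf] at hov hd hq' hcomp
  exact hov.not_hasAbsIrrComponent_of_affine rfl hd hq' hcomp

end

lemma two_mul_sq_mul_sq_lt_of_rpow_lt {d q : ℕ}
    (h : (6.3 : ℝ) * ((d : ℝ) + 1) ^ ((13 : ℝ) / 3) < q) : 2 * ((d + 1) ^ 2 * d ^ 2) < q := by
  have hpow : ((d : ℝ) + 1) ^ 4 ≤ ((d : ℝ) + 1) ^ ((13 : ℝ) / 3) := by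
    rw [← Real.rpow_natCast]
    exact Real.rpow_le_rpow_of_exponent_le (by linarith [d.cast_nonneg (α := ℝ)]) (by norm_num)
  have hsq : ((d : ℝ) + 1) ^ 2 * (d : ℝ) ^ 2 ≤ ((d : ℝ) + 1) ^ 4 := by
    rw [show ((d : ℝ) + 1) ^ 4 = (d + 1) ^ 2 * (d + 1) ^ 2 by ring]
    gcongr
    linarith
  have hreal : 2 * (((d : ℝ) + 1) ^ 2 * (d : ℝ) ^ 2) < q := by
    have : (0 : ℝ) ≤ ((d : ℝ) + 1) ^ 2 * (d : ℝ) ^ 2 := by positivity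
    linarith
  exact_mod_cast hreal

/-- If `q > 6.3·(d+1)^{13/3}` and the hypersurface `S_f` contains an absolutely irreducible
component defined over `F_q`, then `O_4(f)` is not an ovoid of `Q(4,q)`. -/
theorem statement0 (p h q : ℕ) (hp : p.Prime) (hh : 0 < h) (hq : q = p ^ h)
    (K : Type*) [Field K] [Fintype K] (hcard : Fintype.card K = q)
    (f : MvPolynomial (Fin 2) K) (d : ℕ) (hdeg : f.totalDegree = d) (hd : 1 ≤ d)
    (h00 : coeffXY f 0 0 = 0)
    (hbig : (6.3 : ℝ) * ((d : ℝ) + 1) ^ ((13 : ℝ) / 3) < (q : ℝ))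
    (hcomp : HasAbsIrrComponent (Fpoly f d)) :
    ¬ OvoidCondition f := by
  subst hq hdeg
  exact statement0_general hd (hcard ▸ two_mul_sq_mul_sq_lt_of_rpow_lt hbig) hcomp
end

section
/- Let q = p^h be a prime power and let f(X,Y) = Σ_{i,j} a_{i,j} X^i Y^j ∈ F_q[X,Y] have total degree d > 1 and a_{0,0} = 0. If there exists an index i ≠ d with a_{i,d−i} ≠ 0, then the hypersurface S_f contains an absolutely irreducible component defined over F_q; that is, there is a nonconstant polynomial g ∈ F_q[X_0,X_1,X_2,X_3,X_4] dividing F that remains irreducible over the algebraic closure of F_q. -/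
open MvPolynomial

/-!
If a substitution `φ` over `K` sends an irreducible polynomial `G` to one divisible exactly once by
a polynomial `l` that stays prime over the algebraic closure, then `G` is absolutely irreducible.
Indeed, a factorization `G = g h` has coefficients in a finite extension `E / K` of degree `n`, and
we may assume `l ∣ φ(g)`. The norm `N` from `E[X]` to `K[X]` commutes with `φ`, so
`φ(N g) φ(N h) = φ(G)ⁿ` while already `lⁿ = N(l)` divides `φ(N g)`; hence `l ∤ φ(N h)`. But `N h`
divides `Gⁿ`, and it is not divisible by `G`, so it is a unit, and so is `h`.

At infinity `F` restricts to `(X₁ - X₃) (f_d(X₁, X₂) - f_d(X₃, X₄))`, where `f_d` is the part of `f`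
of degree `d`. Its second factor does not vanish on `X₁ = X₃` when `f_d` involves `Y`, so `X₁ - X₃`
divides it exactly once, and the irreducible factor of `F` over `K` that is responsible for
`X₁ - X₃` is the desired component.
-/

section Norm

variable {R S R' S' ι : Type*} [CommRing R] [CommRing S] [Algebra R S] [CommRing R'] [CommRing S']
  [Algebra R' S']

theorem isUnit_norm_iff [Module.Free R S] [Module.Finite R S] {x : S} :
    IsUnit (Algebra.norm R x) ↔ IsUnit x := by
  rw [Algebra.norm_apply, ← LinearMap.isUnit_iff_isUnit_det, Algebra.lmul_isUnit_iff]

variable [Finite ι] (b : Module.Basis ι R S) (b' : Module.Basis ι R' S') {φ : R →+* R'}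
  {ψ : S →+* S'}

theorem map_norm_of_basis (hψ : ∀ r, ψ (algebraMap R S r) = algebraMap R' S' (φ r))
    (hb : ∀ i, ψ (b i) = b' i) (x : S) : φ (Algebra.norm R x) = Algebra.norm R' (ψ x) := by
  classical
  have := Fintype.ofFinite ι
  have hrepr (y : S) (i : ι) : b'.repr (ψ y) i = φ (b.repr y i) := by
    have hy : ψ y = ∑ j, φ (b.repr y j) • b' j := by
      conv_lhs => rw [← b.sum_repr y]
      simp only [map_sum, Algebra.smul_def, map_mul, hψ, hb]
    rw [hy, b'.repr_sum_self]
  rw [Algebra.norm_eq_matrix_det b, Algebra.norm_eq_matrix_det b', RingHom.map_det]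
  congr 1
  ext i j
  simp only [RingHom.mapMatrix_apply, Matrix.map_apply, Algebra.leftMulMatrix_eq_repr_mul, ← hrepr,
    map_mul, hb]

variable [IsDomain R] [IsDomain R']

theorem isUnit_of_mul_eq_algebraMap_of_dvd_map
    (hψ : ∀ r, ψ (algebraMap R S r) = algebraMap R' S' (φ r)) (hb : ∀ i, ψ (b i) = b' i)
    {G : R} (hG : Prime G) {l : R'} (hl : Prime l) (hlG : l ∣ φ G) (hsq : ¬ l ^ 2 ∣ φ G)
    {g h : S} (hgh : algebraMap R S G = g * h) (hlg : algebraMap R' S' l ∣ ψ g) : IsUnit h := by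
  have := Module.Free.of_basis b
  have := Module.Finite.of_basis b
  have := Fintype.ofFinite ι
  set n := Fintype.card ι
  have hnorm : Algebra.norm R g * Algebra.norm R h = G ^ n := by
    rw [← map_mul, ← hgh, Algebra.norm_algebraMap_of_basis b]
  have hpow : l ^ n ∣ φ (Algebra.norm R g) := by
    rw [map_norm_of_basis b b' hψ hb, ← Algebra.norm_algebraMap_of_basis b']
    exact map_dvd _ hlg
  have hndvd : ¬ l ∣ φ (Algebra.norm R h) := fun hlh ↦ by
    have hmul := mul_dvd_mul hpow hlh
    rw [← pow_succ, ← map_mul, hnorm, map_pow] at hmul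
    refine hl.not_isUnit (isUnit_of_dvd_one ?_)
    exact hl.dvd_of_pow_dvd_pow_mul_pow_of_square_not_dvd (by simpa using hmul) hsq
  obtain ⟨j, -, hj⟩ := (dvd_prime_pow hG n).mp (Dvd.intro_left _ hnorm)
  rw [← isUnit_norm_iff (R := R), hj.isUnit_iff]
  rcases eq_or_ne j 0 with rfl | hj0
  · simp
  · exact absurd (hlG.trans (map_dvd φ ((dvd_pow_self G hj0).trans hj.symm.dvd))) hndvd

theorem irreducible_algebraMap_of_prime_dvd_map
    (hψ : ∀ r, ψ (algebraMap R S r) = algebraMap R' S' (φ r)) (hb : ∀ i, ψ (b i) = b' i)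
    {G : R} (hG : Prime G) {l : R'} (hl : Prime l) (hl' : Prime (algebraMap R' S' l))
    (hlG : l ∣ φ G) (hsq : ¬ l ^ 2 ∣ φ G) : Irreducible (algebraMap R S G) := by
  refine ⟨fun hunit ↦ ?_, fun g h hgh ↦ ?_⟩
  · have hunit' := hunit.map ψ
    rw [hψ] at hunit'
    exact hl'.not_isUnit (isUnit_of_dvd_unit (map_dvd _ hlG) hunit')
  · have hdvd : algebraMap R' S' l ∣ ψ g * ψ h := by
      rw [← map_mul, ← hgh, hψ]
      exact map_dvd _ hlG
    rcases hl'.dvd_or_dvd hdvd with hlg | hlh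
    · exact .inr (isUnit_of_mul_eq_algebraMap_of_dvd_map b b' hψ hb hG hl hlG hsq hgh hlg)
    · rw [mul_comm] at hgh
      exact .inl (isUnit_of_mul_eq_algebraMap_of_dvd_map b b' hψ hb hG hl hlG hsq hgh hlh)

end Norm

theorem exists_irreducible_dvd_of_prime_dvd_map {M N : Type*} [CommMonoidWithZero M]
    [IsCancelMulZero M] [WfDvdMonoid M] [CommMonoidWithZero N] {F : Type*} [FunLike F M N]
    [MonoidHomClass F M N] (φ : F) {a : M} (ha : a ≠ 0) {p : N} (hp : Prime p)
    (hpa : p ∣ φ a) : ∃ g, Irreducible g ∧ g ∣ a ∧ p ∣ φ g := by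
  obtain ⟨s, hs, hprod⟩ := WfDvdMonoid.exists_factors a ha
  have hps : p ∣ (s.map φ).prod := by
    rw [← map_multiset_prod]
    exact hpa.trans (map_dvd φ hprod.symm.dvd)
  obtain ⟨g, hg, hpg⟩ := hp.exists_mem_multiset_map_dvd hps
  exact ⟨g, hs g hg, (Multiset.dvd_prod hg).trans hprod.dvd, hpg⟩

section BaseChange

variable {σ ρ K L : Type*} [Field K] [Field L] [Algebra K L]

attribute [local instance] algebraMvPolynomial

variable (σ) in
/-- The basis of `L[σ]` over `K[σ]` consisting of the constants `C (b i)`, for a basis `b` of `L`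
over `K`. -/
noncomputable def mvPolynomialBasis {ι : Type*} (b : Module.Basis ι K L) :
    Module.Basis ι (MvPolynomial σ K) (MvPolynomial σ L) :=
  (Algebra.IsPushout.out (R := K) (S := MvPolynomial σ K) (R' := L)
    (S' := MvPolynomial σ L)).basis b

theorem mvPolynomialBasis_apply {ι : Type*} (b : Module.Basis ι K L) (i : ι) :
    mvPolynomialBasis σ b i = C (b i) :=
  IsBaseChange.basis_apply ..

theorem map_algebraMap_dvd_map_algebraMap {P Q : MvPolynomial σ K} :
    map (algebraMap K L) P ∣ map (algebraMap K L) Q ↔ P ∣ Q := by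
  refine ⟨fun h ↦ ?_, map_dvd _⟩
  have := Module.Free.of_basis (mvPolynomialBasis σ (Module.Free.chooseBasis K L))
  have hcomap := Ideal.comap_map_eq_self_of_faithfullyFlat (B := MvPolynomial σ L) (Ideal.span {P})
  rw [← Ideal.mem_span_singleton, ← hcomap, Ideal.map_span, Set.image_singleton, Ideal.mem_comap,
    Ideal.mem_span_singleton]
  exact h

theorem prime_of_prime_map_algebraMap {P : MvPolynomial σ K}
    (hP : Prime (map (algebraMap K L) P)) : Prime P := by
  refine ⟨fun h0 ↦ hP.ne_zero (by rw [h0, map_zero]), fun h ↦ hP.not_isUnit (h.map _),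
    fun Q Q' h ↦ ?_⟩
  have hdvd := map_dvd (map (algebraMap K L)) h
  rw [map_mul] at hdvd
  exact (hP.dvd_or_dvd hdvd).imp map_algebraMap_dvd_map_algebraMap.mp
    map_algebraMap_dvd_map_algebraMap.mp

theorem exists_finiteDimensional_map_algebraMap_eq [Algebra.IsAlgebraic K L]
    (P : MvPolynomial σ L) : ∃ (E : IntermediateField K L) (Q : MvPolynomial σ E),
      FiniteDimensional K E ∧ map (algebraMap E L) Q = P := by
  let E := IntermediateField.adjoin K (P.coeffs : Set L)
  obtain ⟨Q, hQ⟩ : P ∈ (map (algebraMap E L)).range := by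
    refine mem_range_map_iff_coeffs_subset.mpr fun c hc ↦ ?_
    exact ⟨⟨c, IntermediateField.subset_adjoin K _ hc⟩, rfl⟩
  exact ⟨E, Q, IntermediateField.finiteDimensional_adjoin fun x _ ↦
    (Algebra.IsAlgebraic.isAlgebraic x).isIntegral, hQ⟩

variable {G : MvPolynomial σ K} {v : σ → MvPolynomial ρ K} {l : MvPolynomial ρ K}

theorem irreducible_map_of_prime_dvd_bind₁_of_finiteDimensional [FiniteDimensional K L]
    (hG : Irreducible G) (hl : Prime (map (algebraMap K L) l)) (hlG : l ∣ bind₁ v G)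
    (hsq : ¬ l ^ 2 ∣ bind₁ v G) : Irreducible (map (algebraMap K L) G) :=
  irreducible_algebraMap_of_prime_dvd_map
    (mvPolynomialBasis σ (Module.finBasis K L)) (mvPolynomialBasis ρ (Module.finBasis K L))
    (φ := (bind₁ v).toRingHom)
    (ψ := (bind₁ fun i ↦ map (algebraMap K L) (v i)).toRingHom)
    (fun P ↦ (map_bind₁ (algebraMap K L) v P).symm)
    (fun i ↦ by simp [mvPolynomialBasis_apply])
    hG.prime (prime_of_prime_map_algebraMap hl) hl hlG hsq

theorem irreducible_map_of_prime_dvd_bind₁ [Algebra.IsAlgebraic K L] (hG : Irreducible G)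
    (hl : Prime (map (algebraMap K L) l)) (hlG : l ∣ bind₁ v G) (hsq : ¬ l ^ 2 ∣ bind₁ v G) :
    Irreducible (map (algebraMap K L) G) := by
  refine ⟨fun hunit ↦ hG.not_isUnit (isUnit_of_dvd_one ?_), fun g h hgh ↦ ?_⟩
  · rw [← map_algebraMap_dvd_map_algebraMap (L := L)]
    exact hunit.dvd
  obtain ⟨E, g, hfin, rfl⟩ := exists_finiteDimensional_map_algebraMap_eq (K := K) g
  have hGE : map (algebraMap K L) G = map (algebraMap E L) (map (algebraMap K E) G) := by
    rw [map_map, ← IsScalarTower.algebraMap_eq]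
  have hlE : Prime (map (algebraMap K E) l) := by
    refine prime_of_prime_map_algebraMap (L := L) ?_
    rwa [map_map, ← IsScalarTower.algebraMap_eq]
  have hirr := irreducible_map_of_prime_dvd_bind₁_of_finiteDimensional hG hlE hlG hsq
  obtain ⟨h', hgE⟩ : g ∣ map (algebraMap K E) G := by
    rw [← map_algebraMap_dvd_map_algebraMap (L := L), ← hGE, hgh]
    exact dvd_mul_right _ _
  have hg : map (algebraMap E L) g ≠ 0 := by
    rw [map_ne_zero_iff _ (map_injective _ (algebraMap E L).injective)]
    exact left_ne_zero_of_mul (hgE ▸ hirr.ne_zero)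
  obtain rfl : map (algebraMap E L) h' = h := by
    rw [hGE, hgE, map_mul] at hgh
    exact mul_left_cancel₀ hg hgh
  exact (hirr.isUnit_or_isUnit hgE).imp (·.map _) (·.map _)

end BaseChange

theorem totalDegree_pos_of_irreducible {σ K : Type*} [Field K] {P : MvPolynomial σ K}
    (hP : Irreducible P) : 0 < P.totalDegree := by
  refine Nat.pos_of_ne_zero fun h0 ↦ hP.not_isUnit ?_
  rw [totalDegree_eq_zero_iff_eq_C] at h0
  have hc : coeff 0 P ≠ 0 := fun hc ↦ hP.ne_zero (by rw [h0, hc, C_0])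
  rw [h0]
  exact hc.isUnit.map C

theorem coeff_aeval_update_X_zero {σ R : Type*} [CommSemiring R] [DecidableEq σ] {i : σ}
    {m : σ →₀ ℕ} (hm : m i ≠ 0) (P : MvPolynomial σ R) :
    coeff m (aeval (Function.update (X : σ → MvPolynomial σ R) i 0) P) = 0 := by
  induction P using MvPolynomial.induction_on generalizing m with
  | C a =>
    rw [aeval_C, algebraMap_eq, coeff_C, if_neg]
    rintro rfl
    exact hm rfl
  | add P Q hP hQ => rw [map_add, coeff_add, hP hm, hQ hm, add_zero]
  | mul_X P j hP =>
    rw [map_mul, aeval_X]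
    rcases eq_or_ne j i with rfl | hji
    · rw [Function.update_self, mul_zero, coeff_zero]
    · rw [Function.update_of_ne hji, coeff_mul_X']
      split_ifs
      · exact hP (by simpa [Finsupp.single_apply, hji] using hm)
      · rfl

theorem aeval_Fpoly_hyperplane_at_infinity {K A : Type*} [Field K] [CommRing A] [Algebra K A]
    {f : MvPolynomial (Fin 2) K} {d : ℕ} (hf : f.totalDegree ≤ d) (hd : 1 < d) (x y z w : A) :
    aeval ![0, x, y, z, w] (Fpoly f d) = (x - z) *
      (aeval ![x, y] (homogeneousComponent d f) - aeval ![z, w] (homogeneousComponent d f)) := by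
  have hd0 : d - 1 ≠ 0 := by omega
  have hdeg : ∀ m ∈ f.support, (d - m 0 - m 1 = 0 ↔ m.degree = d) := fun m hm ↦ by
    have := (le_totalDegree hm).trans hf
    rw [Finsupp.sum_fintype _ _ (by simp), Fin.sum_univ_two] at this
    rw [Finsupp.degree_eq_sum, Fin.sum_univ_two]
    omega
  have hmon (m : Fin 2 →₀ ℕ) (c : K) (s t : A) :
      aeval ![s, t] (monomial m c) = algebraMap K A c * (s ^ m 0 * t ^ m 1) := by
    rw [aeval_monomial, Finsupp.prod_fintype _ _ (by simp), Fin.prod_univ_two]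
    rfl
  rw [homogeneousComponent_apply, map_sum, map_sum, ← Finset.sum_sub_distrib, Finset.sum_filter]
  have hF : aeval ![0, x, y, z, w] (Fpoly f d) = (x - z) * ∑ m ∈ f.support,
      algebraMap K A (coeff m f) * (x ^ m 0 * y ^ m 1 - z ^ m 0 * w ^ m 1) *
        0 ^ (d - m 0 - m 1) := by
    simp [Fpoly, hd0]
  rw [hF]
  congr 1
  refine Finset.sum_congr rfl fun m hm ↦ ?_
  split_ifs with h
  · rw [(hdeg m hm).mpr h, hmon, hmon]
    ring
  · rw [zero_pow (mt (hdeg m hm).mp h), mul_zero]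

theorem exists_coeff_homogeneousComponent_ne_zero {K : Type*} [Field K]
    {f : MvPolynomial (Fin 2) K} {d : ℕ} (hf : f.totalDegree ≤ d)
    (hex : ∃ i : ℕ, i ≠ d ∧ coeffXY f i (d - i) ≠ 0) :
    ∃ m : Fin 2 →₀ ℕ, m 1 ≠ 0 ∧ coeff m (homogeneousComponent d f) ≠ 0 := by
  obtain ⟨i, hid, hi⟩ := hex
  let m : Fin 2 →₀ ℕ := Finsupp.single 0 i + Finsupp.single 1 (d - i)
  have hm0 : m 0 = i := by simp [m]
  have hm1 : m 1 = d - i := by simp [m]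
  have hfm : coeff m f ≠ 0 := hi
  have hile : i ≤ d := by
    have := (le_totalDegree (mem_support_iff.mpr hfm)).trans hf
    rw [Finsupp.sum_fintype _ _ (by simp), Fin.sum_univ_two] at this
    omega
  have hm : m.degree = d := by
    rw [Finsupp.degree_eq_sum, Fin.sum_univ_two]
    omega
  exact ⟨m, by omega, by rwa [coeff_homogeneousComponent, if_pos hm]⟩

theorem not_X_two_dvd_aeval_sub_aeval {R : Type*} [CommRing R] {P : MvPolynomial (Fin 2) R}
    {m : Fin 2 →₀ ℕ} (hm : m 1 ≠ 0) (hP : coeff m P ≠ 0) :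
    ¬ (X 2 : MvPolynomial (Fin 3) R) ∣ aeval ![X 0 + X 2, X 1] P - aeval ![X 0, 0] P := fun h ↦ by
  let π : MvPolynomial (Fin 3) R →ₐ[R] MvPolynomial (Fin 2) R := aeval ![X 0, X 1, 0]
  have hπ₁ : π (aeval ![X 0 + X 2, X 1] P) = P := by
    have hcomp : π.comp (aeval ![X 0 + X 2, X 1]) = AlgHom.id R _ := by
      ext1 i
      fin_cases i <;> simp [π]
    exact DFunLike.congr_fun hcomp P
  have hπ₂ : π (aeval ![X 0, 0] P) = aeval (Function.update X 1 0) P := by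
    have hcomp : π.comp (aeval ![X 0, 0]) = aeval (Function.update X 1 0) := by
      ext1 i
      fin_cases i <;> simp [π]
    exact DFunLike.congr_fun hcomp P
  have hdvd := map_dvd π h
  rw [map_sub, hπ₁, hπ₂] at hdvd
  have hP' : P = aeval (Function.update X 1 0) P := by
    simpa [π, sub_eq_zero] using hdvd
  rw [hP', coeff_aeval_update_X_zero hm] at hP
  exact hP rfl

theorem statement1_general {K : Type*} [Field K] (f : MvPolynomial (Fin 2) K) (d : ℕ)
    (hdeg : f.totalDegree = d) (hd : 1 < d) (hex : ∃ i : ℕ, i ≠ d ∧ coeffXY f i (d - i) ≠ 0) :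
    HasAbsIrrComponent (Fpoly f d) := by
  obtain ⟨m, hm, hfm⟩ := exists_coeff_homogeneousComponent_ne_zero hdeg.le hex
  -- Parametrizes `X₀ = X₄ = 0` so that `X₁ - X₃` becomes the variable `X 2`.
  let v : Fin 5 → MvPolynomial (Fin 3) K := ![0, X 0 + X 2, X 1, X 0, 0]
  have hv : bind₁ v (Fpoly f d) = X 2 * (aeval ![X 0 + X 2, X 1] (homogeneousComponent d f) -
      aeval ![X 0, 0] (homogeneousComponent d f)) := by
    rw [← aeval_eq_bind₁, aeval_Fpoly_hyperplane_at_infinity hdeg.le hd, add_sub_cancel_left]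
  have hsq : ¬ X 2 ^ 2 ∣ bind₁ v (Fpoly f d) := by
    rw [hv, sq, mul_dvd_mul_iff_left (X_ne_zero 2)]
    exact not_X_two_dvd_aeval_sub_aeval hm hfm
  have hF : Fpoly f d ≠ 0 := fun hF ↦ hsq (by rw [hF, map_zero]; exact dvd_zero _)
  obtain ⟨g, hg, hgF, hlg⟩ := exists_irreducible_dvd_of_prime_dvd_map (bind₁ v) hF
    (X_prime (i := 2)) (hv ▸ dvd_mul_right _ _)
  have hirr : Irreducible (map (algebraMap K (AlgebraicClosure K)) g) :=
    irreducible_map_of_prime_dvd_bind₁ hg (by rw [map_X]; exact X_prime) hlg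
      fun h ↦ hsq (h.trans (map_dvd _ hgF))
  exact ⟨g, hgF, totalDegree_pos_of_irreducible hg, hirr⟩

/-- If `d > 1` and there is an index `i ≠ d` with `a_{i,d−i} ≠ 0`, then `S_f` contains an
absolutely irreducible component defined over `F_q`. -/
theorem statement1 (p h q : ℕ) (hp : p.Prime) (hh : 0 < h) (hq : q = p ^ h)
    (K : Type*) [Field K] [Fintype K] (hcard : Fintype.card K = q)
    (f : MvPolynomial (Fin 2) K) (d : ℕ) (hdeg : f.totalDegree = d) (hd : 1 < d)
    (h00 : coeffXY f 0 0 = 0)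
    (hex : ∃ i : ℕ, i ≠ d ∧ coeffXY f i (d - i) ≠ 0) :
    HasAbsIrrComponent (Fpoly f d) :=
  statement1_general f d hdeg hd hex
end
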